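/- Let I ⊆ J be two homogeneous ideals of R with R/I of finite length. If J is contained in the tight closure I* of I, then the Frobenius–Poincaré functions coincide: F(R,R,I)(y) = F(R,R,J)(y) for every complex number y. -/

import Mathlib

open Filter Complex

noncomputable section

/-- The Frobenius bracket power `I^{[q]}` of an ideal. -/
def bracketPow {R : Type*} [CommSemiring R] (I : Ideal R) (q : ℕ) : Ideal R :=
  Ideal.span ((fun x : R => x ^ q) '' (I : Set R))

/-- `x` lies in the tight closure `I*` of `I`: there is a `c` outside every minimal
prime of `R` with `c·x^{p^n} ∈ I^{[p^n]}` for all large `n`. -/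
def MemTightClosure {R : Type*} [CommRing R] (p : ℕ) (I : Ideal R) (x : R) : Prop :=
  ∃ c : R, (∀ P ∈ minimalPrimes R, c ∉ P) ∧
    ∃ N : ℕ, ∀ n : ℕ, N ≤ n → c * x ^ p ^ n ∈ bracketPow I (p ^ n)

/-- `λ_k((M/N)_j)`. -/
def quotPieceDim (k : Type*) {R M : Type*} [Field k] [CommRing R] [Algebra k R]
    [AddCommGroup M] [Module R M] [Module k M] [IsScalarTower k R M]
    (ℳ : ℤ → Submodule k M) (N : Submodule R M) (j : ℤ) : ℕ :=
  Module.finrank k ((ℳ j).map (N.mkQ.restrictScalars k))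

/-- `F_n(M,R,I,d)(y)`. -/
def FnGen (k : Type*) {R M : Type*} [Field k] [CommRing R] [Algebra k R]
    [AddCommGroup M] [Module R M] [Module k M] [IsScalarTower k R M]
    (ℳ : ℤ → Submodule k M) (I : Ideal R) (p d n : ℕ) (y : ℂ) : ℂ :=
  (1 / (p : ℂ) ^ n) ^ d *
    ∑' j : ℤ, (quotPieceDim k (R := R) ℳ (bracketPow I (p ^ n) • ⊤) j : ℂ) *
      Complex.exp (-Complex.I * y * (j : ℂ) / (p : ℂ) ^ n)

namespace FP

section delta
variable {k V W : Type*} [Field k] [AddCommGroup V] [Module k V] [AddCommGroup W] [Module k W]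

/-- dimension of `(X+Y)/Y`. -/
def dl (X Y : Submodule k V) : ℕ∞ := Module.length k (X.map Y.mkQ)

lemma length_range_le {U : Type*} [AddCommGroup U] [Module k U] (f : U →ₗ[k] V) (g : U →ₗ[k] W)
    (h : LinearMap.ker f ≤ LinearMap.ker g) :
    Module.length k (LinearMap.range g) ≤ Module.length k (LinearMap.range f) := by
  rw [← f.quotKerEquivRange.length_eq, ← g.quotKerEquivRange.length_eq]
  exact Module.length_le_of_surjective (Submodule.factor h) (Submodule.factor_surjective h)

lemma dl_eq_range (X Y : Submodule k V) :
    dl X Y = Module.length k (LinearMap.range (Y.mkQ ∘ₗ X.subtype)) := by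
  unfold dl
  rw [LinearMap.range_comp, Submodule.range_subtype]

lemma mem_ker_comp {X : Submodule k V} {Y : Submodule k V} (x : X) :
    x ∈ LinearMap.ker (Y.mkQ ∘ₗ X.subtype) ↔ (x : V) ∈ Y := by
  simp

lemma dl_map_le {X Y : Submodule k V} {Y' : Submodule k W} (f : V →ₗ[k] W)
    (h : ∀ x ∈ X, x ∈ Y → f x ∈ Y') : dl (X.map f) Y' ≤ dl X Y := by
  have e : (X.map f).map Y'.mkQ = LinearMap.range (Y'.mkQ ∘ₗ f ∘ₗ X.subtype) := by
    rw [LinearMap.range_comp, LinearMap.range_comp, Submodule.range_subtype]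
  unfold dl
  rw [e]
  change _ ≤ dl X Y
  rw [dl_eq_range]
  apply length_range_le
  intro x hx
  simp at hx ⊢
  exact h x x.2 hx

lemma dl_le_map {X Y : Submodule k V} {Y' : Submodule k W} (f : V →ₗ[k] W)
    (h : ∀ x ∈ X, f x ∈ Y' → x ∈ Y) : dl X Y ≤ dl (X.map f) Y' := by
  have e : (X.map f).map Y'.mkQ = LinearMap.range (Y'.mkQ ∘ₗ f ∘ₗ X.subtype) := by
    rw [LinearMap.range_comp, LinearMap.range_comp, Submodule.range_subtype]
  unfold dl
  rw [e]
  change dl X Y ≤ _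
  rw [dl_eq_range]
  apply length_range_le
  intro x hx
  simp at hx ⊢
  exact h x x.2 hx

lemma dl_mono_left {X X' Y : Submodule k V} (h : X ≤ X') : dl X Y ≤ dl X' Y := by
  unfold dl
  exact Module.length_le_of_injective (Submodule.inclusion (Submodule.map_mono h))
    (Submodule.inclusion_injective _)

lemma dl_le_of_inter {X Y Y' : Submodule k V} (h : ∀ x ∈ X, x ∈ Y' → x ∈ Y) :
    dl X Y ≤ dl X Y' := by
  have := dl_le_map (X := X) (Y := Y) (Y' := Y') LinearMap.id (by simpa using h)
  simpa using this

lemma dl_anti_right {X Y Y' : Submodule k V} (h : Y' ≤ Y) : dl X Y ≤ dl X Y' :=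
  dl_le_of_inter fun _ _ hx => h hx

lemma dl_mono {X X' Y Y' : Submodule k V} (h : X ≤ X') (h' : Y' ≤ Y) : dl X Y ≤ dl X' Y' :=
  (dl_mono_left h).trans (dl_anti_right h')

lemma dl_sup (X Z Y : Submodule k V) : dl (X ⊔ Z) Y = dl Z Y + dl X (Z ⊔ Y) := by
  have hle : Z.map Y.mkQ ≤ (X ⊔ Z).map Y.mkQ := Submodule.map_mono le_sup_right
  let h : Y ≤ Z ⊔ Y := le_sup_right
  let g : ((X ⊔ Z).map Y.mkQ) →ₗ[k] (X.map (Z ⊔ Y).mkQ) :=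
    LinearMap.codRestrict _ ((Submodule.factor h) ∘ₗ Submodule.subtype _) (by
      rintro ⟨_, x, hx, rfl⟩
      obtain ⟨a, ha, b, hb, rfl⟩ := Submodule.mem_sup.1 hx
      refine ⟨a, ha, ?_⟩
      simp
      exact (le_sup_left : Z ≤ Z ⊔ Y) hb)
  have hg : Function.Surjective g := by
    rintro ⟨_, a, ha, rfl⟩
    refine ⟨⟨Y.mkQ a, a, (le_sup_left : X ≤ X ⊔ Z) ha, rfl⟩, ?_⟩
    apply Subtype.ext
    simp [g]
  unfold dl
  refine Module.length_eq_add_of_exact (Submodule.inclusion hle) g (Submodule.inclusion_injective _) hg ?_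
  rintro ⟨_, x, hx, rfl⟩
  rw [← Subtype.coe_inj]
  change (Submodule.Quotient.mk x : V ⧸ (Z ⊔ Y)) = 0 ↔ _
  rw [Submodule.Quotient.mk_eq_zero]
  constructor
  · intro hx'
    obtain ⟨a, ha, b, hb, rfl⟩ := Submodule.mem_sup.1 hx'
    refine ⟨⟨Y.mkQ a, a, ha, rfl⟩, ?_⟩
    apply Subtype.ext
    simp
    exact hb
  · rintro ⟨⟨_, a, ha, rfl⟩, h2⟩
    have := congrArg Subtype.val h2
    simp at this
    rw [Submodule.Quotient.eq] at this
    have h3 : x = a - (a - x) := by abel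
    rw [h3]
    exact sub_mem ((le_sup_left : Z ≤ Z ⊔ Y) ha) ((le_sup_right : Y ≤ Z ⊔ Y) this)

lemma dl_self_of_le {X Y : Submodule k V} (h : X ≤ Y) : dl X Y = 0 := by
  unfold dl
  rw [Module.length_eq_zero_iff]
  constructor
  rintro ⟨_, a, ha, rfl⟩ ⟨_, b, hb, rfl⟩
  apply Subtype.ext
  simp
  rw [Submodule.Quotient.eq]
  exact sub_mem (h ha) (h hb)

lemma dl_sup_le (X Z Y : Submodule k V) : dl (X ⊔ Z) Y ≤ dl X Y + dl Z Y := by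
  rw [dl_sup, add_comm]
  gcongr
  exact dl_anti_right le_sup_right

lemma dl_le_of_le_sup {X X' Y : Submodule k V} (h : X ≤ X' ⊔ Y) : dl X Y ≤ dl X' Y := by
  calc dl X Y ≤ dl (X' ⊔ Y) Y := dl_mono_left h
    _ ≤ dl X' Y + dl Y Y := dl_sup_le _ _ _
    _ = dl X' Y := by rw [dl_self_of_le le_rfl, add_zero]

lemma dl_tower (X Z Y : Submodule k V) : dl X Y ≤ dl Z Y + dl X (Z ⊔ Y) := by
  rw [← dl_sup]; exact dl_mono_left le_sup_left

lemma dl_finset_sup_le {ι : Type*} (s : Finset ι) (X : ι → Submodule k V) (Y : Submodule k V) :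
    dl (s.sup X) Y ≤ ∑ i ∈ s, dl (X i) Y := by
  classical
  induction s using Finset.induction_on with
  | empty => simp [dl_self_of_le]
  | insert a s ha ih =>
    rw [Finset.sup_insert, Finset.sum_insert ha]
    exact (dl_sup_le _ _ _).trans (by gcongr)

lemma dl_iSup_le {ι : Type*} [Fintype ι] (X : ι → Submodule k V) (Y : Submodule k V) :
    dl (⨆ i, X i) Y ≤ ∑ i, dl (X i) Y := by
  rw [← Finset.sup_univ_eq_iSup]
  exact dl_finset_sup_le _ _ _

lemma dl_span_singleton_le (v : V) (Y : Submodule k V) : dl (Submodule.span k {v}) Y ≤ 1 := by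
  have h1 : Module.length k (k) = 1 := Module.length_eq_one k k
  unfold dl
  rw [← h1]
  have : (Submodule.span k {v}).map Y.mkQ = LinearMap.range (Y.mkQ ∘ₗ LinearMap.toSpanSingleton k V v) := by
    rw [LinearMap.range_comp, LinearMap.range_toSpanSingleton]
  rw [this]
  exact Module.length_le_of_surjective (LinearMap.rangeRestrict _) (LinearMap.surjective_rangeRestrict _)

lemma dl_span_range_le {ι : Type*} [Fintype ι] (v : ι → V) (Y : Submodule k V) :
    dl (Submodule.span k (Set.range v)) Y ≤ Fintype.card ι := by
  rw [Submodule.span_range_eq_iSup]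
  refine (dl_iSup_le _ _).trans ?_
  calc _ ≤ ∑ i : ι, (1 : ℕ∞) := Finset.sum_le_sum fun i _ => dl_span_singleton_le _ _
    _ = _ := by simp

lemma exists_gen_of_dl {X Y : Submodule k V} {s : ℕ} (h : dl X Y = s) :
    ∃ w : Fin s → V, (∀ i, w i ∈ X) ∧ ∀ x ∈ X, ∃ c : Fin s → k, ∃ y ∈ Y, y ∈ X ∧ x = ∑ i, c i • w i + y := by
  have hfin : Module.Finite k (X.map Y.mkQ) := by
    have : Module.length k (X.map Y.mkQ) ≠ ⊤ := by
      change dl X Y ≠ ⊤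
      rw [h]; simp
    rw [Module.length_ne_top_iff, isFiniteLength_iff_isNoetherian_isArtinian] at this
    have := this.1
    infer_instance
  have hr : Module.finrank k (X.map Y.mkQ) = s := by
    have := Module.length_eq_finrank k (X.map Y.mkQ)
    change dl X Y = _ at this
    rw [h] at this
    exact_mod_cast this.symm
  let b := Module.finBasisOfFinrankEq k _ hr
  have hb : ∀ i, ∃ w ∈ X, Y.mkQ w = b i := fun i => (b i).2
  choose w hw hwb using hb
  refine ⟨w, hw, fun x hx => ?_⟩
  let xx : X.map Y.mkQ := ⟨Y.mkQ x, x, hx, rfl⟩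
  have hs := b.sum_repr xx
  refine ⟨fun i => b.repr xx i, x - ∑ i, b.repr xx i • w i, ?_, ?_, by abel⟩
  · rw [← Submodule.Quotient.mk_eq_zero, ← Submodule.mkQ_apply, map_sub, map_sum]
    have := congrArg Subtype.val hs
    simp only [map_smul, hwb]
    rw [sub_eq_zero]
    have h2 : ((∑ i, b.repr xx i • b i : X.map Y.mkQ) : V ⧸ Y) = ∑ i, b.repr xx i • (b i : V ⧸ Y) := by
      rw [Submodule.coe_sum]; rfl
    rw [← h2, hs]
  · exact sub_mem hx (sum_mem fun i _ => X.smul_mem _ (hw i))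

end delta

lemma dl_frob {k R : Type*} [Field k] [CommRing R] [Algebra k R] (p : ℕ) [Fact p.Prime] [CharP R p]
    {X Y X' Y' : Submodule k R} (g : R)
    (hX' : ∀ z ∈ X', z ∈ Submodule.span k ((fun x => x ^ p * g) '' (X : Set R)))
    (h : ∀ x ∈ X, x ∈ Y → x ^ p * g ∈ Y') : dl X' Y' ≤ dl X Y := by
  by_cases ht : dl X Y = ⊤
  · rw [ht]; exact le_top
  obtain ⟨s, hs⟩ := ENat.ne_top_iff_exists.1 ht
  obtain ⟨w, hw, hgen⟩ := exists_gen_of_dl hs.symm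
  have hle : X' ≤ Submodule.span k (Set.range fun i => w i ^ p * g) ⊔ Y' := by
    intro z hz
    refine Submodule.span_le.2 ?_ (hX' z hz)
    rintro _ ⟨x, hx, rfl⟩
    obtain ⟨c, y, hy, hyX, rfl⟩ := hgen x hx
    simp only
    rw [add_pow_char, sum_pow_char, add_mul, Finset.sum_mul]
    refine Submodule.add_mem_sup (sum_mem fun i _ => ?_) (h y hyX hy)
    rw [smul_pow, smul_mul_assoc]
    exact Submodule.smul_mem _ _ (Submodule.subset_span ⟨i, rfl⟩)
  refine (dl_le_of_le_sup hle).trans ?_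
  rw [← hs]
  simpa using dl_span_range_le (fun i => w i ^ p * g) Y'

end FP

namespace FP

section graded
variable {k R : Type*} [Field k] [CommRing R] [Algebra k R] (𝒜 : ℤ → Submodule k R) [GradedAlgebra 𝒜]

def pr (j : ℤ) : R →ₗ[k] R := GradedAlgebra.proj 𝒜 j

lemma pr_apply (j : ℤ) (x : R) : pr 𝒜 j x = (DirectSum.decompose 𝒜 x j : R) :=
  GradedAlgebra.proj_apply 𝒜 j x

lemma pr_mem (j : ℤ) (x : R) : pr 𝒜 j x ∈ 𝒜 j := by
  rw [pr_apply]; exact SetLike.coe_mem _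

variable {𝒜}
lemma pr_same {j : ℤ} {x : R} (h : x ∈ 𝒜 j) : pr 𝒜 j x = x := by
  rw [pr_apply]; exact DirectSum.decompose_of_mem_same 𝒜 h

lemma pr_ne {i j : ℤ} {x : R} (h : x ∈ 𝒜 i) (hij : i ≠ j) : pr 𝒜 j x = 0 := by
  rw [pr_apply]; exact DirectSum.decompose_of_mem_ne 𝒜 h hij

variable (𝒜) in
lemma exists_sum_pr (x : R) : ∃ s : Finset ℤ, x = ∑ j ∈ s, pr 𝒜 j x := by
  classical
  refine ⟨(DirectSum.decompose 𝒜 x).support, ?_⟩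
  simp only [pr_apply]
  exact (DirectSum.sum_support_decompose 𝒜 x).symm

lemma pr_mul_left {i j : ℤ} {a b : R} (h : a ∈ 𝒜 i) : pr 𝒜 (i + j) (a * b) = a * pr 𝒜 j b := by
  simp only [pr_apply]
  exact DirectSum.coe_decompose_mul_add_of_left_mem 𝒜 h

variable (𝒜) in
/-- homogeneous subspaces -/
def Hg (X : Submodule k R) : Prop := ∀ x ∈ X, ∀ j, pr 𝒜 j x ∈ X

lemma Hg.sup {X Y : Submodule k R} (hX : Hg 𝒜 X) (hY : Hg 𝒜 Y) : Hg 𝒜 (X ⊔ Y) := by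
  intro x hx j
  obtain ⟨a, ha, b, hb, rfl⟩ := Submodule.mem_sup.1 hx
  rw [map_add]
  exact Submodule.add_mem_sup (hX a ha j) (hY b hb j)

lemma Hg.inf {X Y : Submodule k R} (hX : Hg 𝒜 X) (hY : Hg 𝒜 Y) : Hg 𝒜 (X ⊓ Y) :=
  fun x hx j => ⟨hX x hx.1 j, hY x hx.2 j⟩

lemma Hg_bot : Hg 𝒜 (⊥ : Submodule k R) := by
  intro x hx j
  rw [Submodule.mem_bot] at hx
  simp [hx]

lemma Hg_top : Hg 𝒜 (⊤ : Submodule k R) := fun _ _ _ => Submodule.mem_top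

lemma Hg_span {S : Set R} (h : ∀ x ∈ S, ∃ i, x ∈ 𝒜 i) : Hg 𝒜 (Submodule.span k S) := by
  intro x hx j
  induction hx using Submodule.span_induction with
  | mem x hx =>
    obtain ⟨i, hi⟩ := h x hx
    by_cases hij : i = j
    · subst hij; rw [pr_same hi]; exact Submodule.subset_span hx
    · rw [pr_ne hi hij]; exact zero_mem _
  | zero => simp
  | add x y _ _ h1 h2 => rw [map_add]; exact add_mem h1 h2
  | smul c x _ h1 => rw [map_smul]; exact Submodule.smul_mem _ _ h1

lemma Hg_span' {S : Set R} (h : ∀ x ∈ S, ∀ j, pr 𝒜 j x ∈ Submodule.span k S) :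
    Hg 𝒜 (Submodule.span k S) := by
  intro x hx j
  induction hx using Submodule.span_induction with
  | mem x hx => exact h x hx j
  | zero => simp
  | add x y _ _ h1 h2 => rw [map_add]; exact add_mem h1 h2
  | smul c x _ h1 => rw [map_smul]; exact Submodule.smul_mem _ _ h1

lemma Hg_iSup {ι : Type*} {X : ι → Submodule k R} (h : ∀ i, Hg 𝒜 (X i)) : Hg 𝒜 (⨆ i, X i) := by
  intro x hx j
  have : (⨆ i, X i) ≤ (⨆ i, X i).comap (pr 𝒜 j) := by
    refine iSup_le fun i x hx => ?_
    exact (le_iSup X i) (h i x hx j)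
  exact this hx

lemma Hg_map_mul {X : Submodule k R} (hX : Hg 𝒜 X) {i : ℤ} {m : R} (hm : m ∈ 𝒜 i) :
    Hg 𝒜 (X.map (LinearMap.mulLeft k m)) := by
  rintro _ ⟨x, hx, rfl⟩ j
  refine ⟨pr 𝒜 (j - i) x, hX x hx _, ?_⟩
  simp only [LinearMap.mulLeft_apply]
  rw [← pr_mul_left hm]
  congr 2; ring

lemma Hg_ideal {P : Ideal R} (h : Ideal.IsHomogeneous 𝒜 P) : Hg 𝒜 (P.restrictScalars k) := by
  intro x hx j
  rw [pr_apply]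
  exact h j hx

lemma Hg.le_of {X Z : Submodule k R} (hX : Hg 𝒜 X) (h : ∀ j, X ⊓ 𝒜 j ≤ Z) : X ≤ Z := by
  intro x hx
  obtain ⟨s, hs⟩ := exists_sum_pr 𝒜 x
  rw [hs]
  exact sum_mem fun j _ => h j ⟨hX x hx j, pr_mem 𝒜 j x⟩

lemma dl_graded_sup {X Y : Submodule k R} (hY : Hg 𝒜 Y) (s : Finset ℤ) :
    ∑ j ∈ s, dl (X ⊓ 𝒜 j) Y = dl (s.sup fun j => X ⊓ 𝒜 j) Y := by
  classical
  induction s using Finset.induction_on with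
  | empty => simp [dl_self_of_le]
  | insert a s ha ih =>
    rw [Finset.sup_insert, Finset.sum_insert ha, dl_sup, ih, add_comm]
    congr 1
    refine le_antisymm (dl_le_of_inter ?_) (dl_anti_right le_sup_right)
    intro x hx hx'
    obtain ⟨z, hz, y, hy, rfl⟩ := Submodule.mem_sup.1 hx'
    have h1 : pr 𝒜 a z = 0 := by
      have : (s.sup fun j => X ⊓ 𝒜 j) ≤ LinearMap.ker (pr 𝒜 a) := by
        refine Finset.sup_le fun j hj x hx => ?_
        rw [LinearMap.mem_ker]
        exact pr_ne hx.2 (by rintro rfl; exact ha hj)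
      exact this hz
    have h2 : z + y = pr 𝒜 a y := by
      rw [← pr_same hx.2, map_add, h1, zero_add]
    rw [h2]
    exact hY y hy a

lemma dl_graded_sum_le (X : Submodule k R) {Y : Submodule k R} (hY : Hg 𝒜 Y) (s : Finset ℤ) :
    ∑ j ∈ s, dl (X ⊓ 𝒜 j) Y ≤ dl X Y := by
  rw [dl_graded_sup hY]
  exact dl_mono_left (Finset.sup_le fun j _ => inf_le_left)

lemma dl_le_graded_sum {X Y : Submodule k R} (hX : Hg 𝒜 X) (s : Finset ℤ)
    (h : ∀ j ∉ s, X ⊓ 𝒜 j ≤ Y) : dl X Y ≤ ∑ j ∈ s, dl (X ⊓ 𝒜 j) Y := by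
  refine (dl_le_of_le_sup ?_).trans (dl_finset_sup_le s (fun j => X ⊓ 𝒜 j) Y)
  refine hX.le_of fun j => ?_
  by_cases hj : j ∈ s
  · exact le_sup_of_le_left (Finset.le_sup (f := fun j => X ⊓ 𝒜 j) hj)
  · exact le_sup_of_le_right (h j hj)

end graded

/-- `k`-subspace of `B`-multiples of an element. -/
lemma sup_inf_degree {k R : Type*} [Field k] [CommRing R] [Algebra k R] {𝒜 : ℤ → Submodule k R}
    [GradedAlgebra 𝒜] {S Y : Submodule k R} (hS : Hg 𝒜 S) (hY : Hg 𝒜 Y) (j : ℤ) :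
    (S ⊔ Y) ⊓ 𝒜 j ≤ (S ⊓ 𝒜 j) ⊔ Y := by
  rintro x ⟨hx, hxj⟩
  obtain ⟨a, ha, b, hb, rfl⟩ := Submodule.mem_sup.1 hx
  have : a + b = pr 𝒜 j a + pr 𝒜 j b := by rw [← map_add, pr_same hxj]
  rw [this]
  exact Submodule.add_mem_sup ⟨hS a ha j, pr_mem 𝒜 j a⟩ (hY b hb j)

/-- one step of a degreewise estimate -/
lemma dl_degree_step {k R : Type*} [Field k] [CommRing R] [Algebra k R] {𝒜 : ℤ → Submodule k R}
    [GradedAlgebra 𝒜] {X S Y : Submodule k R} (hS : Hg 𝒜 S) (hY : Hg 𝒜 Y)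
    (j : ℤ) : dl (X ⊓ 𝒜 j) Y ≤ dl (S ⊓ 𝒜 j) Y + dl (X ⊓ 𝒜 j) (S ⊔ Y) := by
  refine (dl_tower (X ⊓ 𝒜 j) (S ⊓ 𝒜 j) Y).trans ?_
  gcongr
  apply dl_le_of_inter
  intro x hx hx'
  exact sup_inf_degree hS hY j ⟨hx', hx.2⟩

end FP

namespace FP

section growth
variable {k R : Type*} [Field k] [CommRing R] [Algebra k R]

/-- span of monomials of degree at most `t`. -/
def Vt (k : Type*) {R : Type*} [Field k] [CommRing R] [Algebra k R] {r : ℕ} (x : Fin r → R) (t : ℕ) :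
    Submodule k R :=
  Submodule.span k {a | ∃ α : Fin r → ℕ, ∑ i, α i ≤ t ∧ a = ∏ i, x i ^ α i}

lemma Vt_mono {r : ℕ} (x : Fin r → R) {s t : ℕ} (h : s ≤ t) : Vt k x s ≤ Vt k x t := by
  apply Submodule.span_mono
  rintro _ ⟨α, hα, rfl⟩
  exact ⟨α, hα.trans h, rfl⟩

lemma Vt_mul {r : ℕ} (x : Fin r → R) {s t : ℕ} {a b : R} (ha : a ∈ Vt k x s) (hb : b ∈ Vt k x t) :
    a * b ∈ Vt k x (s + t) := by
  have : Vt k x s * Vt k x t ≤ Vt k x (s + t) := by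
    unfold Vt
    rw [Submodule.span_mul_span]
    apply Submodule.span_mono
    rintro _ ⟨_, ⟨α, hα, rfl⟩, _, ⟨β, hβ, rfl⟩, rfl⟩
    refine ⟨α + β, ?_, ?_⟩
    · simp only [Pi.add_apply, Finset.sum_add_distrib]; omega
    · simp [pow_add, Finset.prod_mul_distrib]
  exact this (Submodule.mul_mem_mul ha hb)

lemma mem_Vt_mon {r : ℕ} (x : Fin r → R) {t : ℕ} (α : Fin r → ℕ) (h : ∑ i, α i ≤ t) :
    ∏ i, x i ^ α i ∈ Vt k x t := Submodule.subset_span ⟨α, h, rfl⟩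

lemma adjoin_le_span {r : ℕ} (f : Fin r → R) {b : R} (hb : b ∈ Algebra.adjoin k (Set.range f)) :
    b ∈ Submodule.span k (Set.range fun α : Fin r → ℕ => ∏ i, f i ^ α i) := by
  rw [Algebra.adjoin_range_eq_range_aeval] at hb
  obtain ⟨P, rfl⟩ := hb
  simp only [AlgHom.toRingHom_eq_coe, RingHom.coe_coe, MvPolynomial.aeval_eq_eval₂Hom]
  rw [MvPolynomial.coe_eval₂Hom, MvPolynomial.eval₂_eq']
  refine sum_mem fun d _ => ?_
  rw [← Algebra.smul_def]
  exact Submodule.smul_mem _ _ (Submodule.subset_span ⟨d, rfl⟩)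

lemma exists_mem_Vt {r : ℕ} (x : Fin r → R) (hx : Algebra.adjoin k (Set.range x) = ⊤) (b : R) :
    ∃ t, b ∈ Vt k x t := by
  have hb : b ∈ Algebra.adjoin k (Set.range x) := by rw [hx]; trivial
  have := adjoin_le_span x hb
  induction this using Submodule.span_induction with
  | mem x hx =>
    obtain ⟨α, rfl⟩ := hx
    exact ⟨_, mem_Vt_mon x α le_rfl⟩
  | zero => exact ⟨0, zero_mem _⟩
  | add a b ha hb h1 h2 =>
    obtain ⟨s, hs⟩ := h1 (by rw [hx]; trivial)
    obtain ⟨t, ht⟩ := h2 (by rw [hx]; trivial)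
    exact ⟨s + t, add_mem (Vt_mono x (by omega) hs) (Vt_mono x (by omega) ht)⟩
  | smul c a ha h1 =>
    obtain ⟨s, hs⟩ := h1 (by rw [hx]; trivial)
    exact ⟨s, Submodule.smul_mem _ _ hs⟩

lemma noether_le {d : ℕ} (hd : ringKrullDim R = d) {s : ℕ} (g : MvPolynomial (Fin s) k →ₐ[k] R)
    (hg : Function.Injective g) (hIntg : g.toRingHom.IsIntegral) : s ≤ d := by
  algebraize [g.toRingHom]
  have hdim : ringKrullDim (MvPolynomial (Fin s) k) = s := by
    rw [MvPolynomial.ringKrullDim_of_isNoetherianRing, ringKrullDim_eq_zero_of_field]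
    simp
  have hinst : Algebra.HasGoingUp (MvPolynomial (Fin s) k) R := by
    constructor
    intro q hq P hP hlt
    obtain ⟨Q, h1, h2, h3⟩ := Ideal.exists_ideal_over_prime_of_isIntegral q P hlt.le
    exact ⟨Q, h1, h2, ⟨h3.symm⟩⟩
  have hle : ringKrullDim (MvPolynomial (Fin s) k) ≤ ringKrullDim R := by
    unfold ringKrullDim Order.krullDim
    refine iSup_le fun l => ?_
    obtain ⟨Q, h1, h2, h3⟩ := Ideal.exists_ideal_over_prime_of_isIntegral (S := R)
      l.head.asIdeal ⊥ (by
        intro z hz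
        have : algebraMap (MvPolynomial (Fin s) k) R z = 0 := by simpa using hz
        have : z = 0 := hg (by rw [map_zero]; exact this)
        simp [this])
    haveI : Q.LiesOver l.head.asIdeal := ⟨h3.symm⟩
    obtain ⟨L, hL, -, -⟩ := Ideal.exists_ltSeries_of_hasGoingUp l Q
    exact le_iSup_of_le L (by rw [hL])
  rw [hdim, hd] at hle
  exact_mod_cast hle

theorem growth [Algebra.FiniteType k R] {d : ℕ} (hd : ringKrullDim R = d) {r : ℕ} (x : Fin r → R) :
    ∃ C : ℕ, ∀ t, dl (Vt k x t) ⊥ ≤ (C * (t + 1) ^ d : ℕ) := by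
  have hnt : Nontrivial R := by
    by_contra h
    rw [not_nontrivial_iff_subsingleton] at h
    rw [ringKrullDim_eq_bot_of_subsingleton] at hd
    exact absurd hd (by simp)
  obtain ⟨s, g, hg, hfin⟩ := exists_finite_inj_algHom_of_fg k R
  have hsd : s ≤ d := noether_le hd g hg hfin.to_isIntegral
  algebraize [g.toRingHom]
  have hfin' : Module.Finite (MvPolynomial (Fin s) k) R := hfin
  obtain ⟨w, m, hm⟩ := Module.Finite.exists_fin (R := MvPolynomial (Fin s) k) (M := R)
  have hrep : ∀ b : R, ∃ f : Fin w → MvPolynomial (Fin s) k, b = ∑ l, g (f l) * m l := by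
    intro b
    have : b ∈ Submodule.span (MvPolynomial (Fin s) k) (Set.range m) := by rw [hm]; trivial
    obtain ⟨f, hf⟩ := (Submodule.mem_span_range_iff_exists_fun _).1 this
    refine ⟨f, hf ▸ ?_⟩
    simp only [Algebra.smul_def]
    rfl
  choose f hf using hrep
  let D : ℕ := ((Finset.univ : Finset (Fin w)).sup fun l => (f 1 l).totalDegree) +
    (Finset.univ : Finset (Fin r × Fin w × Fin w)).sup fun z => (f (x z.1 * m z.2.1) z.2.2).totalDegree
  have hD1 : ∀ l, (f 1 l).totalDegree ≤ D := fun l =>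
    le_add_right (Finset.le_sup (f := fun l => (f 1 l).totalDegree) (Finset.mem_univ l))
  have hD2 : ∀ i j l, (f (x i * m j) l).totalDegree ≤ D := fun i j l =>
    le_add_left (Finset.le_sup (f := fun z : Fin r × Fin w × Fin w => (f (x z.1 * m z.2.1) z.2.2).totalDegree)
      (Finset.mem_univ (i, j, l)))
  let U : ℕ → Submodule k R := fun t => Submodule.span k (Set.range
    fun z : (Fin s → Fin (t + 1)) × Fin w => g (∏ i, MvPolynomial.X i ^ (z.1 i : ℕ)) * m z.2)
  have hU : ∀ t, dl (U t) ⊥ ≤ ((t + 1) ^ s * w : ℕ) := by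
    intro t
    refine (dl_span_range_le _ _).trans ?_
    simp
  have hmem : ∀ t (β : Fin s → ℕ) (l : Fin w), (∀ i, β i ≤ t) →
      g (∏ i, MvPolynomial.X i ^ β i) * m l ∈ U t := by
    intro t β l hβ
    exact Submodule.subset_span ⟨(fun i => ⟨β i, Nat.lt_succ_of_le (hβ i)⟩, l), rfl⟩
  have hmul : ∀ t (β : Fin s → ℕ) (l : Fin w) (P : MvPolynomial (Fin s) k), (∀ i, β i ≤ t) →
      P.totalDegree ≤ D →
      g (∏ i, MvPolynomial.X i ^ β i) * (g P * m l) ∈ U (t + D) := by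
    intro t β l P hβ hP
    rw [← mul_assoc, ← map_mul]
    conv => enter [2, 1, 2, 2]; rw [P.as_sum]
    rw [Finset.mul_sum, map_sum, Finset.sum_mul]
    refine sum_mem fun v hv => ?_
    have hvD : ∀ i, v i ≤ D := by
      intro i
      have h1 : (v.sum fun _ e => e) ≤ P.totalDegree := MvPolynomial.le_totalDegree hv
      by_cases h0 : i ∈ v.support
      · exact (Finset.single_le_sum (f := fun i => v i) (fun _ _ => Nat.zero_le _) h0).trans (h1.trans hP)
      · rw [Finsupp.notMem_support_iff.1 h0]; exact Nat.zero_le _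
    have e1 : (∏ i, MvPolynomial.X i ^ β i) * MvPolynomial.monomial v (P.coeff v) =
        P.coeff v • ∏ i, (MvPolynomial.X i : MvPolynomial (Fin s) k) ^ (β i + v i) := by
      rw [MvPolynomial.monomial_eq, Finsupp.prod_fintype _ _ (by simp), MvPolynomial.smul_eq_C_mul]
      simp only [pow_add, Finset.prod_mul_distrib]
      ring
    rw [e1, map_smul, smul_mul_assoc]
    exact Submodule.smul_mem _ _ (hmem _ _ _ fun i => add_le_add (hβ i) (hvD i))
  have hxU : ∀ t i b, b ∈ U t → x i * b ∈ U (t + D) := by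
    intro t i b hb
    induction hb using Submodule.span_induction with
    | mem b hb =>
      obtain ⟨⟨β, l⟩, rfl⟩ := hb
      have : x i * (g (∏ i, MvPolynomial.X i ^ (β i : ℕ)) * m l) =
          ∑ l', g (∏ i, MvPolynomial.X i ^ (β i : ℕ)) * (g (f (x i * m l) l') * m l') := by
        rw [← Finset.mul_sum, ← hf]; ring
      simp only
      rw [this]
      exact sum_mem fun l' _ => hmul t _ _ _ (fun i => Nat.le_of_lt_succ (β i).2) (hD2 _ _ _)
    | zero => simp
    | add a b _ _ h1 h2 => rw [mul_add]; exact add_mem h1 h2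
    | smul c a _ h1 => rw [mul_smul_comm]; exact Submodule.smul_mem _ _ h1
  have hUmono : ∀ {s t}, s ≤ t → U s ≤ U t := by
    intro s t hst
    refine Submodule.span_le.2 ?_
    rintro _ ⟨⟨β, l⟩, rfl⟩
    exact hmem _ _ _ fun i => (Nat.le_of_lt_succ (β i).2).trans hst
  have h1U : (1 : R) ∈ U D := by
    have : (1 : R) = ∑ l, g (∏ i, MvPolynomial.X i ^ 0) * (g (f 1 l) * m l) := by
      rw [← Finset.mul_sum, ← hf]; simp
    rw [this]
    have := fun l => hmul 0 (fun _ => 0) l (f 1 l) (by simp) (hD1 l)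
    rw [zero_add] at this
    exact sum_mem fun l _ => this l
  have hpow : ∀ (i : Fin r) n t b, b ∈ U t → x i ^ n * b ∈ U (t + n * D) := by
    intro i n
    induction n with
    | zero => intro t b hb; simpa using hb
    | succ n ih =>
      intro t b hb
      rw [pow_succ', mul_assoc]
      have := hxU _ i _ (ih t b hb)
      convert this using 2
      ring
  have hmon : ∀ (S : Finset (Fin r)) (α : Fin r → ℕ), ∏ i ∈ S, x i ^ α i ∈ U (D + (∑ i ∈ S, α i) * D) := by
    classical
    intro S α
    induction S using Finset.induction_on with
    | empty => simpa using h1U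
    | insert a S ha ih =>
      rw [Finset.prod_insert ha, Finset.sum_insert ha]
      have := hpow a (α a) _ _ ih
      convert this using 2
      ring
  refine ⟨(D + 1) ^ s * w, fun t => ?_⟩
  have hVU : Vt k x t ≤ U (D + t * D) := by
    refine Submodule.span_le.2 ?_
    rintro _ ⟨α, hα, rfl⟩
    refine hUmono ?_ (hmon Finset.univ α)
    gcongr
  refine (dl_mono_left hVU).trans ((hU _).trans ?_)
  norm_cast
  calc (D + t * D + 1) ^ s * w ≤ ((D + 1) * (t + 1)) ^ s * w := by gcongr; nlinarith
    _ = (D + 1) ^ s * w * (t + 1) ^ s := by rw [mul_pow]; ring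
    _ ≤ _ := by gcongr; omega

end growth
end FP

namespace FP

/-- The standing data: homogeneous algebra generators and an ideal. -/
structure Dat {k R : Type*} [Field k] [CommRing R] [Algebra k R] (p : ℕ)
    (𝒜 : ℤ → Submodule k R) [GradedAlgebra 𝒜] {r : ℕ} (x : Fin r → R) (w : Fin r → ℕ)
    (I : Ideal R) (N : ℕ) : Prop where
  prime : p.Prime
  char : CharP R p
  hx : ∀ i, x i ∈ 𝒜 (w i)
  hadj : Algebra.adjoin k (Set.range x) = ⊤
  hN : ∀ i, x i ^ N ∈ I
  hI : Ideal.IsHomogeneous 𝒜 I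
  hneg : ∀ t : ℤ, t < 0 → 𝒜 t = ⊥

section base
variable {k R : Type*} [Field k] [CommRing R] [Algebra k R]

/-- subalgebra generated by `p^e`-th powers -/
def B (k : Type*) {R : Type*} [Field k] [CommRing R] [Algebra k R] (p : ℕ) {r : ℕ} (x : Fin r → R) (e : ℕ) :
    Subalgebra k R :=
  Algebra.adjoin k (Set.range fun i => x i ^ p ^ e)

/-- the same as a subspace -/
def Bs (k : Type*) {R : Type*} [Field k] [CommRing R] [Algebra k R] (p : ℕ) {r : ℕ} (x : Fin r → R) (e : ℕ) :
    Submodule k R :=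
  Subalgebra.toSubmodule (B k p x e)

/-- Frobenius power of `I` inside `B e`. -/
def Iq (k : Type*) {R : Type*} [Field k] [CommRing R] [Algebra k R] (p : ℕ) {r : ℕ} (x : Fin r → R) (I : Ideal R)
    (e m : ℕ) : Submodule k R :=
  Submodule.span k {a | ∃ b ∈ B k p x e, ∃ z ∈ I, a = b * z ^ p ^ m}

variable {p r : ℕ} {x : Fin r → R}

lemma gen_mem_B (e : ℕ) (i : Fin r) : x i ^ p ^ e ∈ B k p x e := Algebra.subset_adjoin ⟨i, rfl⟩

lemma mem_Bs {e : ℕ} {b : R} : b ∈ Bs k p x e ↔ b ∈ B k p x e := Iff.rfl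

lemma mon_mem_B (e : ℕ) (α : Fin r → ℕ) : ∏ i, (x i ^ p ^ e) ^ α i ∈ B k p x e :=
  prod_mem fun i _ => pow_mem (gen_mem_B _ i) _

lemma Bs_eq_span (e : ℕ) : Bs k p x e =
    Submodule.span k (Set.range fun α : Fin r → ℕ => ∏ i, (x i ^ p ^ e) ^ α i) := by
  apply le_antisymm
  · intro b hb
    exact adjoin_le_span _ hb
  · rw [Submodule.span_le]
    rintro _ ⟨α, rfl⟩
    exact mon_mem_B e α

lemma B_anti {e f : ℕ} (h : e ≤ f) : B k p x f ≤ B k p x e := by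
  unfold B
  rw [Algebra.adjoin_le_iff]
  rintro _ ⟨i, rfl⟩
  simp only
  obtain ⟨g, rfl⟩ := Nat.exists_eq_add_of_le h
  rw [pow_add, pow_mul]
  exact pow_mem (gen_mem_B _ i) _

lemma Bs_anti {e f : ℕ} (h : e ≤ f) : Bs k p x f ≤ Bs k p x e := B_anti h

lemma pow_mem_B_add (hp : p.Prime) (hc : CharP R p) {e : ℕ} (f : ℕ) {b : R} (hb : b ∈ B k p x e) :
    b ^ p ^ f ∈ B k p x (e + f) := by
  have := Fact.mk hp
  unfold B at hb
  induction hb using Algebra.adjoin_induction with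
  | mem a ha =>
    obtain ⟨i, rfl⟩ := ha
    refine Algebra.subset_adjoin ⟨i, ?_⟩
    simp only
    rw [← pow_mul, ← pow_add]
  | algebraMap c => rw [← map_pow]; exact Subalgebra.algebraMap_mem _ _
  | add a b _ _ h1 h2 => rw [add_pow_char_pow]; exact add_mem h1 h2
  | mul a b _ _ h1 h2 => rw [mul_pow]; exact mul_mem h1 h2

lemma B_zero (hadj : Algebra.adjoin k (Set.range x) = ⊤) : B k p x 0 = ⊤ := by
  unfold B
  simpa using hadj

lemma pow_mem_B (hp : p.Prime) (hc : CharP R p) (hadj : Algebra.adjoin k (Set.range x) = ⊤) (e : ℕ) (b : R) :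
    b ^ p ^ e ∈ B k p x e := by
  have := pow_mem_B_add (k := k) (x := x) hp hc (e := 0) e (b := b) (by rw [B_zero hadj]; trivial)
  rwa [zero_add] at this

lemma B_succ_le {e : ℕ} {b : R} (hb : b ∈ B k p x (e + 1)) :
    b ∈ Submodule.span k ((fun a => a ^ p) '' (B k p x e : Set R)) := by
  have : b ∈ Bs k p x (e + 1) := hb
  rw [Bs_eq_span] at this
  refine Submodule.span_mono ?_ this
  rintro _ ⟨α, rfl⟩
  refine ⟨_, mon_mem_B (k := k) e α, ?_⟩
  simp only
  rw [← Finset.prod_pow]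
  refine Finset.prod_congr rfl fun i _ => ?_
  rw [pow_succ, ← pow_mul, ← pow_mul, ← pow_mul]
  ring

/-- decomposition of `B e` over `B (e+f)` -/
lemma B_decomp (hp : p.Prime) (e f : ℕ) {b : R} (hb : b ∈ B k p x e) :
    ∃ β : (Fin r → Fin (p ^ f)) → R, (∀ u, β u ∈ B k p x (e + f)) ∧
      b = ∑ u, β u * ∏ i, (x i ^ p ^ e) ^ (u i : ℕ) := by
  classical
  have : b ∈ Bs k p x e := hb
  rw [Bs_eq_span] at this
  have hpos : 0 < p ^ f := pow_pos hp.pos _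
  clear hb
  induction this using Submodule.span_induction with
  | mem a ha =>
    obtain ⟨α, rfl⟩ := ha
    let u0 : Fin r → Fin (p ^ f) := fun i => ⟨α i % p ^ f, Nat.mod_lt _ hpos⟩
    refine ⟨fun u => if u = u0 then ∏ i, (x i ^ p ^ (e + f)) ^ (α i / p ^ f) else 0, ?_, ?_⟩
    · intro u
      simp only
      split_ifs
      · exact mon_mem_B _ _
      · exact zero_mem _
    · rw [Finset.sum_eq_single u0]
      · simp only [if_true, u0]
        rw [← Finset.prod_mul_distrib]
        refine Finset.prod_congr rfl fun i _ => ?_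
        rw [← pow_mul, ← pow_mul, ← pow_mul, ← pow_add]
        congr 1
        conv_lhs => rw [← Nat.div_add_mod (α i) (p ^ f)]
        rw [pow_add]; ring
      · intro u _ hu; simp [hu]
      · simp
  | zero => exact ⟨0, fun u => zero_mem _, by simp⟩
  | add a b _ _ h1 h2 =>
    obtain ⟨β1, h11, h12⟩ := h1
    obtain ⟨β2, h21, h22⟩ := h2
    refine ⟨β1 + β2, fun u => add_mem (h11 u) (h21 u), ?_⟩
    rw [h12, h22, ← Finset.sum_add_distrib]
    exact Finset.sum_congr rfl fun u _ => by simp [add_mul]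
  | smul c a _ h1 =>
    obtain ⟨β1, h11, h12⟩ := h1
    refine ⟨c • β1, fun u => Subalgebra.smul_mem _ (h11 u) _, ?_⟩
    rw [h12, Finset.smul_sum]
    exact Finset.sum_congr rfl fun u _ => by simp

lemma Iq_mul {I : Ideal R} {e m : ℕ} {b y : R} (hb : b ∈ B k p x e) (hy : y ∈ Iq k p x I e m) :
    b * y ∈ Iq k p x I e m := by
  induction hy using Submodule.span_induction with
  | mem a ha =>
    obtain ⟨b', hb', z, hz, rfl⟩ := ha
    exact Submodule.subset_span ⟨b * b', mul_mem hb hb', z, hz, by ring⟩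
  | zero => simp
  | add a b _ _ h1 h2 => rw [mul_add]; exact add_mem h1 h2
  | smul c a _ h1 => rw [mul_smul_comm]; exact Submodule.smul_mem _ _ h1

lemma mem_Iq {I : Ideal R} {e m : ℕ} {b z : R} (hb : b ∈ B k p x e) (hz : z ∈ I) :
    b * z ^ p ^ m ∈ Iq k p x I e m := Submodule.subset_span ⟨b, hb, z, hz, rfl⟩

lemma Iq_le_Bs (hp : p.Prime) (hc : CharP R p) (hadj : Algebra.adjoin k (Set.range x) = ⊤)
    {I : Ideal R} {e m : ℕ} (h : e ≤ m) : Iq k p x I e m ≤ Bs k p x e := by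
  unfold Iq
  rw [Submodule.span_le]
  rintro _ ⟨b, hb, z, hz, rfl⟩
  exact (B k p x e).mul_mem hb (B_anti h (pow_mem_B hp hc hadj m z))

lemma Iq_pow (hp : p.Prime) (hc : CharP R p) {I : Ideal R} {e m : ℕ} {y : R}
    (hy : y ∈ Iq k p x I e m) : y ^ p ∈ Iq k p x I e (m + 1) := by
  have := Fact.mk hp
  induction hy using Submodule.span_induction with
  | mem a ha =>
    obtain ⟨b', hb', z, hz, rfl⟩ := ha
    exact Submodule.subset_span ⟨b' ^ p, pow_mem hb' _, z, hz, by rw [mul_pow, ← pow_mul, ← pow_succ]⟩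
  | zero => rw [zero_pow hp.ne_zero]; exact zero_mem _
  | add a b _ _ h1 h2 => rw [add_pow_char]; exact add_mem h1 h2
  | smul c a _ h1 => rw [smul_pow]; exact Submodule.smul_mem _ _ h1

lemma Iq_le_bracket {I : Ideal R} {e m : ℕ} {y : R} (hy : y ∈ Iq k p x I e m) :
    y ∈ Ideal.span ((fun x : R => x ^ p ^ m) '' (I : Set R)) := by
  induction hy using Submodule.span_induction with
  | mem a ha =>
    obtain ⟨b', hb', z, hz, rfl⟩ := ha
    exact Ideal.mul_mem_left _ _ (Ideal.subset_span ⟨z, hz, rfl⟩)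
  | zero => simp
  | add a b _ _ h1 h2 => exact add_mem h1 h2
  | smul c a _ h1 => exact Submodule.smul_of_tower_mem _ _ h1

lemma bracket_decomp (hp : p.Prime) (hadj : Algebra.adjoin k (Set.range x) = ⊤) {I : Ideal R} (e m : ℕ) {y : R}
    (hy : y ∈ Ideal.span ((fun x : R => x ^ p ^ m) '' (I : Set R))) :
    ∃ β : (Fin r → Fin (p ^ e)) → R, (∀ u, β u ∈ Iq k p x I e m) ∧
      y = ∑ u, β u * ∏ i, (x i) ^ (u i : ℕ) := by
  classical
  have key : ∀ a : R, ∀ z ∈ I, ∃ β : (Fin r → Fin (p ^ e)) → R, (∀ u, β u ∈ Iq k p x I e m) ∧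
      a * z ^ p ^ m = ∑ u, β u * ∏ i, (x i) ^ (u i : ℕ) := by
    intro a z hz
    obtain ⟨β, h1, h2⟩ := B_decomp (k := k) (x := x) hp 0 e (b := a) (by rw [B_zero hadj]; trivial)
    refine ⟨fun u => β u * z ^ p ^ m, fun u => mem_Iq (by simpa using h1 u) hz, ?_⟩
    conv_lhs => rw [h2]
    rw [Finset.sum_mul]
    exact Finset.sum_congr rfl fun u _ => by simp only [pow_zero, pow_one]; ring
  induction hy using Submodule.span_induction with
  | mem a ha =>
    obtain ⟨z, hz, rfl⟩ := ha
    simpa using key 1 z hz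
  | zero => exact ⟨0, fun u => zero_mem _, by simp⟩
  | add a b _ _ h1 h2 =>
    obtain ⟨β1, h11, h12⟩ := h1
    obtain ⟨β2, h21, h22⟩ := h2
    refine ⟨β1 + β2, fun u => add_mem (h11 u) (h21 u), ?_⟩
    rw [h12, h22, ← Finset.sum_add_distrib]
    exact Finset.sum_congr rfl fun u _ => by simp [add_mul]
  | smul c a _ h1 =>
    obtain ⟨β1, h11, h12⟩ := h1
    obtain ⟨γ, g1, g2⟩ := B_decomp (k := k) (x := x) hp 0 e (b := c) (by rw [B_zero hadj]; trivial)
    -- c * β1 u * x_u = sum over v of γ v β1 u x_(u+v); handle each product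
    have h3 : ∀ a ∈ Iq k p x I e m, ∀ c : R, ∃ β : (Fin r → Fin (p ^ e)) → R,
        (∀ u, β u ∈ Iq k p x I e m) ∧ a * c = ∑ u, β u * ∏ i, (x i) ^ (u i : ℕ) := by
      intro a ha c
      obtain ⟨γ, g1, g2⟩ := B_decomp (k := k) (x := x) hp 0 e (b := c) (by rw [B_zero hadj]; trivial)
      refine ⟨fun u => γ u * a, fun u => Iq_mul (by simpa using g1 u) ha, ?_⟩
      conv_lhs => rw [g2]
      rw [Finset.mul_sum]
      exact Finset.sum_congr rfl fun u _ => by simp only [pow_zero, pow_one]; ring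
    choose β hβ1 hβ2 using fun u => h3 (β1 u) (h11 u) (c * ∏ i, (x i) ^ (u i : ℕ))
    refine ⟨∑ u, β u, fun v => ?_, ?_⟩
    · rw [Finset.sum_apply]; exact sum_mem fun u _ => hβ1 u v
    · rw [h12, smul_eq_mul, Finset.mul_sum]
      simp only [Finset.sum_apply, Finset.sum_mul]
      rw [Finset.sum_comm]
      refine Finset.sum_congr rfl fun u _ => ?_
      rw [← hβ2]; ring

lemma mon_mem_Iq (_hp : p.Prime) {I : Ideal R} {N : ℕ} (hN : ∀ i, x i ^ N ∈ I) {e m : ℕ} (hem : e ≤ m)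
    (α : Fin r → ℕ) (i : Fin r) (hi : N * p ^ (m - e) ≤ α i) :
    ∏ i, (x i ^ p ^ e) ^ α i ∈ Iq k p x I e m := by
  classical
  obtain ⟨t, ht⟩ := Nat.exists_eq_add_of_le hi
  rw [← Finset.mul_prod_erase _ _ (Finset.mem_univ i), ht]
  have : (x i ^ p ^ e) ^ (N * p ^ (m - e) + t) = (x i ^ p ^ e) ^ t * (x i ^ N) ^ p ^ m := by
    rw [pow_add, mul_comm]
    congr 1
    rw [← pow_mul, ← pow_mul]
    congr 1
    rw [← Nat.sub_add_cancel hem]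
    simp only [Nat.add_sub_cancel]
    rw [pow_add]; ring
  rw [this]
  have h2 : (x i ^ p ^ e) ^ t * ∏ i ∈ Finset.univ.erase i, (x i ^ p ^ e) ^ α i ∈ B k p x e :=
    mul_mem (pow_mem (gen_mem_B _ i) _)
      (prod_mem fun i _ => pow_mem (gen_mem_B _ i) _)
  have := mem_Iq (m := m) (I := I) h2 (hN i)
  convert this using 1
  ring

/-- finite-dimensional complement of `Iq` -/
def Wf (k : Type*) {R : Type*} [Field k] [CommRing R] [Algebra k R] (p : ℕ) {r : ℕ} (x : Fin r → R)
    (N e m : ℕ) : Submodule k R :=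
  Submodule.span k {a | ∃ α : Fin r → ℕ, (∀ i, α i < N * p ^ (m - e)) ∧ a = ∏ i, (x i ^ p ^ e) ^ α i}

lemma Wf_le_Bs (N e m : ℕ) : Wf k p x N e m ≤ Bs k p x e := by
  unfold Wf
  rw [Submodule.span_le]
  rintro _ ⟨α, -, rfl⟩
  exact mon_mem_B e α

lemma Wf_le_Vt {N e m : ℕ} (hem : e ≤ m) : Wf k p x N e m ≤ Vt k x (r * N * p ^ m) := by
  unfold Wf
  rw [Submodule.span_le]
  rintro _ ⟨α, hα, rfl⟩
  simp only [← pow_mul]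
  refine mem_Vt_mon x _ ?_
  calc ∑ i, p ^ e * α i ≤ ∑ i : Fin r, p ^ e * (N * p ^ (m - e)) := by
        gcongr with i; exact (hα i).le
    _ = r * N * p ^ m := by
        simp only [Finset.sum_const, Finset.card_univ, Fintype.card_fin, smul_eq_mul]
        rw [← Nat.sub_add_cancel hem]
        simp only [Nat.add_sub_cancel]
        rw [pow_add]; ring

lemma Bs_le_Wf (hp : p.Prime) {I : Ideal R} {N : ℕ} (hN : ∀ i, x i ^ N ∈ I) {e m : ℕ} (hem : e ≤ m) :
    Bs k p x e ≤ Wf k p x N e m ⊔ Iq k p x I e m := by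
  rw [Bs_eq_span, Submodule.span_le]
  rintro _ ⟨α, rfl⟩
  by_cases h : ∀ i, α i < N * p ^ (m - e)
  · exact Submodule.mem_sup_left (Submodule.subset_span ⟨α, h, rfl⟩)
  · push Not at h
    obtain ⟨i, hi⟩ := h
    exact Submodule.mem_sup_right (mon_mem_Iq hp hN hem α i hi)

end base

section gr
variable {k R : Type*} [Field k] [CommRing R] [Algebra k R] {𝒜 : ℤ → Submodule k R} [GradedAlgebra 𝒜]
  {p r : ℕ} {x : Fin r → R} {w : Fin r → ℕ}

lemma mon_deg (hx : ∀ i, x i ∈ 𝒜 (w i)) (α : Fin r → ℕ) :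
    ∏ i, x i ^ α i ∈ 𝒜 ((∑ i, α i * w i : ℕ) : ℤ) := by
  have := SetLike.prod_mem_graded 𝒜 (fun i => ((α i * w i : ℕ) : ℤ)) (fun i => x i ^ α i)
    (F := Finset.univ) (fun i _ => by
      have := SetLike.pow_mem_graded (A := 𝒜) (α i) (hx i)
      simpa using this)
  simpa using this

lemma mon_deg' (hx : ∀ i, x i ∈ 𝒜 (w i)) (e : ℕ) (α : Fin r → ℕ) :
    ∏ i, (x i ^ p ^ e) ^ α i ∈ 𝒜 ((∑ i, p ^ e * α i * w i : ℕ) : ℤ) := by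
  simp only [← pow_mul]
  exact mon_deg hx _

lemma Hg_Bs (hx : ∀ i, x i ∈ 𝒜 (w i)) (e : ℕ) : Hg 𝒜 (Bs k p x e) := by
  rw [Bs_eq_span]
  apply Hg_span
  rintro _ ⟨α, rfl⟩
  exact ⟨_, mon_deg' hx e α⟩

lemma pr_pow (hp : p.Prime) (hc : CharP R p) (m : ℕ) (z : R) :
    z ^ p ^ m ∈ Submodule.span k (Set.range fun j => (pr 𝒜 j z) ^ p ^ m) := by
  have := Fact.mk hp
  obtain ⟨s, hs⟩ := exists_sum_pr 𝒜 z
  rw [hs, sum_pow_char_pow]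
  rw [← hs]
  exact sum_mem fun j _ => Submodule.subset_span ⟨j, rfl⟩

lemma Hg_Iq (hp : p.Prime) (hc : CharP R p) (hx : ∀ i, x i ∈ 𝒜 (w i)) {I : Ideal R}
    (hI : Ideal.IsHomogeneous 𝒜 I) (e m : ℕ) : Hg 𝒜 (Iq k p x I e m) := by
  have : Iq k p x I e m = Submodule.span k {a | ∃ α : Fin r → ℕ, ∃ z ∈ I, (∃ j, z ∈ 𝒜 j) ∧
      a = (∏ i, (x i ^ p ^ e) ^ α i) * z ^ p ^ m} := by
    apply le_antisymm
    · refine Submodule.span_le.2 ?_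
      rintro _ ⟨b, hb, z, hz, rfl⟩
      have h1 : b ∈ Bs k p x e := hb
      have h2 := pr_pow (k := k) (𝒜 := 𝒜) hp hc m z
      rw [Bs_eq_span] at h1
      have h3 := Submodule.mul_mem_mul h1 h2
      rw [Submodule.span_mul_span] at h3
      refine Submodule.span_mono ?_ h3
      rintro _ ⟨_, ⟨α, rfl⟩, _, ⟨j, rfl⟩, rfl⟩
      exact ⟨α, _, Hg_ideal (k := k) hI z hz j, ⟨j, pr_mem 𝒜 j z⟩, rfl⟩
    · refine Submodule.span_le.2 ?_
      rintro _ ⟨α, z, hz, -, rfl⟩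
      exact mem_Iq (mon_mem_B e α) hz
  rw [this]
  apply Hg_span
  rintro _ ⟨α, z, hz, ⟨j, hj⟩, rfl⟩
  exact ⟨_, SetLike.mul_mem_graded (mon_deg' hx e α) (SetLike.pow_mem_graded (p ^ m) hj)⟩

lemma Bs_degree_le (hp : p.Prime) (hx : ∀ i, x i ∈ 𝒜 (w i)) {I : Ideal R} {N : ℕ}
    (hN : ∀ i, x i ^ N ∈ I) {e m : ℕ} (hem : e ≤ m) {j : ℤ} (hj : ((∑ i, N * w i) * p ^ m : ℕ) < j) :
    Bs k p x e ⊓ 𝒜 j ≤ Iq k p x I e m := by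
  rintro b ⟨hb, hbj⟩
  rw [← pr_same hbj]
  suffices Bs k p x e ≤ (Iq k p x I e m).comap (pr 𝒜 j) from this hb
  rw [Bs_eq_span, Submodule.span_le]
  rintro _ ⟨α, rfl⟩
  change pr 𝒜 j _ ∈ Iq k p x I e m
  by_cases h : ∀ i, α i < N * p ^ (m - e)
  · rw [pr_ne (mon_deg' hx e α)]
    · exact zero_mem _
    · apply ne_of_lt
      refine lt_of_le_of_lt ?_ hj
      norm_cast
      rw [Finset.sum_mul]
      refine Finset.sum_le_sum fun i _ => ?_
      calc p ^ e * α i * w i ≤ p ^ e * (N * p ^ (m - e)) * w i := by gcongr; exact (h i).le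
        _ = N * w i * p ^ m := by
          rw [← Nat.sub_add_cancel hem]
          simp only [Nat.add_sub_cancel]
          rw [pow_add]; ring
  · push Not at h
    obtain ⟨i, hi⟩ := h
    by_cases hjj : ((∑ i, p ^ e * α i * w i : ℕ) : ℤ) = j
    · rw [pr_same (hjj ▸ mon_deg' hx e α)]
      exact mon_mem_Iq hp hN hem α i hi
    · rw [pr_ne (mon_deg' hx e α) hjj]; exact zero_mem _

end gr
end FP

namespace FP

section small
variable {k R : Type*} [Field k] [CommRing R] [Algebra k R] {p r : ℕ} {x : Fin r → R}

/-- multiples of `c` by elements of `X` -/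
abbrev mulS (c : R) (X : Submodule k R) : Submodule k R := X.map (LinearMap.mulLeft k c)

lemma mem_mulS {c a : R} {X : Submodule k R} : a ∈ mulS c X ↔ ∃ b ∈ X, c * b = a := by
  simp [mulS]

theorem small (hp : p.Prime) {I : Ideal R} {N d G : ℕ} (hN : ∀ i, x i ^ N ∈ I)
    (hadj : Algebra.adjoin k (Set.range x) = ⊤)
    (hG : ∀ t, dl (Vt k x t) ⊥ ≤ (G * (t + 1) ^ d : ℕ))
    (e : ℕ) (K : Submodule k R) (c : R) (hc : c ∈ B k p x e)
    (hK : ∀ b ∈ B k p x e, c * b ∈ K → b ∈ K) :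
    ∃ C : ℕ, ∀ m, e ≤ m → ((p ^ m : ℕ) : ℕ∞) * dl (Bs k p x e) (mulS c (Bs k p x e) ⊔ Iq k p x I e m ⊔ K) ≤
      (C * (p ^ m) ^ d : ℕ) := by
  obtain ⟨a, ha⟩ := exists_mem_Vt (k := k) x hadj c
  refine ⟨G * (r * N + a + 1) ^ d, fun m hem => ?_⟩
  set W := Wf k p x N e m with hW
  set cB := mulS c (Bs k p x e) with hcB
  have h1 : dl (Bs k p x e) (cB ⊔ Iq k p x I e m ⊔ K) ≤ dl W (cB ⊔ K) := by
    refine (dl_le_of_le_sup (X' := W) ?_).trans (dl_anti_right ?_)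
    · refine (Bs_le_Wf hp hN hem).trans (sup_le_sup le_rfl ?_)
      exact le_sup_of_le_left le_sup_right
    · exact sup_le_sup le_sup_left le_rfl
  let U : ℕ → Submodule k R := fun j => Nat.rec ⊥ (fun _ U => W ⊔ mulS c U) j
  have hU0 : U 0 = ⊥ := rfl
  have hU1 : ∀ j, U (j + 1) = W ⊔ mulS c (U j) := fun j => rfl
  have hUB : ∀ j, U j ≤ Bs k p x e := by
    intro j
    induction j with
    | zero => rw [hU0]; exact bot_le
    | succ j ih =>
      rw [hU1]
      refine sup_le (Wf_le_Bs _ _ _) ?_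
      rintro _ ⟨b, hb, rfl⟩
      exact (B k p x e).mul_mem hc (ih hb)
  have hUd : ∀ j : ℕ, (j : ℕ∞) * dl W (cB ⊔ K) ≤ dl (U j) K := by
    intro j
    induction j with
    | zero => simp
    | succ j ih =>
      rw [hU1, dl_sup, Nat.cast_succ, add_mul, one_mul]
      refine add_le_add (ih.trans (dl_le_map _ ?_)) (dl_anti_right (sup_le_sup (Submodule.map_mono (hUB j)) le_rfl))
      intro b hb hcb
      exact hK b (hUB j hb) hcb
  have hUV : ∀ j, U j ≤ Vt k x (r * N * p ^ m + j * a) := by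
    intro j
    induction j with
    | zero => rw [hU0]; exact bot_le
    | succ j ih =>
      rw [hU1]
      refine sup_le ((Wf_le_Vt hem).trans (Vt_mono x (by omega))) ?_
      rintro _ ⟨b, hb, rfl⟩
      exact Vt_mono x (by ring_nf; omega) (Vt_mul x ha (ih hb))
  calc _ ≤ ((p ^ m : ℕ) : ℕ∞) * dl W (cB ⊔ K) := by gcongr
    _ ≤ dl (U (p ^ m)) K := hUd _
    _ ≤ dl (Vt k x (r * N * p ^ m + p ^ m * a)) ⊥ := dl_mono (hUV _) bot_le
    _ ≤ _ := hG _
    _ ≤ _ := by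
      norm_cast
      rw [mul_assoc G (_ ^ _), ← mul_pow]
      gcongr
      have : 0 < p ^ m := pow_pos hp.pos m
      nlinarith

end small
end FP

namespace FP

section gen
variable {k R : Type*} [Field k] [CommRing R] [Algebra k R] {p r : ℕ} {x : Fin r → R}

lemma max_indep {ι : Type*} [Fintype ι] (A : Subalgebra k R) (m : ι → R) (Q : ι → Ideal R)
    (hQ : ∀ i, Q i ≠ ⊤) (Z : Ideal R) (hZ : ∀ i, ∀ a ∈ A, a ∈ Q i → a * m i ∈ Z) :
    ∃ T : Finset ι, (∀ β : ι → R, (∀ i, β i ∈ A) → ∑ t ∈ T, β t * m t ∈ Z → ∀ t ∈ T, β t ∈ Q t) ∧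
      ∀ u, ∃ c ∈ A, c ∉ Q u ∧ ∃ β : ι → R, (∀ i, β i ∈ A) ∧ c * m u - ∑ t ∈ T, β t * m t ∈ Z := by
  classical
  let S : Set (Finset ι) := {T | ∀ β : ι → R, (∀ i, β i ∈ A) → ∑ t ∈ T, β t * m t ∈ Z → ∀ t ∈ T, β t ∈ Q t}
  have hS : S.Nonempty := ⟨∅, by intro β _ _ t ht; simp at ht⟩
  obtain ⟨T, hT⟩ := (Set.toFinite S).exists_maximal hS
  refine ⟨T, hT.1, fun u => ?_⟩
  by_cases hu : u ∈ T
  · refine ⟨1, one_mem _, fun h => hQ u ((Ideal.eq_top_iff_one _).2 h), fun i => if i = u then 1 else 0, ?_, ?_⟩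
    · intro i; dsimp only; split_ifs
      · exact one_mem _
      · exact zero_mem _
    · simp [hu]
  · have hn : insert u T ∉ S := by
      intro h
      have := hT.2 h (Finset.subset_insert u T)
      exact hu (this (Finset.mem_insert_self u T))
    simp only [S, Set.mem_ofPred_eq, not_forall] at hn
    obtain ⟨β, hβ, hs, t, ht, htQ⟩ := hn
    rw [Finset.sum_insert hu] at hs
    refine ⟨β u, hβ u, ?_, fun i => - β i, fun i => neg_mem (hβ i), ?_⟩
    · intro hbu
      have h1 := hZ u _ (hβ u) hbu
      have h2 : ∑ t ∈ T, β t * m t ∈ Z := by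
        have := sub_mem hs h1
        simpa using this
      have h3 := hT.1 β hβ h2
      rcases Finset.mem_insert.1 ht with rfl | h
      · exact htQ hbu
      · exact htQ (h3 t h)
    · simpa [sub_eq_add_neg] using hs

/-- generic generation of `B e` by `p^d` homogeneous elements over `B (e+1)` modulo `P` -/
def Gen (𝒜 : ℤ → Submodule k R) (p d : ℕ) (x : Fin r → R) (P : Ideal R) (e : ℕ) : Prop :=
  ∃ g : Fin (p ^ d) → R, ∃ γ : Fin (p ^ d) → ℕ, (∀ v, g v ∈ B k p x e ∧ g v ∈ 𝒜 (γ v)) ∧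
    ∃ c ∈ B k p x e, c ∉ P ∧ ∀ b ∈ B k p x e, ∃ β : Fin (p ^ d) → R, (∀ v, β v ∈ B k p x (e + 1)) ∧
      c * b - ∑ v, β v * g v ∈ P

variable {𝒜 : ℤ → Submodule k R} [GradedAlgebra 𝒜]

lemma Gen.succ (hp : p.Prime) (hc : CharP R p) {P : Ideal R} (hP : P.IsPrime) {d e : ℕ}
    (h : Gen 𝒜 p d x P e) : Gen 𝒜 p d x P (e + 1) := by
  have := Fact.mk hp
  obtain ⟨g, γ, hg, c, hcB, hcP, hb⟩ := h
  refine ⟨fun v => g v ^ p, fun v => p * γ v, fun v => ⟨?_, ?_⟩, c ^ p, ?_, ?_, ?_⟩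
  · simpa using pow_mem_B_add hp hc 1 (hg v).1
  · simpa using SetLike.pow_mem_graded p (hg v).2
  · simpa using pow_mem_B_add hp hc 1 hcB
  · exact fun h => hcP (hP.mem_of_pow_mem _ h)
  · intro b hb'
    have := B_succ_le hb'
    clear hb'
    induction this using Submodule.span_induction with
    | mem a ha =>
      obtain ⟨a, ha, rfl⟩ := ha
      obtain ⟨β, hβ, hs⟩ := hb a ha
      refine ⟨fun v => β v ^ p, fun v => by simpa using pow_mem_B_add hp hc 1 (hβ v), ?_⟩
      have := P.pow_mem_of_mem hs p hp.pos
      rw [sub_pow_char, sum_pow_char, mul_pow] at this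
      simpa only [mul_pow] using this
    | zero => exact ⟨0, fun v => zero_mem _, by simp⟩
    | add a b _ _ h1 h2 =>
      obtain ⟨β1, h11, h12⟩ := h1
      obtain ⟨β2, h21, h22⟩ := h2
      refine ⟨β1 + β2, fun u => add_mem (h11 u) (h21 u), ?_⟩
      have := add_mem h12 h22
      convert this using 1
      simp only [Pi.add_apply, add_mul, Finset.sum_add_distrib]
      ring
    | smul z a _ h1 =>
      obtain ⟨β1, h11, h12⟩ := h1
      refine ⟨z • β1, fun u => Subalgebra.smul_mem _ (h11 u) _, ?_⟩
      have := Submodule.smul_of_tower_mem P z h12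
      convert this using 1
      simp only [Pi.smul_apply, smul_sub, Finset.smul_sum, mul_smul_comm, smul_mul_assoc]

lemma Gen.mono (hp : p.Prime) (hc : CharP R p) {P : Ideal R} (hP : P.IsPrime) {d e f : ℕ} (hef : e ≤ f)
    (h : Gen 𝒜 p d x P e) : Gen 𝒜 p d x P f := by
  induction f, hef using Nat.le_induction with
  | base => exact h
  | succ f _ ih => exact ih.succ hp hc hP

lemma card_le_dl {ι : Type*} [Fintype ι] {X Y : Submodule k R} (h : ι → R) (hX : ∀ i, h i ∈ X)
    (hY : ∀ c : ι → k, ∑ i, c i • h i ∈ Y → c = 0) : (Fintype.card ι : ℕ∞) ≤ dl X Y := by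
  have h1 := dl_le_map (X := (⊤ : Submodule k (ι → k))) (Y := ⊥) (Y' := Y) (Fintype.linearCombination k h) (by
    intro c _ hc
    rw [Fintype.linearCombination_apply] at hc
    exact hY c hc)
  have h2 : dl (⊤ : Submodule k (ι → k)) ⊥ = Fintype.card ι := by
    rw [dl_eq_range]
    rw [← (LinearEquiv.ofInjective _ (by
      rw [← LinearMap.ker_eq_bot]
      ext c; simp : Function.Injective ((⊥ : Submodule k (ι → k)).mkQ ∘ₗ Submodule.subtype ⊤))).length_eq]
    rw [(Submodule.topEquiv (R := k) (M := ι → k)).length_eq]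
    rw [Module.length_eq_finrank]; simp
  rw [h2] at h1
  refine h1.trans (dl_mono_left ?_)
  rintro _ ⟨c, -, rfl⟩
  rw [Fintype.linearCombination_apply]
  exact sum_mem fun i _ => Submodule.smul_mem _ _ (hX i)

theorem exists_gen (hp : p.Prime) {w : Fin r → ℕ} (hx : ∀ i, x i ∈ 𝒜 (w i))
    {P : Ideal R} (hP : P.IsPrime) {d G : ℕ}
    (hG : ∀ t, dl (Vt k x t) ⊥ ≤ (G * (t + 1) ^ d : ℕ)) : ∃ e, Gen 𝒜 p d x P e := by
  classical
  by_contra hcon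
  push Not at hcon
  have hstep : ∀ e, ∃ T : Finset (Fin r → Fin p), p ^ d + 1 ≤ T.card ∧
      ∀ β : (Fin r → Fin p) → R, (∀ i, β i ∈ B k p x (e + 1)) →
        ∑ t ∈ T, β t * ∏ i, (x i ^ p ^ e) ^ (t i : ℕ) ∈ P → ∀ t ∈ T, β t ∈ P := by
    intro e
    obtain ⟨T, h1, h2⟩ := max_indep (B k p x (e + 1))
      (fun t : Fin r → Fin p => ∏ i, (x i ^ p ^ e) ^ (t i : ℕ)) (fun _ => P) (fun _ => hP.ne_top) P
      (fun i a _ ha => P.mul_mem_right _ ha)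
    refine ⟨T, ?_, h1⟩
    by_contra hT
    have hT' : T.card ≤ p ^ d := by omega
    apply hcon e
    obtain ⟨f⟩ : Nonempty (T ↪ Fin (p ^ d)) :=
      Function.Embedding.nonempty_of_card_le (by simpa using hT')
    choose c hcB hcP β hβ hs using h2
    refine ⟨Function.extend f (fun t : T => ∏ i, (x i ^ p ^ e) ^ ((t : Fin r → Fin p) i : ℕ)) 0,
      Function.extend f (fun t : T => ∑ i, p ^ e * ((t : Fin r → Fin p) i : ℕ) * w i) 0, ?_, ∏ u, c u, ?_, ?_, ?_⟩
    · intro v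
      by_cases hv : ∃ t, f t = v
      · obtain ⟨t, rfl⟩ := hv
        rw [f.injective.extend_apply, f.injective.extend_apply]
        exact ⟨mon_mem_B e _, mon_deg' hx e _⟩
      · rw [Function.extend_apply' _ _ _ hv]
        exact ⟨zero_mem _, zero_mem _⟩
    · exact prod_mem fun u _ => B_anti (Nat.le_succ e) (hcB u)
    · intro h
      obtain ⟨u, -, hu⟩ := (hP.prod_mem_iff).1 h
      exact hcP u hu
    · intro b hb
      have hdec := B_decomp hp e 1 hb
      rw [show p ^ 1 = p from pow_one p] at hdec
      obtain ⟨a, ha1, ha2⟩ := hdec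
      let δ : (Fin r → Fin p) → R := fun t => ∑ u, a u * (∏ v ∈ Finset.univ.erase u, c v) * β u t
      refine ⟨Function.extend f (fun t : T => δ t) 0, ?_, ?_⟩
      · intro v
        by_cases hv : ∃ t, f t = v
        · obtain ⟨t, rfl⟩ := hv
          rw [f.injective.extend_apply]
          exact sum_mem fun u _ => mul_mem (mul_mem (ha1 u) (prod_mem fun v _ => hcB v)) (hβ u _)
        · rw [Function.extend_apply' _ _ _ hv]; exact zero_mem _
      · have e1 : ∑ v, Function.extend f (fun t : T => δ t) 0 v *
            Function.extend f (fun t : T => ∏ i, (x i ^ p ^ e) ^ ((t : Fin r → Fin p) i : ℕ)) 0 v =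
            ∑ t ∈ T, δ t * ∏ i, (x i ^ p ^ e) ^ (t i : ℕ) := by
          rw [← Finset.sum_coe_sort T]
          symm
          apply Fintype.sum_of_injective f f.injective
          · intro v hv
            rw [Function.extend_apply' _ _ _ (by simpa using hv)]; simp
          · intro t
            rw [f.injective.extend_apply, f.injective.extend_apply]
        rw [e1]
        have e2 : (∏ u, c u) * b - ∑ t ∈ T, δ t * ∏ i, (x i ^ p ^ e) ^ (t i : ℕ) =
            ∑ u, a u * (∏ v ∈ Finset.univ.erase u, c v) *
              (c u * (∏ i, (x i ^ p ^ e) ^ (u i : ℕ)) - ∑ t ∈ T, β u t * ∏ i, (x i ^ p ^ e) ^ (t i : ℕ)) := by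
          simp only [mul_sub, Finset.sum_sub_distrib]
          congr 1
          · rw [ha2, Finset.mul_sum]
            refine Finset.sum_congr rfl fun u _ => ?_
            rw [← Finset.mul_prod_erase _ _ (Finset.mem_univ u)]
            ring
          · simp only [δ, Finset.sum_mul, Finset.mul_sum]
            rw [Finset.sum_comm]
            refine Finset.sum_congr rfl fun u _ => Finset.sum_congr rfl fun t _ => ?_
            ring
        rw [e2]
        exact sum_mem fun u _ => P.mul_mem_left _ (hs u)
  have hF : ∀ m : ℕ, ∃ (ι : Type) (_ : Fintype ι) (h : ι → R), (p ^ d + 1) ^ m ≤ Fintype.card ι ∧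
      (∀ i, h i ∈ Vt k x (r * p ^ m)) ∧
      ∀ β : ι → R, (∀ i, β i ∈ B k p x m) → ∑ i, β i * h i ∈ P → ∀ i, β i ∈ P := by
    intro m
    induction m with
    | zero =>
      refine ⟨Unit, inferInstance, fun _ => 1, by simp, fun _ => ?_, ?_⟩
      · exact Vt_mono x (Nat.zero_le _) (by simpa using mem_Vt_mon (k := k) x (t := 0) (fun _ => 0) (by simp))
      · intro β _ h i; simpa using h
    | succ m ih =>
      obtain ⟨ι, _, h, h1, h2, h3⟩ := ih
      obtain ⟨T, hT1, hT2⟩ := hstep m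
      refine ⟨ι × T, inferInstance, fun z => h z.1 * ∏ i, (x i ^ p ^ m) ^ ((z.2 : Fin r → Fin p) i : ℕ), ?_, ?_, ?_⟩
      · rw [Fintype.card_prod, pow_succ, Fintype.card_coe]
        gcongr
      · rintro ⟨i, t⟩
        have h4 : ∏ i, (x i ^ p ^ m) ^ ((t : Fin r → Fin p) i : ℕ) ∈ Vt k x (r * ((p - 1) * p ^ m)) := by
          simp only [← pow_mul]
          refine mem_Vt_mon x _ ?_
          calc _ ≤ ∑ i : Fin r, p ^ m * (p - 1) := by
                refine Finset.sum_le_sum fun i _ => ?_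
                gcongr
                have := ((t : Fin r → Fin p) i).2
                omega
            _ = _ := by simp; left; ring
        refine Vt_mono x (le_of_eq ?_) (Vt_mul x (h2 i) h4)
        obtain ⟨q, rfl⟩ : ∃ q, p = q + 1 := ⟨p - 1, by have := hp.pos; omega⟩
        simp only [Nat.add_sub_cancel]
        ring
      · intro β hβ hs
        have hin : ∀ i, ∑ t : T, β (i, t) * ∏ j, (x j ^ p ^ m) ^ ((t : Fin r → Fin p) j : ℕ) ∈ P := by
          apply h3
          · intro i
            exact sum_mem fun t _ => mul_mem (B_anti (Nat.le_succ m) (hβ _)) (mon_mem_B m _)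
          · convert hs using 1
            rw [Fintype.sum_prod_type]
            refine Finset.sum_congr rfl fun i _ => ?_
            rw [Finset.sum_mul]
            refine Finset.sum_congr rfl fun t _ => ?_
            ring
        rintro ⟨i, t⟩
        let β' : (Fin r → Fin p) → R := fun t => if ht : t ∈ T then β (i, ⟨t, ht⟩) else 0
        have := hT2 β' (fun t => by
          simp only [β']; split_ifs
          · exact hβ _
          · exact zero_mem _) (by
          rw [← Finset.sum_coe_sort T]
          convert hin i using 1
          refine Finset.sum_congr rfl fun t _ => ?_
          simp [β']) t t.2
        simpa [β'] using this
  have hbern : ∀ q m : ℕ, q ^ m * (q + m) ≤ (q + 1) ^ m * q := by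
    intro q m
    induction m with
    | zero => simp
    | succ m ih =>
      calc q ^ (m + 1) * (q + (m + 1)) ≤ (q + 1) * (q ^ m * (q + m)) := by
            rw [pow_succ]
            have : q * (q + (m + 1)) ≤ (q + 1) * (q + m) := by nlinarith
            calc q ^ m * q * (q + (m + 1)) = q ^ m * (q * (q + (m + 1))) := by ring
              _ ≤ q ^ m * ((q + 1) * (q + m)) := by gcongr
              _ = _ := by ring
        _ ≤ (q + 1) * ((q + 1) ^ m * q) := by gcongr
        _ = _ := by ring
  set q := p ^ d with hq
  have hqpos : 0 < q := pow_pos hp.pos _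
  set m := G * (r + 1) ^ d * q + 1 with hm
  obtain ⟨ι, _, h, h1, h2, h3⟩ := hF m
  have h4 : (Fintype.card ι : ℕ∞) ≤ dl (Vt k x (r * p ^ m)) (P.restrictScalars k) := by
    refine card_le_dl h h2 ?_
    intro c hc
    have := h3 (fun i => algebraMap k R (c i)) (fun i => Subalgebra.algebraMap_mem _ _) (by
      simpa [Algebra.smul_def] using hc)
    funext i
    by_contra hci
    exact hP.ne_top (Ideal.eq_top_of_isUnit_mem _ (this i) ((IsUnit.mk0 _ hci).map _))
  have h5 := h4.trans ((dl_anti_right bot_le).trans (hG _))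
  have h6 : Fintype.card ι ≤ G * (r * p ^ m + 1) ^ d := by exact_mod_cast h5
  have h7 : (q + 1) ^ m ≤ G * (r + 1) ^ d * q ^ m := by
    refine (h1.trans h6).trans ?_
    rw [hq, ← pow_mul, mul_comm d m, pow_mul, mul_assoc G (_ ^ _), ← mul_pow]
    gcongr
    have : 0 < p ^ m := pow_pos hp.pos _
    nlinarith
  have h8 := hbern q m
  have h9 : q ^ m * (q + m) ≤ q ^ m * (G * (r + 1) ^ d * q) := by
    calc _ ≤ _ := h8
      _ ≤ G * (r + 1) ^ d * q ^ m * q := by gcongr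
      _ = _ := by ring
  have h10 := Nat.le_of_mul_le_mul_left h9 (pow_pos hqpos m)
  omega

end gen
end FP

namespace FP

section red
variable {k R : Type*} [Field k] [CommRing R] [Algebra k R] {p r : ℕ} {x : Fin r → R}

open TensorProduct in
theorem exists_reduced [Algebra.FiniteType k R] (hp : p.Prime) (hc : CharP R p) (x : Fin r → R) :
    ∃ e0, ∀ e, e0 ≤ e → ∀ b ∈ B k p x e, IsNilpotent b → b = 0 := by
  have := Fact.mk hp
  let K := AlgebraicClosure k
  let S := K ⊗[k] R
  have hinj : Function.Injective (Algebra.TensorProduct.includeRight : R →ₐ[k] S) :=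
    Algebra.TensorProduct.includeRight_injective (algebraMap k K).injective
  have hS : CharP S p := charP_of_injective_ringHom (f := (Algebra.TensorProduct.includeRight : R →ₐ[k] S).toRingHom) hinj p
  have hft : Algebra.FiniteType K S := inferInstance
  have hNoeth : IsNoetherianRing S := Algebra.FiniteType.isNoetherianRing K S
  obtain ⟨n, hn⟩ := IsNoetherianRing.isNilpotent_nilradical S
  refine ⟨n, fun e he b hb hnil => ?_⟩
  have key : ∃ y : S, (Algebra.TensorProduct.includeRight : R →ₐ[k] S) b = y ^ p ^ e := by
    unfold B at hb
    clear hnil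
    induction hb using Algebra.adjoin_induction with
    | mem a ha =>
      obtain ⟨i, rfl⟩ := ha
      exact ⟨Algebra.TensorProduct.includeRight (x i), by simp only [map_pow]⟩
    | algebraMap c =>
      obtain ⟨z, hz⟩ := IsAlgClosed.exists_pow_nat_eq (algebraMap k K c) (n := p ^ e) (pow_pos hp.pos _)
      refine ⟨algebraMap K S z, ?_⟩
      rw [AlgHom.commutes, ← map_pow, hz, ← IsScalarTower.algebraMap_apply]
    | add a b _ _ h1 h2 =>
      obtain ⟨y1, h1⟩ := h1
      obtain ⟨y2, h2⟩ := h2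
      exact ⟨y1 + y2, by rw [map_add, add_pow_char_pow, h1, h2]⟩
    | mul a b _ _ h1 h2 =>
      obtain ⟨y1, h1⟩ := h1
      obtain ⟨y2, h2⟩ := h2
      exact ⟨y1 * y2, by rw [map_mul, mul_pow, h1, h2]⟩
  obtain ⟨y, hy⟩ := key
  have h1 : IsNilpotent (y ^ p ^ e) := by rw [← hy]; exact hnil.map _
  have h2 : IsNilpotent y := by
    obtain ⟨l, hl⟩ := h1
    exact ⟨p ^ e * l, by rw [pow_mul, hl]⟩
  have h3 : y ^ n = 0 := by
    have : y ^ n ∈ (nilradical S) ^ n := Ideal.pow_mem_pow h2 n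
    rw [hn] at this
    simpa using this
  apply hinj
  rw [map_zero, hy]
  exact pow_eq_zero_of_le (he.trans (Nat.lt_pow_self hp.one_lt).le) h3

variable {𝒜 : ℤ → Submodule k R} [GradedAlgebra 𝒜]

lemma minimalPrime_homog {P : Ideal R} (hP : P ∈ minimalPrimes R) : P.IsHomogeneous 𝒜 := by
  have hPp : P.IsPrime := hP.1.1
  have h1 : (P.homogeneousCore 𝒜).toIdeal.IsPrime := hPp.homogeneousCore
  have h2 : (P.homogeneousCore 𝒜).toIdeal ≤ P := Ideal.toIdeal_homogeneousCore_le 𝒜 P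
  have h3 := hP.2 ⟨h1, bot_le⟩ h2
  have h4 : (P.homogeneousCore 𝒜).toIdeal = P := le_antisymm h2 h3
  rw [← h4]
  exact (P.homogeneousCore 𝒜).isHomogeneous

theorem exists_sep [IsNoetherianRing R] {P : Ideal R} (hP : P ∈ minimalPrimes R) :
    ∃ (s : R) (j : ℤ), s ∈ 𝒜 j ∧ s ∉ P ∧ ∀ Q ∈ minimalPrimes R, Q ≠ P → s ∈ Q := by
  classical
  have hfin : (minimalPrimes R).Finite := minimalPrimes.finite_of_isNoetherianRing R
  have hPp : P.IsPrime := hP.1.1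
  have h1 : ∀ Q : Ideal R, ∃ (s : R) (j : ℤ), s ∈ 𝒜 j ∧ s ∉ P ∧ (Q ∈ minimalPrimes R → Q ≠ P → s ∈ Q) := by
    intro Q
    by_cases hQ : Q ∈ minimalPrimes R ∧ Q ≠ P
    · obtain ⟨hQ, hne⟩ := hQ
      have hnle : ¬ Q ≤ P := fun h => hne (le_antisymm h (hP.2 hQ.1 h))
      obtain ⟨y, hyQ, hyP⟩ := Set.not_subset.1 hnle
      by_contra hcon
      push Not at hcon
      obtain ⟨t, ht⟩ := exists_sum_pr 𝒜 y
      apply hyP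
      rw [ht]
      refine sum_mem fun j _ => ?_
      by_contra hj
      exact (hcon _ j (pr_mem 𝒜 j y) hj).2.2 (Hg_ideal (minimalPrime_homog hQ) y hyQ j)
    · refine ⟨1, 0, SetLike.GradedOne.one_mem, fun h => hPp.ne_top ((Ideal.eq_top_iff_one _).2 h), ?_⟩
      intro h1 h2
      exact absurd ⟨h1, h2⟩ hQ
  choose s j hs1 hs2 hs3 using h1
  refine ⟨∏ Q ∈ hfin.toFinset, s Q, ∑ Q ∈ hfin.toFinset, j Q, SetLike.prod_mem_graded 𝒜 _ _ fun Q _ => hs1 Q, ?_, ?_⟩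
  · intro h
    obtain ⟨Q, -, hQ⟩ := (hPp.prod_mem_iff).1 h
    exact hs2 Q hQ
  · intro Q hQ hne
    exact Ideal.mem_of_dvd _ (Finset.dvd_prod_of_mem s (hfin.mem_toFinset.2 hQ)) (hs3 Q hQ hne)

lemma nilp_of_mem {b : R} (h : ∀ Q ∈ minimalPrimes R, b ∈ Q) : IsNilpotent b := by
  rw [← mem_nilradical, nilradical, ← Ideal.sInf_minimalPrimes]
  rw [Ideal.mem_sInf]
  intro Q hQ
  exact h Q hQ

/-- a nonzerodivisor criterion -/
lemma nzd_of_reduced {e : ℕ} (hred : ∀ b ∈ B k p x e, IsNilpotent b → b = 0) {c : R}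
    (h : ∀ P ∈ minimalPrimes R, c ∉ P) {b : R} (hb : b ∈ B k p x e) (hcb : c * b = 0) : b = 0 := by
  apply hred b hb
  apply nilp_of_mem
  intro Q hQ
  have hQp : Q.IsPrime := hQ.1.1
  exact (hQp.mem_or_mem (hcb ▸ Q.zero_mem : c * b ∈ Q)).resolve_left (h Q hQ)

end red
end FP

namespace FP

section analytic

/-- exponential weights -/
def En (p : ℕ) (y : ℂ) (n : ℕ) (j : ℤ) : ℂ := Complex.exp (-Complex.I * y * (j : ℂ) / (p : ℂ) ^ n)

lemma En_le {p : ℕ} (hp : p.Prime) (y : ℂ) (n : ℕ) {A : ℕ} {j : ℤ} (h0 : 0 ≤ j) (h1 : j ≤ A * (p : ℤ) ^ n) :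
    ‖En p y n j‖ ≤ Real.exp (‖y‖ * A) := by
  unfold En
  refine (Complex.norm_exp_le_exp_norm _).trans (Real.exp_le_exp.2 ?_)
  have hpos : (0 : ℝ) < (p : ℝ) ^ n := pow_pos (by exact_mod_cast hp.pos) _
  rw [norm_div, norm_mul, norm_mul, norm_neg, Complex.norm_I, one_mul, norm_pow, Complex.norm_natCast,
    Complex.norm_intCast, div_le_iff₀ hpos, mul_assoc]
  gcongr
  rw [abs_of_nonneg (by exact_mod_cast h0)]
  exact_mod_cast h1

lemma En_shift {p : ℕ} (hp : p.Prime) (y : ℂ) (n : ℕ) (i : ℤ) (γ : ℕ) {Γ : ℕ} (hγ : γ ≤ Γ) :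
    ‖En p y (n + 1) (p * i + γ) - En p y n i‖ ≤
      ‖En p y n i‖ * ((‖y‖ * Γ * Real.exp (‖y‖ * Γ)) / (p : ℝ) ^ n) := by
  have hp0 : (p : ℂ) ≠ 0 := by exact_mod_cast hp.ne_zero
  have hp1 : (1 : ℝ) ≤ p := by exact_mod_cast hp.one_lt.le
  have hpos : (0 : ℝ) < (p : ℝ) ^ n := pow_pos (by exact_mod_cast hp.pos) _
  have hpos1 : (0 : ℝ) < (p : ℝ) ^ (n + 1) := pow_pos (by exact_mod_cast hp.pos) _
  set z : ℂ := -Complex.I * y * γ / (p : ℂ) ^ (n + 1) with hz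
  have e1 : En p y (n + 1) (p * i + γ) = En p y n i * Complex.exp z := by
    unfold En
    rw [← Complex.exp_add]
    congr 1
    rw [hz]
    push_cast
    field_simp
    ring
  have hzn : ‖z‖ ≤ ‖y‖ * Γ / (p : ℝ) ^ n := by
    rw [hz, norm_div, norm_mul, norm_mul, norm_neg, Complex.norm_I, one_mul, norm_pow, Complex.norm_natCast,
      Complex.norm_natCast]
    gcongr
    omega
  have hzn' : ‖z‖ ≤ ‖y‖ * Γ := hzn.trans (div_le_self (by positivity) (one_le_pow₀ hp1))
  have h2 : ‖Complex.exp z - 1‖ ≤ ‖z‖ * Real.exp ‖z‖ := by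
    have := Complex.norm_exp_sub_sum_le_norm_mul_exp z 1
    simpa using this
  rw [e1, ← mul_sub_one, norm_mul]
  gcongr
  calc _ ≤ _ := h2
    _ ≤ (‖y‖ * Γ / (p : ℝ) ^ n) * Real.exp (‖y‖ * Γ) := by gcongr
    _ = _ := by ring

lemma sum_shift {p : ℕ} (hp : p.Prime) (γ : ℤ) (f : ℤ → ℝ) (h : ℤ → ℂ) (S U : Finset ℤ)
    (hf : ∀ i ∉ S, f i = 0) (hU : ∀ i ∈ S, p * i + γ ∈ U) :
    ∑ t ∈ U, (((if (p : ℤ) ∣ t - γ then f ((t - γ) / p) else 0 : ℝ)) : ℂ) * h t =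
      ∑ i ∈ S, (f i : ℂ) * h (p * i + γ) := by
  have hp0 : (p : ℤ) ≠ 0 := by exact_mod_cast hp.ne_zero
  symm
  refine Finset.sum_of_injOn (fun i => (p : ℤ) * i + γ) ?_ ?_ ?_ ?_
  · intro a _ b _ hab
    have : (p : ℤ) * a = p * b := by simpa using hab
    exact mul_left_cancel₀ hp0 this
  · intro i hi; exact hU i hi
  · intro t _ ht
    split_ifs with hd
    · obtain ⟨i, hi⟩ := hd
      rw [hi, Int.mul_ediv_cancel_left _ hp0]
      have : i ∉ S := fun hiS => ht ⟨i, hiS, by simp only; rw [← hi]; ring⟩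
      rw [hf i this]; simp
    · simp
  · intro i _
    simp [Int.mul_ediv_cancel_left _ hp0]

/-- the recursive convergence lemma -/
theorem converge {p : ℕ} (hp : p.Prime) (d : ℕ) (y : ℂ) (a : ℕ → ℤ → ℝ) (A : ℕ)
    (ha0 : ∀ n j, 0 ≤ a n j) (hasupp : ∀ n j, (j < 0 ∨ (A * (p : ℤ) ^ n) < j) → a n j = 0)
    (γ : Fin (p ^ d) → ℕ) (ω : ℕ → ℤ → ℝ) (hω0 : ∀ n j, 0 ≤ ω n j) (C : ℝ)
    (hω : ∀ n (s : Finset ℤ), ∑ j ∈ s, ω n j ≤ C * ((p : ℝ) ^ d) ^ n / (p : ℝ) ^ n)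
    (hrec : ∀ n t, a (n + 1) t ≤
      ∑ v, (if (p : ℤ) ∣ t - γ v then a n ((t - γ v) / p) else 0) + ω n t)
    (D : ℝ) (hD : ∀ n, ∑ j ∈ Finset.Icc (0 : ℤ) (A * (p : ℤ) ^ n), a n j ≤ D * ((p : ℝ) ^ d) ^ n) :
    ∃ L : ℂ, Tendsto (fun n : ℕ => (1 / ((p : ℂ) ^ d) ^ n) *
      ∑ j ∈ Finset.Icc (0 : ℤ) (A * (p : ℤ) ^ n), (a n j : ℂ) * En p y n j) atTop (nhds L) := by
  set q : ℝ := (p : ℝ) ^ d with hq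
  have hp0 : (0 : ℝ) < p := by exact_mod_cast hp.pos
  have hp1 : (1 : ℝ) < p := by exact_mod_cast hp.one_lt
  have hq0 : 0 < q := pow_pos hp0 _
  set S : ℕ → Finset ℤ := fun n => Finset.Icc (0 : ℤ) (A * (p : ℤ) ^ n) with hS
  set Γ : ℕ := ∑ v, γ v with hΓ
  have hγ : ∀ v, γ v ≤ Γ := fun v => Finset.single_le_sum (fun _ _ => Nat.zero_le _) (Finset.mem_univ v)
  set M : ℝ := Real.exp (‖y‖ * ((A + Γ : ℕ) : ℝ)) with hM
  have hM0 : 0 < M := Real.exp_pos _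
  set K : ℝ := ‖y‖ * Γ * Real.exp (‖y‖ * Γ) with hK
  have hK0 : 0 ≤ K := by positivity
  set ℓ : ℕ → ℝ := fun n => ∑ j ∈ S n, a n j with hℓ
  set Φ : ℕ → ℂ := fun n => ∑ j ∈ S n, (a n j : ℂ) * En p y n j with hΦ
  set b : ℕ → ℝ := fun n => ℓ n / q ^ n with hb
  have hℓ0 : ∀ n, 0 ≤ ℓ n := fun n => Finset.sum_nonneg fun j _ => ha0 n j
  have hb0 : ∀ n, 0 ≤ b n := fun n => div_nonneg (hℓ0 n) (by positivity)
  have hasupp' : ∀ n, ∀ j ∉ S n, a n j = 0 := by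
    intro n j hj
    apply hasupp
    simp only [hS, Finset.mem_Icc, not_and_or, not_le] at hj
    exact hj
  have hstep : ∀ n, ‖Φ (n + 1) - q * Φ n‖ ≤
      M * (2 * (C * q ^ n / p ^ n) + q * ℓ n - ℓ (n + 1)) + q * ℓ n * (M * (K / p ^ n)) := by
    intro n
    set U : Finset ℤ := Finset.Icc (0 : ℤ) ((A + Γ : ℕ) * (p : ℤ) ^ (n + 1)) with hU
    have hpz : (1 : ℤ) ≤ (p : ℤ) ^ (n + 1) := by exact_mod_cast Nat.one_le_pow _ _ hp.pos
    have hSU : S (n + 1) ⊆ U := by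
      apply Finset.Icc_subset_Icc le_rfl
      gcongr; simp
    have hsh : ∀ v, ∀ i ∈ S n, (p : ℤ) * i + γ v ∈ U := by
      intro v i hi
      simp only [hS, Finset.mem_Icc] at hi
      rw [hU, Finset.mem_Icc]
      refine ⟨by have := hi.1; positivity, ?_⟩
      have h1 : (p : ℤ) * i ≤ p * (A * (p : ℤ) ^ n) := by gcongr; exact hi.2
      have h2 : (γ v : ℤ) ≤ Γ := by exact_mod_cast hγ v
      have h3 : (Γ : ℤ) ≤ Γ * (p : ℤ) ^ (n + 1) := le_mul_of_one_le_right (by positivity) hpz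
      push_cast
      rw [pow_succ] at *
      nlinarith
    set σ : ℤ → ℝ := fun t => ∑ v, (if (p : ℤ) ∣ t - γ v then a n ((t - γ v) / p) else 0) with hσ
    have hσ1 : ∀ h : ℤ → ℂ, ∑ t ∈ U, (σ t : ℂ) * h t = ∑ v, ∑ i ∈ S n, (a n i : ℂ) * h (p * i + γ v) := by
      intro h
      simp only [hσ, Complex.ofReal_sum, Finset.sum_mul]
      rw [Finset.sum_comm]
      refine Finset.sum_congr rfl fun v _ => ?_
      exact sum_shift hp (γ v) (a n) h (S n) U (hasupp' n) (hsh v)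
    have hσ2 : ∑ t ∈ U, σ t = q * ℓ n := by
      have := hσ1 (fun _ => 1)
      simp only [mul_one, Finset.sum_const, Finset.card_univ, Fintype.card_fin, nsmul_eq_mul] at this
      have h2 : ((∑ t ∈ U, σ t : ℝ) : ℂ) = ((q * ℓ n : ℝ) : ℂ) := by
        push_cast [hℓ, hq]
        push_cast at this
        exact this
      exact_mod_cast h2
    have hΦ1 : Φ (n + 1) = ∑ t ∈ U, (a (n + 1) t : ℂ) * En p y (n + 1) t := by
      refine Finset.sum_subset hSU fun t _ ht => ?_
      rw [hasupp' _ t ht]; simp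
    have hℓ1 : ℓ (n + 1) = ∑ t ∈ U, a (n + 1) t :=
      Finset.sum_subset hSU fun t _ ht => hasupp' _ t ht
    have hqΦ : q * Φ n = ∑ v : Fin (p ^ d), ∑ i ∈ S n, (a n i : ℂ) * En p y n i := by
      simp [hΦ, hq]
    have e1 : Φ (n + 1) - q * Φ n = ∑ t ∈ U, ((a (n + 1) t - σ t : ℝ) : ℂ) * En p y (n + 1) t +
        ∑ v, ∑ i ∈ S n, (a n i : ℂ) * (En p y (n + 1) (p * i + γ v) - En p y n i) := by
      simp only [Complex.ofReal_sub, sub_mul, mul_sub, Finset.sum_sub_distrib]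
      rw [hσ1, hΦ1, hqΦ]
      ring
    have hE : ∀ t ∈ U, ‖En p y (n + 1) t‖ ≤ M := by
      intro t ht
      rw [hU, Finset.mem_Icc] at ht
      exact En_le hp y (n + 1) ht.1 ht.2
    have hE' : ∀ i ∈ S n, ‖En p y n i‖ ≤ M := by
      intro i hi
      simp only [hS, Finset.mem_Icc] at hi
      refine (En_le hp y n hi.1 hi.2).trans (Real.exp_le_exp.2 ?_)
      gcongr; omega
    have b1 : ‖∑ t ∈ U, ((a (n + 1) t - σ t : ℝ) : ℂ) * En p y (n + 1) t‖ ≤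
        M * (2 * (C * q ^ n / p ^ n) + q * ℓ n - ℓ (n + 1)) := by
      calc _ ≤ ∑ t ∈ U, ‖((a (n + 1) t - σ t : ℝ) : ℂ) * En p y (n + 1) t‖ := norm_sum_le _ _
        _ ≤ ∑ t ∈ U, (2 * ω n t + σ t - a (n + 1) t) * M := by
            refine Finset.sum_le_sum fun t ht => ?_
            rw [norm_mul, Complex.norm_real, Real.norm_eq_abs]
            have h1 : |a (n + 1) t - σ t| ≤ 2 * ω n t + σ t - a (n + 1) t := by
              have h2 := hrec n t
              have h3 := hω0 n t
              rw [abs_le]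
              constructor <;> simp only [hσ] <;> linarith
            exact mul_le_mul h1 (hE t ht) (norm_nonneg _) ((abs_nonneg _).trans h1)
        _ = M * (2 * ∑ t ∈ U, ω n t + q * ℓ n - ℓ (n + 1)) := by
            rw [← Finset.sum_mul, Finset.sum_sub_distrib, Finset.sum_add_distrib, ← Finset.mul_sum, hσ2, hℓ1]
            ring
        _ ≤ _ := by
            gcongr
            exact hω n U
    have b2 : ‖∑ v, ∑ i ∈ S n, (a n i : ℂ) * (En p y (n + 1) (p * i + γ v) - En p y n i)‖ ≤
        q * ℓ n * (M * (K / p ^ n)) := by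
      calc _ ≤ ∑ v : Fin (p ^ d), ∑ i ∈ S n, a n i * (M * (K / p ^ n)) := by
            refine norm_sum_le_of_le _ fun v _ => norm_sum_le_of_le _ fun i hi => ?_
            rw [norm_mul, Complex.norm_real, Real.norm_of_nonneg (ha0 n i)]
            refine mul_le_mul_of_nonneg_left ?_ (ha0 n i)
            refine (En_shift hp y n i (γ v) (hγ v)).trans ?_
            exact mul_le_mul_of_nonneg_right (hE' i hi) (by positivity)
        _ = _ := by
            simp only [← Finset.sum_mul, Finset.sum_const, Finset.card_univ, Fintype.card_fin, nsmul_eq_mul, hq, hℓ]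
            push_cast
            ring
    rw [e1]
    exact (norm_add_le _ _).trans (add_le_add b1 b2)
  set F : ℕ → ℂ := fun n => (1 / ((p : ℂ) ^ d) ^ n) * Φ n with hF
  set C' : ℝ := 2 * M * C / q + D * M * K with hC'
  have hC0 : 0 ≤ C := by
    have := hω 0 ∅
    simpa using this
  have hbD : ∀ n, b n ≤ D := by
    intro n
    rw [hb]
    simp only
    rw [div_le_iff₀ (by positivity)]
    exact hD n
  have hdist : ∀ n, dist (F n) (F (n + 1)) ≤ M * (b n - b (n + 1)) + C' * (1 / p) ^ n := by
    intro n
    have hqc : ((p : ℂ) ^ d) = ((q : ℝ) : ℂ) := by rw [hq]; push_cast; rfl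
    have hqc0 : ((q : ℝ) : ℂ) ≠ 0 := by exact_mod_cast hq0.ne'
    rw [dist_comm, dist_eq_norm]
    have e1 : F (n + 1) - F n = (1 / (q : ℂ) ^ (n + 1)) * (Φ (n + 1) - q * Φ n) := by
      simp only [hF, hqc]
      field_simp
      ring
    rw [e1, norm_mul, norm_div, norm_one, norm_pow, Complex.norm_real, Real.norm_of_nonneg hq0.le]
    calc _ ≤ 1 / q ^ (n + 1) * (M * (2 * (C * q ^ n / p ^ n) + q * ℓ n - ℓ (n + 1)) + q * ℓ n * (M * (K / p ^ n))) := by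
          gcongr; exact hstep n
      _ = M * (b n - b (n + 1)) + (2 * M * C / q + b n * M * K) * (1 / p) ^ n := by
          simp only [hb, one_div, inv_pow]
          field_simp
          ring
      _ ≤ _ := by
          rw [hC']
          gcongr
          exact hbD n
  have hD0 : 0 ≤ D := (hb0 0).trans (hbD 0)
  have hgeo : Summable fun n : ℕ => C' * (1 / (p : ℝ)) ^ n :=
    (summable_geometric_of_lt_one (by positivity) (by rw [div_lt_one hp0]; exact hp1)).mul_left _
  have hsum : Summable fun n => dist (F n) (F (n + 1)) := by
    refine summable_of_sum_range_le (c := M * b 0 + ∑' n, C' * (1 / (p : ℝ)) ^ n) (fun n => dist_nonneg) ?_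
    intro n
    calc _ ≤ ∑ i ∈ Finset.range n, (M * (b i - b (i + 1)) + C' * (1 / p) ^ i) :=
          Finset.sum_le_sum fun i _ => hdist i
      _ = M * (b 0 - b n) + ∑ i ∈ Finset.range n, C' * (1 / (p : ℝ)) ^ i := by
          rw [Finset.sum_add_distrib, ← Finset.mul_sum, Finset.sum_range_sub']
      _ ≤ _ := by
          gcongr
          · have := hb0 n; linarith
          · exact hgeo.sum_le_tsum _ (fun i _ => by positivity)
  obtain ⟨L, hL⟩ := cauchySeq_tendsto_of_complete (cauchySeq_of_summable_dist hsum)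
  exact ⟨L, hL⟩

end analytic
end FP

namespace FP

section tele
variable {k R : Type*} [Field k] [CommRing R] [Algebra k R] {𝒜 : ℤ → Submodule k R} [GradedAlgebra 𝒜]
  {p r : ℕ} {x : Fin r → R} {w : Fin r → ℕ} {I : Ideal R} {N : ℕ}

lemma dl_Bs_le (D : Dat p 𝒜 x w I N) {d G : ℕ}
    (hG : ∀ t, dl (Vt k x t) ⊥ ≤ (G * (t + 1) ^ d : ℕ)) {e m : ℕ} (hem : e ≤ m) :
    dl (Bs k p x e) (Iq k p x I e m) ≤ (G * (r * N + 1) ^ d * (p ^ m) ^ d : ℕ) := by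
  calc _ ≤ dl (Wf k p x N e m) (Iq k p x I e m) := dl_le_of_le_sup (Bs_le_Wf D.prime D.hN hem)
    _ ≤ dl (Vt k x (r * N * p ^ m)) ⊥ := dl_mono (Wf_le_Vt hem) bot_le
    _ ≤ _ := hG _
    _ ≤ _ := by
      norm_cast
      rw [mul_assoc G (_ ^ _), ← mul_pow]
      gcongr
      have : 0 < p ^ m := pow_pos D.prime.pos m
      nlinarith

lemma dl_Bs_ne_top (D : Dat p 𝒜 x w I N) {d G : ℕ}
    (hG : ∀ t, dl (Vt k x t) ⊥ ≤ (G * (t + 1) ^ d : ℕ)) {e m : ℕ} (hem : e ≤ m) {X Y : Submodule k R}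
    (hX : X ≤ Bs k p x e) (hY : Iq k p x I e m ≤ Y) : dl X Y ≠ ⊤ :=
  ne_top_of_le_ne_top (ENat.natCast_ne_top _) ((dl_mono hX hY).trans (dl_Bs_le D hG hem))

/-- `p`-th power structure of homogeneous pieces of `B (e+1)` -/
lemma B_succ_degree (D : Dat p 𝒜 x w I N) {e : ℕ} {b : R} {s : ℤ} (hb : b ∈ B k p x (e + 1)) :
    (((p : ℤ) ∣ s) → pr 𝒜 s b ∈ Submodule.span k ((fun a => a ^ p) '' ((Bs k p x e ⊓ 𝒜 (s / p) : Submodule k R) : Set R))) ∧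
      ((¬ (p : ℤ) ∣ s) → pr 𝒜 s b = 0) := by
  have hp0 : (p : ℤ) ≠ 0 := by exact_mod_cast D.prime.ne_zero
  have : b ∈ Bs k p x (e + 1) := hb
  rw [Bs_eq_span] at this
  have hmon : ∀ α : Fin r → ℕ, ∏ i, (x i ^ p ^ (e + 1)) ^ α i = (∏ i, (x i ^ p ^ e) ^ α i) ^ p := by
    intro α
    rw [← Finset.prod_pow]
    refine Finset.prod_congr rfl fun i _ => ?_
    rw [pow_succ, ← pow_mul, ← pow_mul, ← pow_mul]
    ring
  have hdeg : ∀ α : Fin r → ℕ, ∏ i, (x i ^ p ^ (e + 1)) ^ α i ∈ 𝒜 (p * ((∑ i, p ^ e * α i * w i : ℕ) : ℤ)) := by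
    intro α
    rw [hmon]
    have := SetLike.pow_mem_graded p (mon_deg' (p := p) D.hx e α)
    simpa using this
  clear hb
  constructor
  · rintro ⟨s, rfl⟩
    rw [Int.mul_ediv_cancel_left _ hp0]
    induction this using Submodule.span_induction with
    | mem a ha =>
      obtain ⟨α, rfl⟩ := ha
      simp only
      by_cases hs : ((∑ i, p ^ e * α i * w i : ℕ) : ℤ) = s
      · subst hs
        rw [pr_same (hdeg α), hmon]
        exact Submodule.subset_span ⟨_, ⟨mon_mem_B e α, mon_deg' D.hx e α⟩, rfl⟩
      · rw [pr_ne (hdeg α)]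
        · exact zero_mem _
        · intro h; exact hs (mul_left_cancel₀ hp0 h)
    | zero => simp
    | add a b _ _ h1 h2 => rw [map_add]; exact add_mem h1 h2
    | smul c a _ h1 => rw [map_smul]; exact Submodule.smul_mem _ _ h1
  · intro hs
    induction this using Submodule.span_induction with
    | mem a ha =>
      obtain ⟨α, rfl⟩ := ha
      simp only
      rw [pr_ne (hdeg α)]
      rintro rfl
      exact hs (dvd_mul_right _ _)
    | zero => simp
    | add a b _ _ h1 h2 => rw [map_add, h1, h2, add_zero]
    | smul c a _ h1 => rw [map_smul, h1, smul_zero]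

lemma frob_piece (D : Dat p 𝒜 x w I N) (P : Ideal R) {e m : ℕ} {g : R} {γ : ℕ} (hg : g ∈ B k p x e)
    (hgγ : g ∈ 𝒜 γ) (t : ℤ) :
    dl (mulS g (Bs k p x (e + 1)) ⊓ 𝒜 t) (Iq k p x I e (m + 1) ⊔ P.restrictScalars k) ≤
      if (p : ℤ) ∣ t - γ then dl (Bs k p x e ⊓ 𝒜 ((t - γ) / p)) (Iq k p x I e m ⊔ P.restrictScalars k) else 0 := by
  have := Fact.mk D.prime
  have := D.char
  have hel : ∀ z ∈ mulS g (Bs k p x (e + 1)) ⊓ 𝒜 t, ∃ b ∈ B k p x (e + 1), z = g * pr 𝒜 (t - γ) b := by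
    rintro _ ⟨⟨b, hb, rfl⟩, ht⟩
    refine ⟨b, hb, ?_⟩
    rw [← pr_mul_left hgγ, add_sub_cancel]
    exact (pr_same ht).symm
  split_ifs with hd
  · refine dl_frob p g ?_ ?_
    · intro z hz
      obtain ⟨b, hb, rfl⟩ := hel z hz
      have := (B_succ_degree D (s := t - γ) hb).1 hd
      have h2 := Submodule.mem_map_of_mem (f := LinearMap.mulLeft k g) this
      rw [Submodule.map_span, ← Set.image_comp] at h2
      have hfun : (fun a : R => a ^ p * g) = (⇑(LinearMap.mulLeft k g) ∘ fun a => a ^ p) := by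
        funext a; simp [mul_comm]
      rw [hfun]
      exact h2
    · intro a _ ha2
      obtain ⟨u, hu, v, hv, rfl⟩ := Submodule.mem_sup.1 ha2
      rw [add_pow_char, add_mul]
      refine Submodule.add_mem_sup ?_ ?_
      · rw [mul_comm]; exact Iq_mul hg (Iq_pow D.prime D.char hu)
      · exact P.mul_mem_right _ (P.pow_mem_of_mem hv p D.prime.pos)
  · refine le_of_eq (dl_self_of_le ?_)
    intro z hz
    obtain ⟨b, hb, rfl⟩ := hel z hz
    rw [(B_succ_degree D (s := t - γ) hb).2 hd, mul_zero]
    exact zero_mem _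

/-- dimension of the degree `j` piece modulo `P` -/
def tp (k : Type*) {R : Type*} [Field k] [CommRing R] [Algebra k R] (𝒜 : ℤ → Submodule k R)
    (p : ℕ) {r : ℕ} (x : Fin r → R) (I P : Ideal R) (e m : ℕ) (j : ℤ) : ℕ∞ :=
  dl (Bs k p x e ⊓ 𝒜 j) (Iq k p x I e m ⊔ P.restrictScalars k)

lemma tp_support (D : Dat p 𝒜 x w I N) (P : Ideal R) {e m : ℕ} (hem : e ≤ m) {j : ℤ}
    (hj : j < 0 ∨ ((∑ i, N * w i) * p ^ m : ℕ) < j) : tp k 𝒜 p x I P e m j = 0 := by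
  apply dl_self_of_le
  rcases hj with hj | hj
  · rw [D.hneg j hj, inf_bot_eq]; exact bot_le
  · exact (Bs_degree_le D.prime D.hx D.hN hem hj).trans le_sup_left

theorem tele_step (D : Dat p 𝒜 x w I N) {P : Ideal R} (hPh : P.IsHomogeneous 𝒜) (hP : P.IsPrime)
    {d G : ℕ} (hG : ∀ t, dl (Vt k x t) ⊥ ≤ (G * (t + 1) ^ d : ℕ)) {e : ℕ} (hgen : Gen 𝒜 p d x P e) :
    ∃ (γ : Fin (p ^ d) → ℕ) (ω : ℕ → ℤ → ℕ∞) (C : ℕ),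
      (∀ m t, tp k 𝒜 p x I P e (m + 1) t ≤
        ∑ v, (if (p : ℤ) ∣ t - γ v then tp k 𝒜 p x I P e m ((t - γ v) / p) else 0) + ω m t) ∧
      ∀ m, e ≤ m → ∀ s : Finset ℤ, ((p ^ (m + 1) : ℕ) : ℕ∞) * ∑ j ∈ s, ω m j ≤ (C * (p ^ (m + 1)) ^ d : ℕ) := by
  obtain ⟨g, γ, hg, c, hcB, hcP, hb⟩ := hgen
  obtain ⟨C, hC⟩ := small (k := k) (x := x) D.prime D.hN D.hadj hG e (P.restrictScalars k) c hcB
    (fun b _ h => (hP.mem_or_mem h).resolve_left hcP)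
  set S : Submodule k R := ⨆ v, mulS (g v) (Bs k p x (e + 1)) with hS
  have hSH : Hg 𝒜 S := Hg_iSup fun v => Hg_map_mul (Hg_Bs D.hx _) (hg v).2
  have hYH : ∀ m, Hg 𝒜 (Iq k p x I e m ⊔ P.restrictScalars k) := fun m =>
    (Hg_Iq D.prime D.char D.hx D.hI e m).sup (Hg_ideal hPh)
  refine ⟨γ, fun m t => dl (Bs k p x e ⊓ 𝒜 t) (S ⊔ (Iq k p x I e (m + 1) ⊔ P.restrictScalars k)), C, ?_, ?_⟩
  · intro m t
    refine (dl_degree_step hSH (hYH (m + 1)) t).trans ?_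
    gcongr
    have h1 : S ⊓ 𝒜 t ≤ ⨆ v, (mulS (g v) (Bs k p x (e + 1)) ⊓ 𝒜 t) := by
      rintro z ⟨hz, hzt⟩
      rw [← pr_same hzt]
      have : S ≤ (⨆ v, (mulS (g v) (Bs k p x (e + 1)) ⊓ 𝒜 t)).comap (pr 𝒜 t) := by
        refine iSup_le fun v b hb => ?_
        exact (le_iSup (fun v => mulS (g v) (Bs k p x (e + 1)) ⊓ 𝒜 t) v)
          ⟨Hg_map_mul (Hg_Bs D.hx _) (hg v).2 b hb t, pr_mem 𝒜 t b⟩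
      exact this hz
    refine (dl_mono_left h1).trans ((dl_iSup_le _ _).trans (Finset.sum_le_sum fun v _ => ?_))
    exact frob_piece D P (hg v).1 (hg v).2 t
  · intro m hem s
    refine le_trans ?_ (hC (m + 1) (by omega))
    gcongr
    refine (dl_graded_sum_le _ (hSH.sup (hYH (m + 1))) s).trans (dl_anti_right ?_)
    refine sup_le (sup_le ?_ ?_) ?_
    · rintro _ ⟨b, hb', rfl⟩
      obtain ⟨β, hβ, hs⟩ := hb b hb'
      have e1 : LinearMap.mulLeft k c b = ∑ v, g v * β v + (c * b - ∑ v, β v * g v) := by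
        simp only [LinearMap.mulLeft_apply, mul_comm (g _)]; ring
      rw [e1]
      refine Submodule.add_mem_sup (sum_mem fun v _ => ?_) (Submodule.mem_sup_right hs)
      exact (le_iSup (fun v => mulS (g v) (Bs k p x (e + 1))) v) ⟨β v, hβ v, rfl⟩
    · exact le_sup_of_le_right le_sup_left
    · exact le_sup_of_le_right le_sup_right

theorem piece_converge (D : Dat p 𝒜 x w I N) {P : Ideal R} (hPh : P.IsHomogeneous 𝒜) (hP : P.IsPrime)
    {d G : ℕ} (hG : ∀ t, dl (Vt k x t) ⊥ ≤ (G * (t + 1) ^ d : ℕ)) {e : ℕ} (hgen : Gen 𝒜 p d x P e) (y : ℂ) :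
    ∃ L : ℂ, Tendsto (fun n : ℕ => (1 / ((p : ℂ) ^ d) ^ (e + n)) *
      ∑ j ∈ Finset.Icc (0 : ℤ) (((∑ i, N * w i) * p ^ (e + n) : ℕ)),
        ((tp k 𝒜 p x I P e (e + n) j).toNat : ℂ) * En p y (e + n) j) atTop (nhds L) := by
  obtain ⟨γ, ω, C, h1, h2⟩ := tele_step D hPh hP hG hgen
  have hp0 : (0 : ℝ) < p := by exact_mod_cast D.prime.pos
  have hpc : (p : ℂ) ≠ 0 := by exact_mod_cast D.prime.ne_zero
  have hYH : ∀ m, Hg 𝒜 (Iq k p x I e m ⊔ P.restrictScalars k) := fun m =>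
    (Hg_Iq D.prime D.char D.hx D.hI e m).sup (Hg_ideal hPh)
  set A : ℕ := (∑ i, N * w i) * p ^ e with hA
  have hAe : ∀ n : ℕ, (((∑ i, N * w i) * p ^ (e + n) : ℕ) : ℤ) = A * (p : ℤ) ^ n := by
    intro n; rw [hA, pow_add]; push_cast; ring
  have htop : ∀ n j, tp k 𝒜 p x I P e (e + n) j ≠ ⊤ := fun n j =>
    dl_Bs_ne_top D hG (Nat.le_add_right e n) inf_le_left le_sup_left
  have hωtop : ∀ n j, ω (e + n) j ≠ ⊤ := by
    intro n j h
    have := h2 (e + n) (by omega) {j}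
    rw [Finset.sum_singleton, h, ENat.mul_top (by exact_mod_cast (pow_pos D.prime.pos _).ne')] at this
    exact ENat.natCast_ne_top _ (top_le_iff.1 this)
  suffices H : ∃ L : ℂ, Tendsto (fun n : ℕ => (1 / ((p : ℂ) ^ d) ^ n) *
      ∑ j ∈ Finset.Icc (0 : ℤ) (A * (p : ℤ) ^ n),
        ((((tp k 𝒜 p x I P e (e + n) j).toNat : ℝ)) : ℂ) * En p (y / (p : ℂ) ^ e) n j) atTop (nhds L) by
    obtain ⟨L, hL⟩ := H
    refine ⟨1 / ((p : ℂ) ^ d) ^ e * L, ?_⟩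
    refine (hL.const_mul (1 / ((p : ℂ) ^ d) ^ e)).congr fun n => ?_
    rw [hAe, ← mul_assoc]
    congr 1
    · rw [pow_add]; field_simp
    · refine Finset.sum_congr rfl fun j _ => ?_
      unfold En
      rw [pow_add]
      push_cast
      congr 2
      field_simp
  refine converge D.prime d (y / (p : ℂ) ^ e)
    (fun n j => ((tp k 𝒜 p x I P e (e + n) j).toNat : ℝ)) A (fun n j => by positivity) ?_ γ
    (fun n j => ((ω (e + n) j).toNat : ℝ)) (fun n j => by positivity)
    (C * ((p : ℝ) ^ d) ^ (e + 1) / (p : ℝ) ^ (e + 1)) ?_ ?_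
    ((G * (r * N + 1) ^ d : ℕ) * ((p : ℝ) ^ d) ^ e) ?_
  · intro n j hj
    have := tp_support (k := k) (𝒜 := 𝒜) (e := e) D P (Nat.le_add_right e n) (j := j) (by rw [hAe]; exact hj)
    rw [this]; simp
  · intro n s
    have h3 := h2 (e + n) (by omega) s
    have h4 : ∑ j ∈ s, ω (e + n) j = ((∑ j ∈ s, (ω (e + n) j).toNat : ℕ) : ℕ∞) := by
      push_cast
      exact Finset.sum_congr rfl fun j _ => (ENat.natCast_toNat (hωtop n j)).symm
    rw [h4] at h3
    have h5 : p ^ (e + n + 1) * (∑ j ∈ s, (ω (e + n) j).toNat) ≤ C * (p ^ (e + n + 1)) ^ d := by exact_mod_cast h3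
    have h6 : (p : ℝ) ^ (e + n + 1) * (∑ j ∈ s, ((ω (e + n) j).toNat : ℝ)) ≤ C * ((p : ℝ) ^ (e + n + 1)) ^ d := by
      exact_mod_cast h5
    rw [← le_div_iff₀' (by positivity)] at h6
    refine h6.trans (le_of_eq ?_)
    rw [← pow_mul, ← pow_mul, ← pow_mul]
    field_simp
    ring
  · intro n t
    have h3 := h1 (e + n) t
    rw [add_assoc] at h3
    have h4 : ∀ t, (∑ v, (if (p : ℤ) ∣ t - γ v then tp k 𝒜 p x I P e (e + n) ((t - γ v) / p) else 0)) =
        ((∑ v, (if (p : ℤ) ∣ t - γ v then (tp k 𝒜 p x I P e (e + n) ((t - γ v) / p)).toNat else 0) : ℕ) : ℕ∞) := by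
      intro t
      push_cast
      refine Finset.sum_congr rfl fun v _ => ?_
      split_ifs
      · exact (ENat.natCast_toNat (htop n _)).symm
      · rfl
    rw [h4, ← ENat.natCast_toNat (hωtop n t), ← ENat.natCast_toNat (htop (n + 1) t)] at h3
    have h5 : (tp k 𝒜 p x I P e (e + (n + 1)) t).toNat ≤
      (∑ v, (if (p : ℤ) ∣ t - γ v then (tp k 𝒜 p x I P e (e + n) ((t - γ v) / p)).toNat else 0)) +
        (ω (e + n) t).toNat := by exact_mod_cast h3
    exact_mod_cast h5
  · intro n
    have h3 := (dl_graded_sum_le (Bs k p x e) (hYH (e + n)) (Finset.Icc (0 : ℤ) (A * (p : ℤ) ^ n))).trans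
      ((dl_anti_right le_sup_left).trans (dl_Bs_le D hG (Nat.le_add_right e n)))
    have h4 : ∑ j ∈ Finset.Icc (0 : ℤ) (A * (p : ℤ) ^ n), dl (Bs k p x e ⊓ 𝒜 j) (Iq k p x I e (e + n) ⊔ P.restrictScalars k)
        = ((∑ j ∈ Finset.Icc (0 : ℤ) (A * (p : ℤ) ^ n), (tp k 𝒜 p x I P e (e + n) j).toNat : ℕ) : ℕ∞) := by
      push_cast
      exact Finset.sum_congr rfl fun j _ => (ENat.natCast_toNat (htop n j)).symm
    rw [h4] at h3
    have h5 : ∑ j ∈ Finset.Icc (0 : ℤ) (A * (p : ℤ) ^ n), (tp k 𝒜 p x I P e (e + n) j).toNat ≤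
      G * (r * N + 1) ^ d * (p ^ (e + n)) ^ d := by exact_mod_cast h3
    have h6 : ∑ j ∈ Finset.Icc (0 : ℤ) (A * (p : ℤ) ^ n), ((tp k 𝒜 p x I P e (e + n) j).toNat : ℝ) ≤
      ((G * (r * N + 1) ^ d : ℕ) : ℝ) * ((p : ℝ) ^ (e + n)) ^ d := by exact_mod_cast h5
    refine h6.trans (le_of_eq ?_)
    rw [← pow_mul, ← pow_mul, ← pow_mul, mul_assoc, ← pow_add]
    congr 2
    ring

end tele
end FP

namespace FP

section analytic2

lemma En_shift2 {p : ℕ} (hp : p.Prime) (y : ℂ) (n : ℕ) (i : ℤ) (γ : ℕ) {Γ : ℕ} (hγ : γ ≤ Γ) :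
    ‖En p y n (i + γ) - En p y n i‖ ≤
      ‖En p y n i‖ * ((‖y‖ * Γ * Real.exp (‖y‖ * Γ)) / (p : ℝ) ^ n) := by
  have hp1 : (1 : ℝ) ≤ p := by exact_mod_cast hp.one_lt.le
  have hpos : (0 : ℝ) < (p : ℝ) ^ n := pow_pos (by exact_mod_cast hp.pos) _
  set z : ℂ := -Complex.I * y * γ / (p : ℂ) ^ n with hz
  have e1 : En p y n (i + γ) = En p y n i * Complex.exp z := by
    unfold En
    rw [← Complex.exp_add]
    congr 1
    rw [hz]
    push_cast
    ring
  have hzn : ‖z‖ ≤ ‖y‖ * Γ / (p : ℝ) ^ n := by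
    rw [hz, norm_div, norm_mul, norm_mul, norm_neg, Complex.norm_I, one_mul, norm_pow, Complex.norm_natCast,
      Complex.norm_natCast]
    gcongr
  have hzn' : ‖z‖ ≤ ‖y‖ * Γ := hzn.trans (div_le_self (by positivity) (one_le_pow₀ hp1))
  have h2 : ‖Complex.exp z - 1‖ ≤ ‖z‖ * Real.exp ‖z‖ := by
    have := Complex.norm_exp_sub_sum_le_norm_mul_exp z 1
    simpa using this
  rw [e1, ← mul_sub_one, norm_mul]
  gcongr
  calc _ ≤ _ := h2
    _ ≤ (‖y‖ * Γ / (p : ℝ) ^ n) * Real.exp (‖y‖ * Γ) := by gcongr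
    _ = _ := by ring

lemma compare_one {p : ℕ} (hp : p.Prime) {Λ : Type*} [Fintype Λ] (y : ℂ) (n A : ℕ) (a ω : ℤ → ℝ)
    (b : Λ → ℤ → ℝ) (γ : Λ → ℕ)
    (hb0 : ∀ l j, 0 ≤ b l j)
    (hasupp : ∀ j, (j < 0 ∨ (A * (p : ℤ) ^ n) < j) → a j = 0)
    (hbsupp : ∀ l j, (j < 0 ∨ (A * (p : ℤ) ^ n) < j) → b l j = 0)
    (hω0 : ∀ j, 0 ≤ ω j) (E1 E2 : ℝ) (hω : ∀ s : Finset ℤ, ∑ j ∈ s, ω j ≤ E1)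
    (h1 : ∀ j, a j ≤ ∑ l, b l (j - γ l) + ω j)
    (h2 : ∑ l, ∑ j ∈ Finset.Icc (0 : ℤ) (A * (p : ℤ) ^ n), b l j ≤
      ∑ j ∈ Finset.Icc (0 : ℤ) (A * (p : ℤ) ^ n), a j + E2) :
    ‖∑ j ∈ Finset.Icc (0 : ℤ) (A * (p : ℤ) ^ n), (a j : ℂ) * En p y n j -
      ∑ l, ∑ j ∈ Finset.Icc (0 : ℤ) (A * (p : ℤ) ^ n), (b l j : ℂ) * En p y n j‖ ≤
    Real.exp (‖y‖ * ((A + ∑ l, γ l : ℕ) : ℝ)) * (2 * E1 + E2) +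
      (∑ l, ∑ j ∈ Finset.Icc (0 : ℤ) (A * (p : ℤ) ^ n), b l j) *
        (Real.exp (‖y‖ * ((A + ∑ l, γ l : ℕ) : ℝ)) *
          (‖y‖ * (∑ l, γ l : ℕ) * Real.exp (‖y‖ * (∑ l, γ l : ℕ)) / (p : ℝ) ^ n)) := by
  set Γ : ℕ := ∑ l, γ l with hΓ
  have hγ : ∀ v, γ v ≤ Γ := fun v => Finset.single_le_sum (fun _ _ => Nat.zero_le _) (Finset.mem_univ v)
  set M : ℝ := Real.exp (‖y‖ * ((A + Γ : ℕ) : ℝ)) with hM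
  have hM0 : 0 < M := Real.exp_pos _
  set K : ℝ := ‖y‖ * Γ * Real.exp (‖y‖ * Γ) with hK
  have hK0 : 0 ≤ K := by positivity
  set S : Finset ℤ := Finset.Icc (0 : ℤ) (A * (p : ℤ) ^ n) with hS
  set U : Finset ℤ := Finset.Icc (0 : ℤ) ((A + Γ : ℕ) * (p : ℤ) ^ n) with hU
  have hpz : (1 : ℤ) ≤ (p : ℤ) ^ n := by exact_mod_cast Nat.one_le_pow _ _ hp.pos
  have hpos : (0 : ℝ) < (p : ℝ) ^ n := pow_pos (by exact_mod_cast hp.pos) _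
  have hSU : S ⊆ U := by
    apply Finset.Icc_subset_Icc le_rfl
    gcongr; simp
  have haS : ∀ j ∉ S, a j = 0 := by
    intro j hj
    apply hasupp
    simp only [hS, Finset.mem_Icc, not_and_or, not_le] at hj
    exact hj
  have hbS : ∀ l, ∀ j ∉ S, b l j = 0 := by
    intro l j hj
    apply hbsupp
    simp only [hS, Finset.mem_Icc, not_and_or, not_le] at hj
    exact hj
  have hsh : ∀ v, ∀ i ∈ S, i + γ v ∈ U := by
    intro v i hi
    simp only [hS, Finset.mem_Icc] at hi
    rw [hU, Finset.mem_Icc]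
    refine ⟨by have := hi.1; positivity, ?_⟩
    have h2 : (γ v : ℤ) ≤ Γ := by exact_mod_cast hγ v
    have h3 : (Γ : ℤ) ≤ Γ * (p : ℤ) ^ n := le_mul_of_one_le_right (by positivity) hpz
    push_cast
    linarith [hi.2]
  set σ : ℤ → ℝ := fun t => ∑ l, b l (t - γ l) with hσ
  have hσ1 : ∀ h : ℤ → ℂ, ∑ t ∈ U, (σ t : ℂ) * h t = ∑ v, ∑ i ∈ S, (b v i : ℂ) * h (i + γ v) := by
    intro h
    simp only [hσ, Complex.ofReal_sum, Finset.sum_mul]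
    rw [Finset.sum_comm]
    refine Finset.sum_congr rfl fun v _ => ?_
    symm
    refine Finset.sum_of_injOn (fun i => i + (γ v : ℤ)) ?_ ?_ ?_ ?_
    · intro a _ b _ hab
      simpa using hab
    · intro i hi; exact hsh v i hi
    · intro t _ ht
      have : t - γ v ∉ S := fun hiS => ht ⟨_, hiS, by simp⟩
      rw [hbS v _ this]; simp
    · intro i _
      simp
  have hσ2 : ∑ t ∈ U, σ t = ∑ l, ∑ j ∈ S, b l j := by
    have := hσ1 (fun _ => 1)
    simp only [mul_one] at this
    exact_mod_cast this
  have hΦ1 : ∑ t ∈ S, (a t : ℂ) * En p y n t = ∑ t ∈ U, (a t : ℂ) * En p y n t := by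
    refine Finset.sum_subset hSU fun t _ ht => ?_
    rw [haS t ht]; simp
  have hℓ1 : ∑ t ∈ S, a t = ∑ t ∈ U, a t :=
    Finset.sum_subset hSU fun t _ ht => haS t ht
  have e1 : ∑ t ∈ S, (a t : ℂ) * En p y n t - ∑ l, ∑ j ∈ S, (b l j : ℂ) * En p y n j =
      ∑ t ∈ U, ((a t - σ t : ℝ) : ℂ) * En p y n t +
      ∑ v, ∑ i ∈ S, (b v i : ℂ) * (En p y n (i + γ v) - En p y n i) := by
    simp only [Complex.ofReal_sub, sub_mul, mul_sub, Finset.sum_sub_distrib]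
    rw [hσ1, hΦ1]
    ring
  have hE : ∀ t ∈ U, ‖En p y n t‖ ≤ M := by
    intro t ht
    rw [hU, Finset.mem_Icc] at ht
    exact En_le hp y n ht.1 ht.2
  have b1 : ‖∑ t ∈ U, ((a t - σ t : ℝ) : ℂ) * En p y n t‖ ≤ M * (2 * E1 + E2) := by
    calc _ ≤ ∑ t ∈ U, ‖((a t - σ t : ℝ) : ℂ) * En p y n t‖ := norm_sum_le _ _
      _ ≤ ∑ t ∈ U, (2 * ω t + σ t - a t) * M := by
          refine Finset.sum_le_sum fun t ht => ?_
          rw [norm_mul, Complex.norm_real, Real.norm_eq_abs]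
          have h1 : |a t - σ t| ≤ 2 * ω t + σ t - a t := by
            have h2 := h1 t
            have h3 := hω0 t
            rw [abs_le]
            constructor <;> simp only [hσ] <;> linarith
          exact mul_le_mul h1 (hE t ht) (norm_nonneg _) ((abs_nonneg _).trans h1)
      _ = M * (2 * ∑ t ∈ U, ω t + ∑ l, ∑ j ∈ S, b l j - ∑ j ∈ S, a j) := by
          rw [← Finset.sum_mul, Finset.sum_sub_distrib, Finset.sum_add_distrib, ← Finset.mul_sum, hσ2, hℓ1]
          ring
      _ ≤ _ := by
          gcongr
          linarith [hω U]
  have b2 : ‖∑ v, ∑ i ∈ S, (b v i : ℂ) * (En p y n (i + γ v) - En p y n i)‖ ≤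
      (∑ l, ∑ j ∈ S, b l j) * (M * (K / p ^ n)) := by
    calc _ ≤ ∑ v, ∑ i ∈ S, b v i * (M * (K / p ^ n)) := by
          refine norm_sum_le_of_le _ fun v _ => norm_sum_le_of_le _ fun i hi => ?_
          rw [norm_mul, Complex.norm_real, Real.norm_of_nonneg (hb0 v i)]
          refine mul_le_mul_of_nonneg_left ?_ (hb0 v i)
          refine (En_shift2 hp y n i (γ v) (hγ v)).trans ?_
          exact mul_le_mul_of_nonneg_right (hE i (hSU hi)) (by positivity)
      _ = _ := by
          simp only [← Finset.sum_mul]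
  rw [e1]
  exact (norm_add_le _ _).trans (add_le_add b1 b2)

end analytic2
end FP

namespace FP

section decomp
universe u v
variable {k : Type u} {R : Type v} [Field k] [CommRing R] [Algebra k R] {𝒜 : ℤ → Submodule k R} [GradedAlgebra 𝒜]
  {p r : ℕ} {x : Fin r → R} {w : Fin r → ℕ} {I : Ideal R} {N : ℕ}

/-- Frobenius power as a subspace -/
def br (k : Type*) {R : Type*} [Field k] [CommRing R] [Algebra k R] (I : Ideal R) (q : ℕ) : Submodule k R :=
  (Ideal.span ((fun x : R => x ^ q) '' (I : Set R))).restrictScalars k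

/-- generically `R` is a direct sum of the `B e / P l`. -/
structure Dec (k : Type*) {R : Type*} [Field k] [CommRing R] [Algebra k R] (𝒜 : ℤ → Submodule k R)
    (p : ℕ) {r : ℕ} (x : Fin r → R) (e : ℕ) {Λ : Type*} [Fintype Λ] (m : Λ → R) (P : Λ → Ideal R)
    (γ : Λ → ℕ) (c : R) : Prop where
  hP : ∀ l, P l ∈ minimalPrimes R
  hm : ∀ l, m l ∈ 𝒜 (γ l)
  hcB : c ∈ B k p x e
  hc : ∀ Q ∈ minimalPrimes R, c ∉ Q
  ann : ∀ l, ∀ b ∈ B k p x e, b ∈ P l → b * m l = 0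
  indep : ∀ β : Λ → R, (∀ l, β l ∈ B k p x e) → ∑ l, β l * m l = 0 → ∀ l, β l ∈ P l
  gen : ∀ z : R, ∃ β : Λ → R, (∀ l, β l ∈ B k p x e) ∧ c * z = ∑ l, β l * m l

theorem exists_dec [IsNoetherianRing R] (D : Dat p 𝒜 x w I N) {e : ℕ}
    (hred : ∀ b ∈ B k p x e, IsNilpotent b → b = 0) :
    ∃ (Λ : Type v) (_ : Fintype Λ) (m : Λ → R) (P : Λ → Ideal R) (γ : Λ → ℕ) (c : R),
      Dec k 𝒜 p x e m P γ c := by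
  classical
  have hfin : (minimalPrimes R).Finite := minimalPrimes.finite_of_isNoetherianRing R
  have : Fintype (minimalPrimes R) := hfin.fintype
  choose s j hsj hsP hsQ using fun i : minimalPrimes R => exists_sep (𝒜 := 𝒜) i.2
  have hj0 : ∀ i, 0 ≤ j i := by
    intro i
    by_contra h
    have h1 := hsj i
    rw [D.hneg _ (not_le.1 h), Submodule.mem_bot] at h1
    exact hsP i (h1 ▸ zero_mem _)
  have hpr : ∀ i : minimalPrimes R, (i : Ideal R).IsPrime := fun i => i.2.1.1
  let mm : (minimalPrimes R) × (Fin r → Fin (p ^ e)) → R := fun v => s v.1 ^ p ^ e * ∏ i, x i ^ (v.2 i : ℕ)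
  have hpe : p ^ e ≠ 0 := (pow_pos D.prime.pos _).ne'
  have hsB : ∀ i, s i ^ p ^ e ∈ B k p x e := fun i => pow_mem_B D.prime D.char D.hadj e _
  have hann : ∀ i : minimalPrimes R, ∀ b ∈ B k p x e, b ∈ (i : Ideal R) → b * s i ^ p ^ e = 0 := by
    intro i b hb hbi
    apply hred _ (mul_mem hb (hsB i))
    apply nilp_of_mem
    intro Q hQ
    by_cases hQi : Q = i
    · subst hQi; exact Ideal.mul_mem_right _ _ hbi
    · exact Ideal.mul_mem_left _ _ (Ideal.pow_mem_of_mem _ (hsQ i Q hQ hQi) _ (Nat.pos_of_ne_zero hpe))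
  have hann' : ∀ v : (minimalPrimes R) × (Fin r → Fin (p ^ e)), ∀ b ∈ B k p x e, b ∈ (v.1 : Ideal R) → b * mm v = 0 := by
    intro v b hb hbv
    simp only [mm]
    rw [← mul_assoc, hann v.1 b hb hbv, zero_mul]
  obtain ⟨T, hT, hT2⟩ := max_indep (B k p x e) mm (fun v => (v.1 : Ideal R)) (fun v => (hpr v.1).ne_top) ⊥
    (fun v a ha hav => by rw [Ideal.mem_bot]; exact hann' v a ha hav)
  choose t htB htP β hβB hβ using hT2
  set c : R := ∑ i : minimalPrimes R, (∏ u, t (i, u)) * s i ^ p ^ e with hc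
  refine ⟨T, inferInstance, fun l => mm l.1, fun l => l.1.1,
    fun l => p ^ e * (j l.1.1).toNat + ∑ i, (l.1.2 i : ℕ) * w i, c, ?_⟩
  refine ⟨fun l => l.1.1.2, ?_, ?_, ?_, ?_, ?_, ?_⟩
  · intro l
    have h1 := SetLike.pow_mem_graded (A := 𝒜) (p ^ e) (hsj l.1.1)
    have h2 := SetLike.mul_mem_graded h1 (mon_deg D.hx (fun i => (l.1.2 i : ℕ)))
    convert h2 using 2
    push_cast
    rw [Int.toNat_of_nonneg (hj0 _)]
    simp
  · exact sum_mem fun i _ => mul_mem (prod_mem fun u _ => htB _) (hsB i)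
  · intro Q hQ hcQ
    have hQp : Q.IsPrime := hQ.1.1
    rw [hc, ← Finset.add_sum_erase _ _ (Finset.mem_univ (⟨Q, hQ⟩ : minimalPrimes R))] at hcQ
    have h1 : ∑ i ∈ Finset.univ.erase (⟨Q, hQ⟩ : minimalPrimes R), (∏ u, t (i, u)) * s i ^ p ^ e ∈ Q := by
      refine sum_mem fun i hi => Ideal.mul_mem_left _ _ (Ideal.pow_mem_of_mem _ (hsQ i Q hQ ?_) _ (Nat.pos_of_ne_zero hpe))
      intro h
      exact (Finset.mem_erase.1 hi).1 (Subtype.ext h.symm)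
    have h2 := (Ideal.add_mem_iff_left Q h1).1 hcQ
    rcases hQp.mem_or_mem h2 with h3 | h3
    · obtain ⟨u, -, hu⟩ := (hQp.prod_mem_iff).1 h3
      exact htP (⟨Q, hQ⟩, u) hu
    · exact hsP ⟨Q, hQ⟩ (hQp.mem_of_pow_mem _ h3)
  · intro l b hb hbl
    exact hann' l b hb hbl
  · intro b hb hs l
    have := hT (fun v => if h : v ∈ T then b ⟨v, h⟩ else 0) ?_ ?_ l l.2
    · simpa using this
    · intro v; split_ifs
      · exact hb _
      · exact zero_mem _
    · rw [Ideal.mem_bot, ← hs, ← Finset.sum_coe_sort T]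
      refine Finset.sum_congr rfl fun v _ => ?_
      simp
  · intro z
    obtain ⟨b, hb, hz⟩ := B_decomp (k := k) (x := x) D.prime 0 e (b := z) (by rw [B_zero D.hadj]; trivial)
    simp only [zero_add, pow_zero, pow_one] at hb hz
    refine ⟨fun l => ∑ i : minimalPrimes R, ∑ u, b u * (∏ u' ∈ Finset.univ.erase u, t (i, u')) * β (i, u) l, ?_, ?_⟩
    · intro l
      exact sum_mem fun i _ => sum_mem fun u _ => mul_mem (mul_mem (hb u) (prod_mem fun _ _ => htB _)) (hβB _ _)
    · have h1 : ∀ v, t v * mm v = ∑ l : T, β v l * mm l := by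
        intro v
        have := hβ v
        rw [Ideal.mem_bot, sub_eq_zero] at this
        rw [this, ← Finset.sum_coe_sort T]
      have h2 : ∀ i u, (∏ u, t (i, u)) * s i ^ p ^ e * (b u * ∏ i, x i ^ (u i : ℕ)) =
          ∑ l : T, b u * (∏ u' ∈ Finset.univ.erase u, t (i, u')) * β (i, u) l * mm l := by
        intro i u
        have h3 := h1 (i, u)
        simp only [mul_assoc, ← Finset.mul_sum]
        rw [← h3, ← Finset.mul_prod_erase _ _ (Finset.mem_univ u)]
        simp only [mm]
        ring
      rw [hc, hz, Finset.sum_mul]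
      simp only [Finset.mul_sum, h2, Finset.sum_mul]
      rw [Finset.sum_comm (s := (Finset.univ : Finset T))]
      refine Finset.sum_congr rfl fun i _ => ?_
      rw [Finset.sum_comm]

lemma Iq_le_br {e m : ℕ} : Iq k p x I e m ≤ br k I (p ^ m) := fun _ hy => Iq_le_bracket hy

lemma mul_mem_br {q : ℕ} {a b : R} (h : b ∈ br k I q) : a * b ∈ br k I q :=
  Ideal.mul_mem_left _ a h

lemma dl_top_le (D : Dat p 𝒜 x w I N) (e m : ℕ) (c : R) :
    dl ⊤ (mulS c ⊤ ⊔ br k I (p ^ m)) ≤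
      ((p ^ e) ^ r : ℕ) * dl (Bs k p x e) (mulS c (Bs k p x e) ⊔ Iq k p x I e m) := by
  classical
  have h1 : (⊤ : Submodule k R) ≤ ⨆ u : Fin r → Fin (p ^ e), mulS (∏ i, x i ^ (u i : ℕ)) (Bs k p x e) := by
    intro z _
    obtain ⟨b, hb, hz⟩ := B_decomp (k := k) (x := x) D.prime 0 e (b := z) (by rw [B_zero D.hadj]; trivial)
    simp only [zero_add, pow_zero, pow_one] at hb hz
    rw [hz]
    refine sum_mem fun u _ => ?_
    rw [mul_comm]
    exact (le_iSup (fun u : Fin r → Fin (p ^ e) => mulS (∏ i, x i ^ (u i : ℕ)) (Bs k p x e)) u) ⟨b u, hb u, rfl⟩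
  refine (dl_mono_left h1).trans ((dl_iSup_le _ _).trans ?_)
  calc _ ≤ ∑ u : Fin r → Fin (p ^ e), dl (Bs k p x e) (mulS c (Bs k p x e) ⊔ Iq k p x I e m) := by
        refine Finset.sum_le_sum fun u _ => dl_map_le _ ?_
        intro b hb hb2
        obtain ⟨_, ⟨a, ha, rfl⟩, z, hz, rfl⟩ := Submodule.mem_sup.1 hb2
        rw [map_add]
        refine Submodule.add_mem_sup ?_ ?_
        · refine ⟨(∏ i, x i ^ (u i : ℕ)) * a, trivial, ?_⟩
          simp only [LinearMap.mulLeft_apply]; ring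
        · exact mul_mem_br (Iq_le_br hz)
    _ = _ := by simp

variable {Λ : Type*} [Fintype Λ] {m : Λ → R} {P : Λ → Ideal R} {γ : Λ → ℕ} {c : R}

lemma Hg_br (hp : p.Prime) (hc : CharP R p) (hI : Ideal.IsHomogeneous 𝒜 I) (n : ℕ) : Hg 𝒜 (br k I (p ^ n)) := by
  have := Fact.mk hp
  have : br k I (p ^ n) = (Ideal.span ((fun z : R => z ^ p ^ n) '' {z | z ∈ I ∧ ∃ j, z ∈ 𝒜 j})).restrictScalars k := by
    unfold br
    congr 1
    apply le_antisymm
    · rw [Ideal.span_le]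
      rintro _ ⟨z, hz, rfl⟩
      simp only
      obtain ⟨s, hs⟩ := exists_sum_pr 𝒜 z
      rw [hs, sum_pow_char_pow]
      refine sum_mem fun j _ => Ideal.subset_span ⟨_, ⟨?_, j, pr_mem 𝒜 j z⟩, rfl⟩
      rw [pr_apply]; exact hI j hz
    · apply Ideal.span_mono
      apply Set.image_mono
      exact fun z hz => hz.1
  rw [this]
  apply Hg_ideal
  apply Ideal.homogeneous_span
  rintro _ ⟨z, ⟨_, j, hj⟩, rfl⟩
  exact ⟨_, SetLike.pow_mem_graded _ hj⟩

/-- the pointwise inequality -/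
lemma dec_upper (D : Dat p 𝒜 x w I N) {e : ℕ} (hd : Dec k 𝒜 p x e m P γ c) {n : ℕ} (hen : e ≤ n) (j : ℤ) :
    dl (𝒜 j) (br k I (p ^ n)) ≤ ∑ l, tp k 𝒜 p x I (P l) e n (j - γ l) +
      dl (⊤ ⊓ 𝒜 j) ((⨆ l, mulS (m l) (Bs k p x e)) ⊔ br k I (p ^ n)) := by
  have hSH : Hg 𝒜 (⨆ l, mulS (m l) (Bs k p x e)) := Hg_iSup fun l => Hg_map_mul (Hg_Bs D.hx _) (hd.hm l)
  have h := dl_degree_step (X := ⊤) hSH (Hg_br (k := k) D.prime D.char D.hI n) j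
  rw [top_inf_eq] at h
  rw [top_inf_eq]
  refine h.trans ?_
  gcongr
  have h1 : (⨆ l, mulS (m l) (Bs k p x e)) ⊓ 𝒜 j ≤ ⨆ l, mulS (m l) (Bs k p x e ⊓ 𝒜 (j - γ l)) := by
    rintro z ⟨hz, hzt⟩
    rw [← pr_same hzt]
    have : (⨆ l, mulS (m l) (Bs k p x e)) ≤ (⨆ l, mulS (m l) (Bs k p x e ⊓ 𝒜 (j - γ l))).comap (pr 𝒜 j) := by
      refine iSup_le fun l => ?_
      rintro _ ⟨b, hb, rfl⟩
      refine (le_iSup (fun l => mulS (m l) (Bs k p x e ⊓ 𝒜 (j - γ l))) l)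
        ⟨pr 𝒜 (j - γ l) b, ⟨Hg_Bs D.hx e b hb _, pr_mem 𝒜 _ b⟩, ?_⟩
      simp only [LinearMap.mulLeft_apply]
      rw [← pr_mul_left (hd.hm l), add_sub_cancel]
    exact this hz
  refine (dl_mono_left h1).trans ((dl_iSup_le _ _).trans (Finset.sum_le_sum fun l _ => ?_))
  refine dl_map_le _ ?_
  rintro b ⟨hb, -⟩ hb2
  obtain ⟨u, hu, v, hv, rfl⟩ := Submodule.mem_sup.1 hb2
  have huB := Iq_le_Bs D.prime D.char D.hadj hen hu
  have hvB : v ∈ Bs k p x e := by simpa using sub_mem hb huB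
  have h0 := hd.ann l v hvB hv
  have e1 : LinearMap.mulLeft k (m l) (u + v) = m l * u := by
    simp only [LinearMap.mulLeft_apply, mul_add, mul_comm (m l) v, h0, add_zero]
  rw [e1]
  exact mul_mem_br (Iq_le_br hu)

lemma dec_err (D : Dat p 𝒜 x w I N) {e : ℕ} (hd : Dec k 𝒜 p x e m P γ c) {n : ℕ} (s : Finset ℤ) :
    ∑ j ∈ s, dl (⊤ ⊓ 𝒜 j) ((⨆ l, mulS (m l) (Bs k p x e)) ⊔ br k I (p ^ n)) ≤
      ((p ^ e) ^ r : ℕ) * dl (Bs k p x e) (mulS c (Bs k p x e) ⊔ Iq k p x I e n) := by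
  have hSH : Hg 𝒜 (⨆ l, mulS (m l) (Bs k p x e)) := Hg_iSup fun l => Hg_map_mul (Hg_Bs D.hx _) (hd.hm l)
  refine (dl_graded_sum_le ⊤ (hSH.sup (Hg_br D.prime D.char D.hI n)) s).trans (le_trans ?_ (dl_top_le D e n c))
  apply dl_anti_right
  refine sup_le_sup_right ?_ _
  rintro _ ⟨z, -, rfl⟩
  obtain ⟨β, hβ, hz⟩ := hd.gen z
  rw [LinearMap.mulLeft_apply, hz]
  refine sum_mem fun l _ => ?_
  rw [mul_comm]
  exact (le_iSup (fun l => mulS (m l) (Bs k p x e)) l) ⟨β l, hβ l, rfl⟩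

lemma dec_lower (D : Dat p 𝒜 x w I N) {e : ℕ} (hd : Dec k 𝒜 p x e m P γ c) {n : ℕ} (hen : e ≤ n) :
    ∑ l, dl (Bs k p x e) (Iq k p x I e n ⊔ (P l).restrictScalars k) ≤ dl ⊤ (br k I (p ^ n)) +
      (Fintype.card Λ : ℕ) * dl (Bs k p x e) (mulS c (Bs k p x e) ⊔ Iq k p x I e n) := by
  classical
  set G : Submodule k R := ⨆ l, mulS (m l) (Iq k p x I e n) with hG
  have hIB := Iq_le_Bs (k := k) D.prime D.char D.hadj (I := I) hen
  -- independence
  have step1 : ∀ T : Finset Λ, ∑ l ∈ T, dl (Bs k p x e) (Iq k p x I e n ⊔ (P l).restrictScalars k) ≤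
      dl (T.sup fun l => mulS (m l) (Bs k p x e)) G := by
    intro T
    induction T using Finset.induction_on with
    | empty => simp
    | insert t T ht ih =>
      rw [Finset.sum_insert ht, Finset.sup_insert, dl_sup, add_comm]
      refine add_le_add ih ?_
      refine dl_le_map _ ?_
      intro b hb hb2
      let E : Submodule k R :=
        { carrier := {z | ∃ β : Λ → R, (∀ l, β l ∈ Bs k p x e) ∧ β t ∈ Iq k p x I e n ∧ z = ∑ l, β l * m l}
          add_mem' := by
            rintro _ _ ⟨β, h1, h2, rfl⟩ ⟨β', h1', h2', rfl⟩
            exact ⟨β + β', fun l => add_mem (h1 l) (h1' l), add_mem h2 h2', by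
              simp [add_mul, Finset.sum_add_distrib]⟩
          zero_mem' := ⟨0, fun l => zero_mem _, zero_mem _, by simp⟩
          smul_mem' := by
            rintro a _ ⟨β, h1, h2, rfl⟩
            exact ⟨a • β, fun l => Submodule.smul_mem _ _ (h1 l), Submodule.smul_mem _ _ h2, by
              simp [Finset.smul_sum]⟩ }
      have hsingle : ∀ l, ∀ b ∈ Bs k p x e, (l = t → b ∈ Iq k p x I e n) → m l * b ∈ E := by
        intro l b hb h
        refine ⟨fun l' => if l' = l then b else 0, ?_, ?_, ?_⟩
        · intro l'; dsimp only; split_ifs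
          · exact hb
          · exact zero_mem _
        · dsimp only; split_ifs with h'
          · exact h h'.symm
          · exact zero_mem _
        · simp [mul_comm]
      have hle : (T.sup fun l => mulS (m l) (Bs k p x e)) ⊔ G ≤ E := by
        refine sup_le (Finset.sup_le fun l hl => ?_) (iSup_le fun l => ?_)
        · rintro _ ⟨b, hb, rfl⟩
          exact hsingle l b hb fun h => absurd (h ▸ hl) ht
        · rintro _ ⟨b, hb, rfl⟩
          exact hsingle l b (hIB hb) fun _ => hb
      obtain ⟨β, h1, h2, h3⟩ := hle hb2
      have h4 := hd.indep (β - fun l' => if l' = t then b else 0) ?_ ?_ t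
      · have : b = β t + (-(β t - b)) := by ring
        rw [this]
        refine Submodule.add_mem_sup h2 ?_
        exact (P t).neg_mem (by simpa using h4)
      · intro l'
        refine sub_mem (h1 l') ?_
        dsimp only; split_ifs
        · exact hb
        · exact zero_mem _
      · simp only [Pi.sub_apply, sub_mul, Finset.sum_sub_distrib, ← h3]
        simp [mul_comm]
  set F : Submodule k R := ⨆ l, mulS (m l) (Bs k p x e) with hF
  have h1 := step1 Finset.univ
  rw [Finset.sup_univ_eq_iSup] at h1
  have hcG : ∀ z ∈ br k I (p ^ n), c * z ∈ G := by
    intro z hz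
    obtain ⟨β, hβ, rfl⟩ := bracket_decomp (k := k) D.prime D.hadj e n hz
    rw [Finset.mul_sum]
    refine sum_mem fun u _ => ?_
    obtain ⟨β', hβ', h⟩ := hd.gen (∏ i, x i ^ (u i : ℕ))
    have : c * (β u * ∏ i, x i ^ (u i : ℕ)) = ∑ l, m l * (β' l * β u) := by
      rw [mul_left_comm, h, Finset.mul_sum]
      exact Finset.sum_congr rfl fun l _ => by ring
    rw [this]
    exact sum_mem fun l _ => (le_iSup (fun l => mulS (m l) (Iq k p x I e n)) l) ⟨_, Iq_mul (hβ' l) (hβ u), rfl⟩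
  refine h1.trans ((dl_tower F (mulS c F) G).trans (add_le_add ?_ ?_))
  · refine (dl_map_le (Y := br k I (p ^ n)) _ ?_).trans (dl_mono_left le_top)
    intro z _ hz
    exact hcG z hz
  · refine (dl_iSup_le _ _).trans ?_
    calc _ ≤ ∑ l : Λ, dl (Bs k p x e) (mulS c (Bs k p x e) ⊔ Iq k p x I e n) := by
          refine Finset.sum_le_sum fun l _ => dl_map_le _ ?_
          intro b hb hb2
          obtain ⟨_, ⟨a, ha, rfl⟩, z, hz, rfl⟩ := Submodule.mem_sup.1 hb2
          rw [map_add]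
          refine Submodule.add_mem_sup ?_ ?_
          · refine ⟨m l * a, (le_iSup (fun l => mulS (m l) (Bs k p x e)) l) ⟨a, ha, rfl⟩, ?_⟩
            simp only [LinearMap.mulLeft_apply]; ring
          · exact (le_iSup (fun l => mulS (m l) (Iq k p x I e n)) l) ⟨z, hz, rfl⟩
      _ = _ := by simp

end decomp
end FP

namespace FP

section conv
variable {k R : Type*} [Field k] [CommRing R] [Algebra k R] {𝒜 : ℤ → Submodule k R} [GradedAlgebra 𝒜]
  {p r : ℕ} {x : Fin r → R} {w : Fin r → ℕ} {I : Ideal R} {N : ℕ}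

lemma Bs_zero (D : Dat p 𝒜 x w I N) : Bs k p x 0 = ⊤ := by
  unfold Bs
  rw [B_zero D.hadj]; rfl

lemma br_support (D : Dat p 𝒜 x w I N) {n : ℕ} {j : ℤ}
    (hj : j < 0 ∨ ((∑ i, N * w i) * p ^ n : ℕ) < j) : 𝒜 j ≤ br k I (p ^ n) := by
  rcases hj with hj | hj
  · rw [D.hneg j hj]; exact bot_le
  · have := (Bs_degree_le (k := k) D.prime D.hx D.hN (Nat.zero_le n) hj).trans Iq_le_br
    rwa [Bs_zero D, top_inf_eq] at this

lemma dl_top_br_le (D : Dat p 𝒜 x w I N) {d G : ℕ}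
    (hG : ∀ t, dl (Vt k x t) ⊥ ≤ (G * (t + 1) ^ d : ℕ)) (n : ℕ) :
    dl ⊤ (br k I (p ^ n)) ≤ (G * (r * N + 1) ^ d * (p ^ n) ^ d : ℕ) := by
  have := dl_Bs_le D hG (Nat.zero_le n)
  rw [Bs_zero D] at this
  exact (dl_anti_right Iq_le_br).trans this

lemma dl_br_ne_top (D : Dat p 𝒜 x w I N) {d G : ℕ}
    (hG : ∀ t, dl (Vt k x t) ⊥ ≤ (G * (t + 1) ^ d : ℕ)) (n : ℕ) {X Y : Submodule k R} (hY : br k I (p ^ n) ≤ Y) :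
    dl X Y ≠ ⊤ :=
  ne_top_of_le_ne_top (ENat.natCast_ne_top _) ((dl_mono le_top hY).trans (dl_top_br_le D hG n))

lemma small0 (D : Dat p 𝒜 x w I N) {d G : ℕ}
    (hG : ∀ t, dl (Vt k x t) ⊥ ≤ (G * (t + 1) ^ d : ℕ)) {e : ℕ}
    (hred : ∀ b ∈ B k p x e, IsNilpotent b → b = 0) {c : R} (hcB : c ∈ B k p x e)
    (hc : ∀ P ∈ minimalPrimes R, c ∉ P) :
    ∃ C : ℕ, ∀ m, e ≤ m → ((p ^ m : ℕ) : ℕ∞) * dl (Bs k p x e) (mulS c (Bs k p x e) ⊔ Iq k p x I e m) ≤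
      (C * (p ^ m) ^ d : ℕ) := by
  obtain ⟨C, hC⟩ := small (k := k) (x := x) D.prime D.hN D.hadj hG e ⊥ c hcB
    (fun b hb h => by
      rw [Submodule.mem_bot] at h ⊢
      exact nzd_of_reduced hred hc hb h)
  refine ⟨C, fun m hm => ?_⟩
  have := hC m hm
  rwa [sup_bot_eq] at this

theorem R_converge [Algebra.FiniteType k R] (D : Dat p 𝒜 x w I N) {d : ℕ} (hd : ringKrullDim R = d) (y : ℂ) :
    ∃ L : ℂ, Tendsto (fun n : ℕ => (1 / ((p : ℂ) ^ d) ^ n) *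
      ∑ j ∈ Finset.Icc (0 : ℤ) (((∑ i, N * w i : ℕ) : ℤ) * (p : ℤ) ^ n),
        ((dl (𝒜 j) (br k I (p ^ n))).toNat : ℂ) * En p y n j) atTop (nhds L) := by
  classical
  have : IsNoetherianRing R := Algebra.FiniteType.isNoetherianRing k R
  have hfin : (minimalPrimes R).Finite := minimalPrimes.finite_of_isNoetherianRing R
  obtain ⟨G, hG⟩ := growth (k := k) hd x
  obtain ⟨e0, he0⟩ := exists_reduced (k := k) D.prime D.char x
  have hgen : ∀ P ∈ minimalPrimes R, ∃ e, Gen 𝒜 p d x P e := fun P hP => exists_gen D.prime D.hx hP.1.1 hG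
  choose! f hf using hgen
  set e : ℕ := e0 + ∑ P ∈ hfin.toFinset, f P with he
  have hgen : ∀ P ∈ minimalPrimes R, Gen 𝒜 p d x P e := by
    intro P hP
    refine (hf P hP).mono D.prime D.char hP.1.1 ?_
    refine le_trans ?_ (Nat.le_add_left _ e0)
    exact Finset.single_le_sum (f := f) (fun _ _ => Nat.zero_le _) (hfin.mem_toFinset.2 hP)
  have hred := he0 e (Nat.le_add_right _ _)
  clear_value e
  obtain ⟨Λ, _, m, P, γ, c, hdec⟩ := exists_dec D hred
  obtain ⟨C, hC⟩ := small0 D hG hred hdec.hcB hdec.hc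
  choose L hL using fun l : Λ => piece_converge D (minimalPrime_homog (hdec.hP l)) (hdec.hP l).1.1 hG
    (hgen _ (hdec.hP l)) y
  refine ⟨∑ l, L l, ?_⟩
  rw [← tendsto_add_atTop_iff_nat e]
  have hp0 : (0 : ℝ) < p := by exact_mod_cast D.prime.pos
  have hpc : (p : ℂ) ≠ 0 := by exact_mod_cast D.prime.ne_zero
  have hp1 : (1 : ℝ) < p := by exact_mod_cast D.prime.one_lt
  set A : ℕ := ∑ i, N * w i with hA
  set S : ℕ → Finset ℤ := fun n => Finset.Icc (0 : ℤ) ((A : ℤ) * (p : ℤ) ^ n) with hS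
  have hsum := tendsto_finsetSum Finset.univ (fun l _ => hL l)
  set M : ℝ := Real.exp (‖y‖ * ((A + ∑ l, γ l : ℕ) : ℝ)) with hM
  set K : ℝ := ‖y‖ * (∑ l, γ l : ℕ) * Real.exp (‖y‖ * (∑ l, γ l : ℕ)) with hK
  have hM0 : 0 ≤ M := (Real.exp_pos _).le
  have hK0 : 0 ≤ K := by positivity
  set G' : ℕ := G * (r * N + 1) ^ d with hG'
  have main : ∀ n, e ≤ n → ‖∑ j ∈ S n, ((dl (𝒜 j) (br k I (p ^ n))).toNat : ℂ) * En p y n j -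
      ∑ l, ∑ j ∈ S n, ((tp k 𝒜 p x I (P l) e n j).toNat : ℂ) * En p y n j‖ ≤
      (M * (2 * ((p ^ e) ^ r * C) + Fintype.card Λ * C) + Fintype.card Λ * G' * (M * K)) * ((p : ℝ) ^ d) ^ n / (p : ℝ) ^ n := by
    intro n hen
    have hpn : (0 : ℝ) < (p : ℝ) ^ n := pow_pos hp0 n
    set δ : ℕ := (dl (Bs k p x e) (mulS c (Bs k p x e) ⊔ Iq k p x I e n)).toNat with hδ
    have hδ' : dl (Bs k p x e) (mulS c (Bs k p x e) ⊔ Iq k p x I e n) = δ :=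
      (ENat.natCast_toNat (dl_Bs_ne_top D hG hen le_rfl le_sup_right)).symm
    have hδle : (δ : ℝ) ≤ C * ((p : ℝ) ^ d) ^ n / (p : ℝ) ^ n := by
      have h1 := hC n hen
      rw [hδ'] at h1
      have h2 : p ^ n * δ ≤ C * (p ^ n) ^ d := by exact_mod_cast h1
      have h3 : (p : ℝ) ^ n * δ ≤ C * ((p : ℝ) ^ n) ^ d := by exact_mod_cast h2
      rw [le_div_iff₀' hpn, pow_right_comm]
      exact h3
    have hatop : ∀ j, dl (𝒜 j) (br k I (p ^ n)) ≠ ⊤ := fun j => dl_br_ne_top D hG n le_rfl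
    have hωtop : ∀ j, dl (⊤ ⊓ 𝒜 j) ((⨆ l, mulS (m l) (Bs k p x e)) ⊔ br k I (p ^ n)) ≠ ⊤ :=
      fun j => dl_br_ne_top D hG n le_sup_right
    have hbtop : ∀ l j, tp k 𝒜 p x I (P l) e n j ≠ ⊤ := fun l j => dl_Bs_ne_top D hG hen inf_le_left le_sup_left
    have hAn : (((∑ i, N * w i) * p ^ n : ℕ) : ℤ) = (A : ℤ) * (p : ℤ) ^ n := by push_cast [hA]; rfl
    have hYH : ∀ l, Hg 𝒜 (Iq k p x I e n ⊔ (P l).restrictScalars k) := fun l =>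
      (Hg_Iq D.prime D.char D.hx D.hI e n).sup (Hg_ideal (minimalPrime_homog (hdec.hP l)))
    have hbl : ∀ l, ((∑ j ∈ S n, (tp k 𝒜 p x I (P l) e n j).toNat : ℕ) : ℕ∞) ≤
        dl (Bs k p x e) (Iq k p x I e n ⊔ (P l).restrictScalars k) := by
      intro l
      refine le_trans (le_of_eq ?_) (dl_graded_sum_le (Bs k p x e) (hYH l) (S n))
      push_cast
      exact Finset.sum_congr rfl fun j _ => (ENat.natCast_toNat (hbtop l j))
    have h2 : ∑ l, ∑ j ∈ S n, (tp k 𝒜 p x I (P l) e n j).toNat ≤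
        ∑ j ∈ S n, (dl (𝒜 j) (br k I (p ^ n))).toNat + Fintype.card Λ * δ := by
      have h3 := dec_lower D hdec hen
      rw [hδ'] at h3
      have h4 : dl ⊤ (br k I (p ^ n)) ≤ ((∑ j ∈ S n, (dl (𝒜 j) (br k I (p ^ n))).toNat : ℕ) : ℕ∞) := by
        have h5 := dl_le_graded_sum (𝒜 := 𝒜) (X := ⊤) (Y := br k I (p ^ n)) Hg_top (S n) ?_
        · refine h5.trans (le_of_eq ?_)
          push_cast
          refine Finset.sum_congr rfl fun j _ => ?_
          rw [ENat.natCast_toNat (hatop j), top_inf_eq]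
        · intro j hj
          rw [top_inf_eq]
          apply br_support D
          simp only [hS, Finset.mem_Icc, not_and_or, not_le] at hj
          rw [hAn]; exact hj
      have h6 := (Finset.sum_le_sum fun l (_ : l ∈ Finset.univ) => hbl l).trans (h3.trans (add_le_add_left h4 _))
      exact_mod_cast h6
    have h3 : ∑ l, ∑ j ∈ S n, (tp k 𝒜 p x I (P l) e n j).toNat ≤ Fintype.card Λ * (G' * (p ^ n) ^ d) := by
      rw [← smul_eq_mul, ← Finset.card_univ, ← Finset.sum_const]
      refine Finset.sum_le_sum fun l _ => ?_
      have := (hbl l).trans ((dl_anti_right le_sup_left).trans (dl_Bs_le D hG hen))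
      exact_mod_cast this
    have h3' : ∑ l, ∑ j ∈ S n, ((tp k 𝒜 p x I (P l) e n j).toNat : ℝ) ≤ Fintype.card Λ * (G' * ((p : ℝ) ^ d) ^ n) := by
      rw [pow_right_comm]; exact_mod_cast h3
    have h4 := compare_one D.prime y n A (fun j => ((dl (𝒜 j) (br k I (p ^ n))).toNat : ℝ))
      (fun j => ((dl (⊤ ⊓ 𝒜 j) ((⨆ l, mulS (m l) (Bs k p x e)) ⊔ br k I (p ^ n))).toNat : ℝ))
      (fun l j => ((tp k 𝒜 p x I (P l) e n j).toNat : ℝ)) γ (fun l j => by positivity) ?_ ?_ (fun j => by positivity)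
      ((p ^ e) ^ r * δ) (Fintype.card Λ * δ) ?_ ?_ ?_
    · simp only [Complex.ofReal_natCast] at h4
      refine h4.trans ?_
      calc _ ≤ M * (2 * ((p ^ e) ^ r * (C * ((p : ℝ) ^ d) ^ n / (p : ℝ) ^ n)) + Fintype.card Λ * (C * ((p : ℝ) ^ d) ^ n / (p : ℝ) ^ n)) +
            (Fintype.card Λ * (G' * ((p : ℝ) ^ d) ^ n)) * (M * (K / (p : ℝ) ^ n)) := by
            gcongr
        _ = _ := by ring
    · intro j hj
      rw [← hAn] at hj
      rw [dl_self_of_le (br_support D hj)]; simp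
    · intro l j hj
      rw [← hAn] at hj
      rw [tp_support D (P l) hen hj]; simp
    · intro s
      have h5 := dec_err D hdec (n := n) s
      rw [hδ'] at h5
      have h6 : ((∑ j ∈ s, (dl (⊤ ⊓ 𝒜 j) ((⨆ l, mulS (m l) (Bs k p x e)) ⊔ br k I (p ^ n))).toNat : ℕ) : ℕ∞) ≤
          (((p ^ e) ^ r : ℕ) : ℕ∞) * δ := by
        refine le_trans (le_of_eq ?_) h5
        push_cast
        exact Finset.sum_congr rfl fun j _ => (ENat.natCast_toNat (hωtop j))
      have h7 : ∑ j ∈ s, (dl (⊤ ⊓ 𝒜 j) ((⨆ l, mulS (m l) (Bs k p x e)) ⊔ br k I (p ^ n))).toNat ≤ (p ^ e) ^ r * δ := by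
        exact_mod_cast h6
      exact_mod_cast h7
    · intro j
      have h5 := dec_upper D hdec hen j
      rw [← ENat.natCast_toNat (hatop j), ← ENat.natCast_toNat (hωtop j)] at h5
      have h6 : ∑ l, tp k 𝒜 p x I (P l) e n (j - γ l) = ((∑ l, (tp k 𝒜 p x I (P l) e n (j - γ l)).toNat : ℕ) : ℕ∞) := by
        push_cast
        exact Finset.sum_congr rfl fun l _ => (ENat.natCast_toNat (hbtop l _)).symm
      rw [h6] at h5
      exact_mod_cast h5
    · exact_mod_cast h2
  set Q : ℝ := (M * (2 * ((p ^ e) ^ r * C) + Fintype.card Λ * C) + Fintype.card Λ * G' * (M * K)) with hQ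
  have hzero : Tendsto (fun n : ℕ => Q * (1 / (p : ℝ)) ^ (n + e)) atTop (nhds 0) := by
    have h1 : Tendsto (fun n : ℕ => (1 / (p : ℝ)) ^ n) atTop (nhds 0) :=
      tendsto_pow_atTop_nhds_zero_of_lt_one (by positivity) (by rw [div_lt_one hp0]; exact hp1)
    have h2 := ((tendsto_add_atTop_iff_nat e).2 h1).const_mul Q
    simpa using h2
  have hdiff : Tendsto (fun n : ℕ => (1 / ((p : ℂ) ^ d) ^ (n + e)) *
      ∑ j ∈ S (n + e), ((dl (𝒜 j) (br k I (p ^ (n + e)))).toNat : ℂ) * En p y (n + e) j -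
      ∑ l, (1 / ((p : ℂ) ^ d) ^ (e + n)) * ∑ j ∈ Finset.Icc (0 : ℤ) ((A * p ^ (e + n) : ℕ)),
        ((tp k 𝒜 p x I (P l) e (e + n) j).toNat : ℂ) * En p y (e + n) j) atTop (nhds 0) := by
    refine squeeze_zero_norm (fun n => ?_) hzero
    have h1 := main (n + e) (Nat.le_add_left _ _)
    have hAn : ((A * p ^ (n + e) : ℕ) : ℤ) = (A : ℤ) * (p : ℤ) ^ (n + e) := by push_cast; rfl
    rw [add_comm e n, ← Finset.mul_sum, hAn, ← mul_sub, norm_mul]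
    have h2 : ‖(1 / ((p : ℂ) ^ d) ^ (n + e))‖ = 1 / ((p : ℝ) ^ d) ^ (n + e) := by simp
    rw [h2]
    refine (mul_le_mul_of_nonneg_left h1 (by positivity)).trans (le_of_eq ?_)
    rw [one_div_pow]
    field_simp
  have := hdiff.add hsum
  rw [zero_add] at this
  refine this.congr fun n => ?_
  simp [hS]
end conv
end FP

namespace FP

section tight
variable {k R : Type*} [Field k] [CommRing R] [Algebra k R] {𝒜 : ℤ → Submodule k R} [GradedAlgebra 𝒜]
  {p r : ℕ} {x : Fin r → R} {w : Fin r → ℕ} {I J : Ideal R} {N : ℕ}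

lemma br_mono {q : ℕ} (h : I ≤ J) : br k I q ≤ br k J q := by
  intro z hz
  exact Ideal.span_mono (Set.image_mono h) hz

lemma br_span_le (hp : p.Prime) (hc : CharP R p) (s : Finset R) (hs : Ideal.span (s : Set R) = J) (n : ℕ) :
    br k J (p ^ n) ≤ s.sup fun z => mulS (z ^ p ^ n) (⊤ : Submodule k R) := by
  classical
  have := Fact.mk hp
  have hle : ∀ z ∈ s, ∀ a : R, z ^ p ^ n * a ∈ s.sup fun z => mulS (z ^ p ^ n) (⊤ : Submodule k R) := by
    intro z hz a
    exact (Finset.le_sup (f := fun z => mulS (z ^ p ^ n) (⊤ : Submodule k R)) hz) ⟨a, trivial, rfl⟩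
  intro y hy
  have hy' : y ∈ Ideal.span ((fun z : R => z ^ p ^ n) '' (s : Set R)) := by
    refine (Ideal.span_le.2 ?_ : Ideal.span ((fun x : R => x ^ p ^ n) '' (J : Set R)) ≤ _) hy
    rintro _ ⟨z, hz, rfl⟩
    rw [SetLike.mem_coe, ← hs] at hz
    simp only [SetLike.mem_coe]
    induction hz using Submodule.span_induction with
    | mem z hz => exact Ideal.subset_span ⟨z, hz, rfl⟩
    | zero => rw [zero_pow (pow_pos hp.pos n).ne']; exact zero_mem _
    | add a b _ _ h1 h2 => rw [add_pow_char_pow]; exact add_mem h1 h2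
    | smul a b _ h1 => rw [smul_eq_mul, mul_pow]; exact Ideal.mul_mem_left _ _ h1
  refine Submodule.span_induction (p := fun y _ => ∀ a : R, y * a ∈ s.sup fun z => mulS (z ^ p ^ n) (⊤ : Submodule k R))
    ?_ ?_ ?_ ?_ hy' 1 |> fun h => by simpa using h
  · rintro _ ⟨z, hz, rfl⟩ a
    exact hle z hz a
  · intro a; rw [zero_mul]; exact zero_mem _
  · intro y z _ _ h1 h2 a
    rw [add_mul]; exact add_mem (h1 a) (h2 a)
  · intro b y _ h a
    rw [smul_eq_mul, mul_comm b, mul_assoc]; exact h _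

theorem tight_small [Algebra.FiniteType k R] (D : Dat p 𝒜 x w I N) {d : ℕ} (hd : ringKrullDim R = d)
    (hJ : ∀ z ∈ J, ∃ c : R, (∀ P ∈ minimalPrimes R, c ∉ P) ∧
      ∃ n0 : ℕ, ∀ n : ℕ, n0 ≤ n → c * z ^ p ^ n ∈ br k I (p ^ n)) :
    ∃ C n0 : ℕ, ∀ n, n0 ≤ n → ((p ^ n : ℕ) : ℕ∞) * dl (br k J (p ^ n)) (br k I (p ^ n)) ≤ (C * (p ^ n) ^ d : ℕ) := by
  classical
  have : IsNoetherianRing R := Algebra.FiniteType.isNoetherianRing k R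
  obtain ⟨G, hG⟩ := growth (k := k) hd x
  obtain ⟨e, he0⟩ := exists_reduced (k := k) D.prime D.char x
  have hred := he0 e le_rfl
  obtain ⟨s, hs⟩ := (IsNoetherian.noetherian J : J.FG)
  have hsJ : ∀ z ∈ s, z ∈ J := fun z hz => hs ▸ Submodule.subset_span hz
  have key : ∀ z ∈ s, ∃ C n0 : ℕ, ∀ n, n0 ≤ n →
      ((p ^ n : ℕ) : ℕ∞) * dl (mulS (z ^ p ^ n) ⊤) (br k I (p ^ n)) ≤ (C * (p ^ n) ^ d : ℕ) := by
    intro z hz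
    obtain ⟨c, hc, n0, hn0⟩ := hJ z (hsJ z hz)
    have hcB : c ^ p ^ e ∈ B k p x e := pow_mem_B D.prime D.char D.hadj e c
    obtain ⟨C, hC⟩ := small0 D hG hred hcB (fun P hP h => hc P hP (hP.1.1.mem_of_pow_mem _ h))
    refine ⟨(p ^ e) ^ r * C, n0 + e, fun n hn => ?_⟩
    have h1 : dl (mulS (z ^ p ^ n) ⊤) (br k I (p ^ n)) ≤ dl ⊤ (mulS (c ^ p ^ e) ⊤ ⊔ br k I (p ^ n)) := by
      refine dl_map_le _ ?_
      intro a _ ha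
      obtain ⟨_, ⟨b, -, rfl⟩, u, hu, rfl⟩ := Submodule.mem_sup.1 ha
      rw [map_add]
      refine add_mem ?_ (mul_mem_br hu)
      have hpe : p ^ e = (p ^ e - 1) + 1 := (Nat.sub_add_cancel (pow_pos D.prime.pos e)).symm
      have h2 : LinearMap.mulLeft k (z ^ p ^ n) (LinearMap.mulLeft k (c ^ p ^ e) b) =
          (b * c ^ (p ^ e - 1)) * (c * z ^ p ^ n) := by
        simp only [LinearMap.mulLeft_apply]
        rw [hpe, pow_succ, ← hpe]
        ring
      rw [h2]
      exact mul_mem_br (hn0 n (by omega))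
    calc _ ≤ ((p ^ n : ℕ) : ℕ∞) * (((p ^ e) ^ r : ℕ) * dl (Bs k p x e) (mulS (c ^ p ^ e) (Bs k p x e) ⊔ Iq k p x I e n)) := by
          gcongr
          exact h1.trans (dl_top_le D e n _)
      _ = (((p ^ e) ^ r : ℕ) : ℕ∞) * (((p ^ n : ℕ) : ℕ∞) * dl (Bs k p x e) (mulS (c ^ p ^ e) (Bs k p x e) ⊔ Iq k p x I e n)) := by
          ring
      _ ≤ (((p ^ e) ^ r : ℕ) : ℕ∞) * (C * (p ^ n) ^ d : ℕ) := by
          gcongr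
          exact hC n (by omega)
      _ = _ := by push_cast; ring
  choose! C n0 hC using key
  refine ⟨∑ z ∈ s, C z, ∑ z ∈ s, n0 z, fun n hn => ?_⟩
  calc _ ≤ ((p ^ n : ℕ) : ℕ∞) * ∑ z ∈ s, dl (mulS (z ^ p ^ n) ⊤) (br k I (p ^ n)) := by
        gcongr
        exact (dl_mono_left (br_span_le D.prime D.char s hs n)).trans (dl_finset_sup_le _ _ _)
    _ ≤ ∑ z ∈ s, ((C z * (p ^ n) ^ d : ℕ) : ℕ∞) := by
        rw [Finset.mul_sum]
        refine Finset.sum_le_sum fun z hz => hC z hz n ?_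
        exact (Finset.single_le_sum (f := n0) (fun _ _ => Nat.zero_le _) hz).trans hn
    _ = _ := by push_cast; rw [Finset.sum_mul]

theorem tight_converge [Algebra.FiniteType k R] (D : Dat p 𝒜 x w I N) {d : ℕ} (hd : ringKrullDim R = d)
    (hIJ : I ≤ J) (hJh : J.IsHomogeneous 𝒜)
    (hJ : ∀ z ∈ J, ∃ c : R, (∀ P ∈ minimalPrimes R, c ∉ P) ∧
      ∃ n0 : ℕ, ∀ n : ℕ, n0 ≤ n → c * z ^ p ^ n ∈ br k I (p ^ n)) (y : ℂ) :
    Tendsto (fun n : ℕ => (1 / ((p : ℂ) ^ d) ^ n) *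
      ∑ j ∈ Finset.Icc (0 : ℤ) (((∑ i, N * w i : ℕ) : ℤ) * (p : ℤ) ^ n),
        ((dl (𝒜 j) (br k J (p ^ n))).toNat : ℂ) * En p y n j -
      (1 / ((p : ℂ) ^ d) ^ n) *
      ∑ j ∈ Finset.Icc (0 : ℤ) (((∑ i, N * w i : ℕ) : ℤ) * (p : ℤ) ^ n),
        ((dl (𝒜 j) (br k I (p ^ n))).toNat : ℂ) * En p y n j) atTop (nhds 0) := by
  obtain ⟨G, hG⟩ := growth (k := k) hd x
  obtain ⟨C, n0, hC⟩ := tight_small D hd hJ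
  have hp0 : (0 : ℝ) < p := by exact_mod_cast D.prime.pos
  have hp1 : (1 : ℝ) < p := by exact_mod_cast D.prime.one_lt
  set A : ℕ := ∑ i, N * w i with hA
  set M : ℝ := Real.exp (‖y‖ * A) with hM
  have hM0 : 0 ≤ M := (Real.exp_pos _).le
  have hzero : Tendsto (fun n : ℕ => (M * C) * (1 / (p : ℝ)) ^ n) atTop (nhds 0) := by
    have h1 : Tendsto (fun n : ℕ => (1 / (p : ℝ)) ^ n) atTop (nhds 0) :=
      tendsto_pow_atTop_nhds_zero_of_lt_one (by positivity) (by rw [div_lt_one hp0]; exact hp1)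
    simpa using h1.const_mul (M * C)
  refine squeeze_zero_norm' ?_ hzero
  filter_upwards [eventually_ge_atTop n0] with n hn
  have hpn : (0 : ℝ) < (p : ℝ) ^ n := pow_pos hp0 n
  set S := Finset.Icc (0 : ℤ) ((A : ℤ) * (p : ℤ) ^ n) with hS
  have hIt : ∀ X : Submodule k R, dl X (br k I (p ^ n)) ≠ ⊤ := fun X => dl_br_ne_top D hG n le_rfl
  have hJt : ∀ X : Submodule k R, dl X (br k J (p ^ n)) ≠ ⊤ := fun X => dl_br_ne_top D hG n (br_mono hIJ)
  have h1 : ∀ j, (dl (𝒜 j) (br k J (p ^ n))).toNat ≤ (dl (𝒜 j) (br k I (p ^ n))).toNat := fun j =>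
    ENat.toNat_le_toNat (dl_anti_right (br_mono hIJ)) (hIt _)
  have h2 : ∀ j, (dl (𝒜 j) (br k I (p ^ n))).toNat ≤ (dl (br k J (p ^ n) ⊓ 𝒜 j) (br k I (p ^ n))).toNat +
      (dl (𝒜 j) (br k J (p ^ n))).toNat := by
    intro j
    have h := dl_degree_step (X := ⊤) (Hg_br (k := k) D.prime D.char hJh n) (Hg_br (k := k) D.prime D.char D.hI n) j
    rw [top_inf_eq, sup_eq_left.2 (br_mono hIJ), ← ENat.natCast_toNat (hIt (𝒜 j)), ← ENat.natCast_toNat (hJt (𝒜 j)),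
      ← ENat.natCast_toNat (hIt (_ ⊓ 𝒜 j))] at h
    exact_mod_cast h
  have h3 : (∑ j ∈ S, ((dl (br k J (p ^ n) ⊓ 𝒜 j) (br k I (p ^ n))).toNat : ℝ)) ≤ C * ((p : ℝ) ^ d) ^ n / (p : ℝ) ^ n := by
    have h4 := dl_graded_sum_le (br k J (p ^ n)) (Hg_br (k := k) D.prime D.char D.hI n) S
    have h5 : ∑ j ∈ S, dl (br k J (p ^ n) ⊓ 𝒜 j) (br k I (p ^ n)) =
        ((∑ j ∈ S, (dl (br k J (p ^ n) ⊓ 𝒜 j) (br k I (p ^ n))).toNat : ℕ) : ℕ∞) := by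
      push_cast
      exact Finset.sum_congr rfl fun j _ => (ENat.natCast_toNat (hIt _)).symm
    rw [h5] at h4
    have h6 := (mul_le_mul_right h4 ((p ^ n : ℕ) : ℕ∞)).trans (hC n hn)
    have h7 : p ^ n * (∑ j ∈ S, (dl (br k J (p ^ n) ⊓ 𝒜 j) (br k I (p ^ n))).toNat) ≤ C * (p ^ n) ^ d := by
      exact_mod_cast h6
    rw [le_div_iff₀' hpn, pow_right_comm]
    exact_mod_cast h7
  rw [← mul_sub, norm_mul, ← Finset.sum_sub_distrib]
  have h8 : ‖(1 / ((p : ℂ) ^ d) ^ n)‖ = 1 / ((p : ℝ) ^ d) ^ n := by simp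
  rw [h8]
  have h9 : ‖∑ j ∈ S, (((dl (𝒜 j) (br k J (p ^ n))).toNat : ℂ) * En p y n j -
      ((dl (𝒜 j) (br k I (p ^ n))).toNat : ℂ) * En p y n j)‖ ≤ M * (C * ((p : ℝ) ^ d) ^ n / (p : ℝ) ^ n) := by
    calc _ ≤ ∑ j ∈ S, ((dl (br k J (p ^ n) ⊓ 𝒜 j) (br k I (p ^ n))).toNat : ℝ) * M := by
          refine norm_sum_le_of_le _ fun j hj => ?_
          rw [← sub_mul, norm_mul]
          rw [hS, Finset.mem_Icc] at hj
          refine mul_le_mul ?_ (En_le D.prime y n hj.1 hj.2) (norm_nonneg _) (by positivity)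
          have e1 : (((dl (𝒜 j) (br k J (p ^ n))).toNat : ℂ) - ((dl (𝒜 j) (br k I (p ^ n))).toNat : ℂ)) =
            ((((dl (𝒜 j) (br k J (p ^ n))).toNat : ℝ) - ((dl (𝒜 j) (br k I (p ^ n))).toNat : ℝ) : ℝ) : ℂ) := by
            push_cast; rfl
          rw [e1, Complex.norm_real, Real.norm_eq_abs, abs_le]
          have f1 : ((dl (𝒜 j) (br k J (p ^ n))).toNat : ℝ) ≤ (dl (𝒜 j) (br k I (p ^ n))).toNat := by
            exact_mod_cast h1 j
          have f2 : ((dl (𝒜 j) (br k I (p ^ n))).toNat : ℝ) ≤ (dl (br k J (p ^ n) ⊓ 𝒜 j) (br k I (p ^ n))).toNat +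
            (dl (𝒜 j) (br k J (p ^ n))).toNat := by exact_mod_cast h2 j
          have f3 : (0 : ℝ) ≤ (dl (br k J (p ^ n) ⊓ 𝒜 j) (br k I (p ^ n))).toNat := by positivity
          constructor <;> linarith
      _ ≤ _ := by
          rw [← Finset.sum_mul, mul_comm]
          gcongr
  refine (mul_le_mul_of_nonneg_left h9 (by positivity)).trans (le_of_eq ?_)
  rw [one_div_pow]
  field_simp
end tight
end FP

namespace FP

section setup
variable {k R : Type*} [Field k] [CommRing R] [Algebra k R] {𝒜 : ℤ → Submodule k R} [GradedAlgebra 𝒜]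
  {p : ℕ} {I J : Ideal R}

lemma exists_gens [Algebra.FiniteType k R] (hneg : ∀ t : ℤ, t < 0 → 𝒜 t = ⊥)
    (hzero : ∀ x ∈ 𝒜 0, ∃ c : k, algebraMap k R c = x) :
    ∃ (r : ℕ) (x : Fin r → R) (w : Fin r → ℕ), (∀ i, x i ∈ 𝒜 (w i)) ∧ (∀ i, 0 < w i) ∧
      Algebra.adjoin k (Set.range x) = ⊤ := by
  classical
  obtain ⟨S, hS⟩ := (Algebra.FiniteType.out : (⊤ : Subalgebra k R).FG)
  choose f hf using fun z : R => exists_sum_pr 𝒜 z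
  set Q : Finset (Σ _ : R, ℤ) := (S.sigma f).filter (fun q => 0 < q.2) with hQ
  let e := Q.equivFin
  have hpos : ∀ q : Q, 0 < q.1.2 := fun q => (Finset.mem_filter.1 q.2).2
  refine ⟨Q.card, fun i => pr 𝒜 (e.symm i).1.2 (e.symm i).1.1, fun i => (e.symm i).1.2.toNat, ?_, ?_, ?_⟩
  · intro i
    have := hpos (e.symm i)
    rw [Int.toNat_of_nonneg this.le]
    exact pr_mem 𝒜 _ _
  · intro i
    exact Int.lt_toNat.2 (hpos (e.symm i))
  · rw [eq_top_iff, ← hS]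
    apply Algebra.adjoin_le
    intro z hz
    rw [hf z]
    refine Subalgebra.sum_mem _ ?_
    intro j hj
    rcases lt_trichotomy j 0 with h | h | h
    · have := pr_mem 𝒜 j z
      rw [hneg j h, Submodule.mem_bot] at this
      rw [this]; exact Subalgebra.zero_mem _
    · subst h
      obtain ⟨c, hc⟩ := hzero _ (pr_mem 𝒜 0 z)
      rw [← hc]; exact Subalgebra.algebraMap_mem _ c
    · apply Algebra.subset_adjoin
      have hq : (⟨z, j⟩ : Σ _ : R, ℤ) ∈ Q := by
        rw [hQ, Finset.mem_filter, Finset.mem_sigma]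
        exact ⟨⟨hz, hj⟩, h⟩
      exact ⟨e ⟨_, hq⟩, by simp⟩

lemma pow_mem_of_fl (hneg : ∀ t : ℤ, t < 0 → 𝒜 t = ⊥) (hI : I.IsHomogeneous 𝒜)
    (hfl : IsFiniteLength R (R ⧸ I)) {a : R} {w : ℕ} (hw : 0 < w) (ha : a ∈ 𝒜 w) :
    ∃ n : ℕ, a ^ n ∈ I := by
  have hart : IsArtinian R (R ⧸ I) := (isFiniteLength_iff_isNoetherian_isArtinian.1 hfl).2
  obtain ⟨n, s, hs⟩ := IsArtinian.exists_pow_succ_smul_dvd a (1 : R ⧸ I)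
  obtain ⟨s, rfl⟩ := Ideal.Quotient.mk_surjective s
  have h1 : a ^ (n + 1) * s - a ^ n ∈ I := by
    rw [← Ideal.Quotient.eq]
    have h2 : (Ideal.Quotient.mk I) (a ^ (n + 1) * s) = a ^ n.succ • (Ideal.Quotient.mk I) s := rfl
    rw [h2, hs]
    rw [Algebra.smul_def, mul_one]; rfl
  refine ⟨n, ?_⟩
  have h3 : pr 𝒜 ((n * w : ℕ) : ℤ) (a ^ (n + 1) * s - a ^ n) ∈ I := by
    rw [pr_apply]; exact hI _ h1
  have h4 : ∀ m : ℕ, a ^ m ∈ 𝒜 ((m * w : ℕ) : ℤ) := by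
    intro m
    have := SetLike.pow_mem_graded m ha
    simpa using this
  have h5 : pr 𝒜 ((n * w : ℕ) : ℤ) (a ^ (n + 1) * s) = 0 := by
    have h6 := pr_mul_left (j := -(w : ℤ)) (b := s) (h4 (n + 1))
    have h7 : (((n + 1) * w : ℕ) : ℤ) + -(w : ℤ) = ((n * w : ℕ) : ℤ) := by push_cast; ring
    rw [h7] at h6
    rw [h6]
    have := pr_mem 𝒜 (-(w : ℤ)) s
    rw [hneg _ (by omega), Submodule.mem_bot] at this
    rw [this, mul_zero]
  rw [map_sub, h5, pr_same (h4 n), zero_sub] at h3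
  simpa using I.neg_mem h3

lemma exists_dat [Algebra.FiniteType k R] (hp : p.Prime) (hc : CharP R p) (hneg : ∀ t : ℤ, t < 0 → 𝒜 t = ⊥)
    (hzero : ∀ x ∈ 𝒜 0, ∃ c : k, algebraMap k R c = x) (hI : I.IsHomogeneous 𝒜)
    (hfl : IsFiniteLength R (R ⧸ I)) :
    ∃ (r : ℕ) (x : Fin r → R) (w : Fin r → ℕ) (N : ℕ), Dat p 𝒜 x w I N := by
  obtain ⟨r, x, w, hx, hw, hadj⟩ := exists_gens (𝒜 := 𝒜) hneg hzero
  choose n hn using fun i => pow_mem_of_fl hneg hI hfl (hw i) (hx i)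
  refine ⟨r, x, w, ∑ i, n i, hp, hc, hx, hadj, ?_, hI, hneg⟩
  intro i
  have hle : n i ≤ ∑ i, n i := Finset.single_le_sum (fun _ _ => Nat.zero_le _) (Finset.mem_univ i)
  exact I.mem_of_dvd (pow_dvd_pow _ hle) (hn i)

lemma dim_eq (X : Submodule k R) (Y : Ideal R) (h : dl X (Y.restrictScalars k) ≠ ⊤) :
    Module.finrank k (X.map (Y.mkQ.restrictScalars k)) = (dl X (Y.restrictScalars k)).toNat := by
  have e : Module.length k (X.map (Y.mkQ.restrictScalars k)) = dl X (Y.restrictScalars k) := by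
    rw [dl_eq_range]
    have e1 : X.map (Y.mkQ.restrictScalars k) = LinearMap.range ((Y.mkQ.restrictScalars k) ∘ₗ X.subtype) := by
      rw [LinearMap.range_comp, Submodule.range_subtype]
    rw [e1]
    apply le_antisymm
    · apply length_range_le
      intro z hz
      simp at hz ⊢
      exact Ideal.Quotient.eq_zero_iff_mem.2 hz
    · apply length_range_le
      intro z hz
      simp at hz ⊢
      exact Ideal.Quotient.eq_zero_iff_mem.1 hz
  rw [← e] at h ⊢
  have hf : IsFiniteLength k (X.map (Y.mkQ.restrictScalars k)) := Module.length_ne_top_iff.1 h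
  have := (isFiniteLength_iff_isNoetherian_isArtinian.1 hf).1
  have : Module.Finite k (X.map (Y.mkQ.restrictScalars k)) := inferInstance
  rw [Module.length_eq_finrank]
  simp

end setup
end FP


namespace FP
lemma dl_zero_of_le {k V : Type*} [Field k] [AddCommGroup V] [Module k V] {X Y : Submodule k V}
    (h : X ≤ Y) : dl X Y = 0 := by
  have h1 : X.map Y.mkQ = ⊥ := by
    rw [eq_bot_iff, Submodule.map_le_iff_le_comap, Submodule.comap_bot, Submodule.ker_mkQ]; exact h
  unfold dl
  rw [h1, Module.length_eq_zero_iff]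
  infer_instance

lemma FnGen_eq {k R : Type*} [Field k] [CommRing R] [Algebra k R] {𝒜 : ℤ → Submodule k R} [GradedAlgebra 𝒜]
    [Algebra.FiniteType k R]
    {p r : ℕ} {x : Fin r → R} {w : Fin r → ℕ} {I : Ideal R} {N : ℕ} (D : Dat p 𝒜 x w I N)
    {d : ℕ} (hd : ringKrullDim R = d) (y : ℂ) (n : ℕ) :
    FnGen k 𝒜 I p d n y = (1 / ((p : ℂ) ^ d) ^ n) *
      ∑ j ∈ Finset.Icc (0 : ℤ) (((∑ i, N * w i : ℕ) : ℤ) * (p : ℤ) ^ n),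
        ((dl (𝒜 j) (br k I (p ^ n))).toNat : ℂ) * En p y n j := by
  obtain ⟨G, hG⟩ := growth (k := k) hd x
  have hq : ∀ j, quotPieceDim k (R := R) 𝒜 (bracketPow I (p ^ n) • ⊤) j =
      (dl (𝒜 j) (br k I (p ^ n))).toNat := by
    intro j
    have h1 : (bracketPow I (p ^ n) • ⊤ : Submodule R R) = bracketPow I (p ^ n) := by
      rw [smul_eq_mul]; exact Ideal.mul_top _
    rw [h1]
    exact dim_eq (𝒜 j) (bracketPow I (p ^ n)) (dl_br_ne_top D hG n le_rfl)
  unfold FnGen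
  congr 1
  · rw [one_div, one_div, inv_pow, ← pow_mul, ← pow_mul, mul_comm]
  · rw [tsum_eq_sum (s := Finset.Icc (0 : ℤ) (((∑ i, N * w i : ℕ) : ℤ) * (p : ℤ) ^ n))]
    · refine Finset.sum_congr rfl fun j _ => ?_
      rw [hq]; rfl
    · intro j hj
      rw [hq, dl_zero_of_le (br_support D ?_)]
      · simp
      · rw [Finset.mem_Icc, not_and_or, not_le, not_le] at hj
        refine hj.imp id fun h => ?_
        push_cast at h ⊢
        exact h
end FP

/-- **The Frobenius–Poincaré function depends only on the tight closure:**
if `I ⊆ J ⊆ I*` are homogeneous ideals with `R/I` of finite length, then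
`F(R,R,I) = F(R,R,J)`. -/
theorem frobenius_poincare_tight_closure
    (k R : Type) [Field k] [CommRing R] [Algebra k R] [Algebra.FiniteType k R]
    (p : ℕ) (hp : p.Prime) [CharP R p]
    (𝒜 : ℤ → Submodule k R) [GradedAlgebra 𝒜]
    (h𝒜neg : ∀ t : ℤ, t < 0 → 𝒜 t = ⊥)
    (h𝒜zero : ∀ x ∈ 𝒜 0, ∃ c : k, algebraMap k R c = x)
    (d : ℕ) (hd : ringKrullDim R = d)
    (I J : Ideal R) (hIJ : I ≤ J)
    (hI : Ideal.IsHomogeneous 𝒜 I) (hJ : Ideal.IsHomogeneous 𝒜 J)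
    (hIfl : IsFiniteLength R (R ⧸ I))
    (hJI : ∀ x ∈ J, MemTightClosure p I x)
    (y : ℂ) :
    ∃ L : ℂ,
      Tendsto (fun n : ℕ => FnGen k 𝒜 I p d n y) atTop (nhds L) ∧
      Tendsto (fun n : ℕ => FnGen k 𝒜 J p d n y) atTop (nhds L) := by
  obtain ⟨r, x, w, N, D⟩ := FP.exists_dat hp inferInstance h𝒜neg h𝒜zero hI hIfl
  have DJ : FP.Dat p 𝒜 x w J N := ⟨D.prime, D.char, D.hx, D.hadj, fun i => hIJ (D.hN i), hJ, D.hneg⟩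
  obtain ⟨L, hL⟩ := FP.R_converge D hd y
  have hT := FP.tight_converge D hd hIJ hJ hJI y
  refine ⟨L, ?_, ?_⟩
  · simp only [FP.FnGen_eq D hd]
    exact hL
  · simp only [FP.FnGen_eq DJ hd]
    have := hT.add hL
    simpa using this

end
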